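/- arXiv:1812.10269 — 2 statements merged into one kernel-verified Lean document; each statement's English description precedes it below -/
import Mathlib

section
/- Let d ≥ 2 and ℓ ≥ d be integers and let s ≥ 1. Any ℓ polynomials in ℝ[x_1,…,x_d], each of degree at most s, have at most (50·s·ℓ/d)^d realizable sign conditions. -/
open MvPolynomial

theorem mt_bezout {d n : ℕ} (S : Finset (Fin d → ℝ)) (R : Fin d → MvPolynomial (Fin d) ℝ)
    (hR : ∀ k, (R k).totalDegree < n)
    (hS : ∀ x ∈ S, ∀ k, x k ^ n = eval x (R k)) : S.card ≤ n ^ d := by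
  classical
  let ev : MvPolynomial (Fin d) ℝ →ₗ[ℝ] (S → ℝ) :=
    LinearMap.pi (fun x => (MvPolynomial.aeval (R := ℝ) (x : Fin d → ℝ)).toLinearMap)
  have hev : ∀ p x, ev p x = eval (x : Fin d → ℝ) p := by
    intro p x
    simp [ev]
  let b : (Fin d → Fin n) → (S → ℝ) := fun e x => ∏ k, (x : Fin d → ℝ) k ^ (e k : ℕ)
  let W : Submodule ℝ (S → ℝ) := Submodule.span ℝ (Set.range b)
  have key : ∀ N : ℕ, ∀ α : Fin d →₀ ℕ, α.degree = N → ev (monomial α 1) ∈ W := by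
    intro N
    induction N using Nat.strong_induction_on with
    | _ N ih =>
      intro α hα
      by_cases hb : ∀ k, α k < n
      · apply Submodule.subset_span
        refine ⟨fun k => ⟨α k, hb k⟩, ?_⟩
        funext x
        rw [hev, eval_monomial, Finsupp.prod_fintype _ _ (by simp)]
        simp [b]
      · push Not at hb
        obtain ⟨k, hk⟩ := hb
        have hle : Finsupp.single k n ≤ α := by
          simpa [Finsupp.single_le_iff] using hk
        obtain ⟨β, rfl⟩ := exists_add_of_le hle
        have heq : ev (monomial (Finsupp.single k n + β) 1) = ev (R k * monomial β 1) := by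
          funext x
          rw [hev, hev, map_mul, ← hS x x.2 k]
          have : (monomial (Finsupp.single k n + β) (1:ℝ)) = X k ^ n * monomial β 1 := by
            rw [X_pow_eq_monomial, monomial_mul, one_mul]
          rw [this]; simp
        rw [heq, (R k).as_sum, Finset.sum_mul, map_sum]
        refine Submodule.sum_mem _ (fun γ hγ => ?_)
        have h1 : monomial γ (coeff γ (R k)) * monomial β 1
            = (coeff γ (R k)) • monomial (γ + β) (1:ℝ) := by
          rw [monomial_mul, smul_monomial]; simp
        rw [h1, map_smul]
        refine W.smul_mem _ (ih _ ?_ _ rfl)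
        have h2 : γ.degree < n := lt_of_le_of_lt (by
          have := le_totalDegree hγ
          simpa [Finsupp.degree_eq_sum, Finsupp.sum_fintype] using this) (hR k)
        rw [← hα]
        simp only [map_add, Finsupp.degree_single]
        omega
  have key2 : ∀ p, ev p ∈ W := by
    intro p
    rw [p.as_sum, map_sum]
    refine Submodule.sum_mem _ (fun γ _ => ?_)
    have h1 : monomial γ (coeff γ p) = (coeff γ p) • monomial γ (1:ℝ) := by
      rw [smul_monomial]; simp
    rw [h1, map_smul]
    exact W.smul_mem _ (key _ _ rfl)
  have htop : W = ⊤ := by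
    rw [eq_top_iff]
    intro f _
    let q : S → MvPolynomial (Fin d) ℝ := fun y => ∏ z ∈ Finset.univ.erase y,
      ∑ k, (X k - C ((z : Fin d → ℝ) k)) ^ 2
    have hq0 : ∀ x y : S, x ≠ y → eval (x : Fin d → ℝ) (q y) = 0 := by
      intro x y hxy
      simp only [q, map_prod]
      apply Finset.prod_eq_zero (i := x) (by simp [hxy])
      simp
    have hq1 : ∀ y : S, eval (y : Fin d → ℝ) (q y) ≠ 0 := by
      intro y
      simp only [q, map_prod]
      rw [Finset.prod_ne_zero_iff]
      intro z hz h0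
      simp only [map_sum, map_pow, map_sub, eval_X, eval_C] at h0
      rw [Finset.sum_eq_zero_iff_of_nonneg (fun _ _ => sq_nonneg _)] at h0
      apply (Finset.mem_erase.1 hz).1
      apply Subtype.ext
      funext k
      have := h0 k (Finset.mem_univ _)
      have := pow_eq_zero_iff (two_ne_zero) |>.1 this
      linarith
    have : f = ev (∑ y : S, C (f y / eval (y : Fin d → ℝ) (q y)) * q y) := by
      funext x
      rw [hev, map_sum, Finset.sum_eq_single x]
      · rw [map_mul, eval_C, div_mul_cancel₀ _ (hq1 x)]
      · intro y _ hy
        rw [map_mul, hq0 x y hy.symm, mul_zero]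
      · simp
    rw [this]
    exact key2 _
  have h := finrank_range_le_card (R := ℝ) b
  have h2 : (Set.range b).finrank ℝ = S.card := by
    unfold Set.finrank
    change Module.finrank ℝ W = _
    rw [htop]; simp
  rw [h2] at h
  simpa using h

theorem mt_pderiv {d : ℕ} (H : MvPolynomial (Fin d) ℝ) (x : Fin d → ℝ)
    (h : ∀ y, eval x H ≤ eval y H) (k : Fin d) : eval x (pderiv k H) = 0 := by
  classical
  have key : ∀ p : MvPolynomial (Fin d) ℝ,
      HasDerivAt (fun τ : ℝ => eval (Function.update x k τ) p) (eval x (pderiv k p)) (x k) := by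
    intro p
    induction p using MvPolynomial.induction_on with
    | C a => simpa using hasDerivAt_const (x k) a
    | add p q hp hq =>
      simp only [map_add]
      exact hp.add hq
    | mul_X p i hp =>
      have hX : HasDerivAt (fun τ : ℝ => Function.update x k τ i)
          (eval x (pderiv k (X i : MvPolynomial (Fin d) ℝ))) (x k) := by
        by_cases hi : i = k
        · subst hi
          simp only [Function.update_self, pderiv_X_self, map_one]
          exact hasDerivAt_id (x i)
        · simpa [hi, pderiv_X_of_ne hi] using hasDerivAt_const (x k) (x i)
      have := hp.mul hX
      simp only [Function.update_eq_self] at this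
      have e2 : eval x (pderiv k (p * X i)) = eval x (pderiv k p) * x i
          + eval x p * eval x (pderiv k (X i)) := by
        rw [Derivation.leibniz]; simp only [map_add, smul_eq_mul, map_mul, eval_X]; ring
      rw [e2]
      simp only [map_mul, eval_X]
      exact this
  have hmin : IsLocalMin (fun τ : ℝ => eval (Function.update x k τ) H) (x k) := by
    refine Filter.Eventually.of_forall (fun τ => ?_)
    simpa using h _
  exact hmin.hasDerivAt_eq_zero (key H)

theorem mt_degp {d : ℕ} (p : MvPolynomial (Fin d) ℝ) (k : Fin d) :
    (pderiv k p).totalDegree ≤ p.totalDegree := by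
  classical
  conv_lhs => rw [p.as_sum, map_sum]
  refine totalDegree_finsetSum_le (fun γ hγ => ?_)
  rw [pderiv_monomial]
  refine (totalDegree_monomial_le _ _).trans ((?_ : _ ≤ _).trans (le_totalDegree hγ))
  rw [Finsupp.sum_fintype _ _ (by simp), Finsupp.sum_fintype _ _ (by simp)]
  exact Finset.sum_le_sum (fun i _ => by simp)

noncomputable def mtLev : Fin 4 → ℝ := ![1, -1, 1/2, -1/2]

theorem mtLev_ne (i : Fin 4) : mtLev i ≠ 0 := by
  fin_cases i <;> simp [mtLev]

theorem mt_gen1 {d ℓ : ℕ} (P : Fin ℓ → MvPolynomial (Fin d) ℝ) (I : Finset (Fin ℓ))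
    (hI : I.card = d + 1) (c : Fin ℓ → Fin 4) :
    ∃ F : MvPolynomial (Fin ℓ) ℝ, F ≠ 0 ∧ ∀ t : Fin ℓ → ℝ, eval t F ≠ 0 →
      ∀ x, ∃ i ∈ I, eval x (P i) ≠ mtLev (c i) * t i := by
  classical
  have hdep : ¬ AlgebraicIndependent ℝ (fun i : I => P i) := by
    intro h
    have := h.lift_cardinalMk_le_trdeg
    rw [MvPolynomial.trdeg_of_isDomain] at this
    simp [hI] at this
  have : ∃ R : MvPolynomial I ℝ, R ≠ 0 ∧ aeval (fun i : I => P i) R = 0 := by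
    by_contra hcon
    push Not at hcon
    apply hdep
    rw [algebraicIndependent_iff]
    intro p hp
    by_contra h0
    exact hcon p h0 hp
  obtain ⟨R, hR0, hR⟩ := this
  have heF : ∀ t : Fin ℓ → ℝ, eval t (aeval (fun i : I => C (mtLev (c i)) * X (i : Fin ℓ)) R
      : MvPolynomial (Fin ℓ) ℝ) = eval (fun i : I => mtLev (c i) * t i) R := by
    intro t
    rw [← MvPolynomial.coe_aeval_eq_eval, ← MvPolynomial.coe_aeval_eq_eval]
    simp only [RingHom.coe_coe]
    rw [← AlgHom.comp_apply, comp_aeval]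
    simp
  refine ⟨aeval (fun i : I => C (mtLev (c i)) * X (i : Fin ℓ)) R, ?_, ?_⟩
  · intro h0
    apply hR0
    apply MvPolynomial.funext
    intro y
    have := heF (fun i => if h : i ∈ I then y ⟨i, h⟩ / mtLev (c i) else 0)
    rw [h0] at this
    simp only [map_zero, Finset.coe_mem, dite_true, Subtype.coe_eta] at this
    rw [map_zero, this]
    congr 2
    funext i
    field_simp [mtLev_ne]
  · intro t ht x
    by_contra hcon
    push Not at hcon
    apply ht
    rw [heF]
    have h1 : (fun i : I => mtLev (c i) * t i) = fun i : I => eval x (P i) := by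
      funext i; exact (hcon i i.2).symm
    rw [h1]
    have := congrArg (eval x) hR
    rw [map_zero] at this
    rw [← this]
    rw [← MvPolynomial.coe_aeval_eq_eval, ← MvPolynomial.coe_aeval_eq_eval]
    simp only [RingHom.coe_coe]
    rw [← AlgHom.comp_apply, comp_aeval]

theorem mt_gen {d ℓ : ℕ} (P : Fin ℓ → MvPolynomial (Fin d) ℝ) (a : ℝ) (ha : 0 < a) :
    ∃ t : Fin ℓ → ℝ, (∀ i, 0 < t i ∧ t i < a) ∧
      ∀ I : Finset (Fin ℓ), I.card = d + 1 → ∀ c : Fin ℓ → Fin 4, ∀ x,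
        ∃ i ∈ I, eval x (P i) ≠ mtLev (c i) * t i := by
  classical
  have h : ∀ q : Finset (Fin ℓ) × (Fin ℓ → Fin 4), ∃ F : MvPolynomial (Fin ℓ) ℝ, F ≠ 0 ∧
      ∀ t : Fin ℓ → ℝ, eval t F ≠ 0 → q.1.card = d + 1 →
      ∀ x, ∃ i ∈ q.1, eval x (P i) ≠ mtLev (q.2 i) * t i := by
    intro q
    by_cases hq : q.1.card = d + 1
    · obtain ⟨F, h0, h1⟩ := mt_gen1 P q.1 hq q.2
      exact ⟨F, h0, fun t ht _ => h1 t ht⟩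
    · exact ⟨1, one_ne_zero, fun _ _ h => absurd h hq⟩
  choose F hF0 hF using h
  have hprod : (∏ q, F q) ≠ 0 := Finset.prod_ne_zero_iff.2 (fun q _ => hF0 q)
  have : ∃ t ∈ Set.pi Set.univ (fun _ : Fin ℓ => Set.Ioo 0 a), eval t (∏ q, F q) ≠ 0 := by
    by_contra hcon
    push Not at hcon
    apply hprod
    refine MvPolynomial.funext_set (fun _ => Set.Ioo 0 a) (fun _ => Set.Ioo_infinite ha) ?_
    intro x hx
    rw [hcon x hx, map_zero]
  obtain ⟨t, ht, hne⟩ := this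
  rw [map_prod, Finset.prod_ne_zero_iff] at hne
  exact ⟨t, fun i => ht i trivial, fun I hI c x => hF (I, c) t (hne _ (Finset.mem_univ _)) hI x⟩

noncomputable def mtPi (σ : SignType) (t p : ℝ) : ℝ :=
  if σ = 1 then max t p else if σ = -1 then min (-t) p else max (-(t/2)) (min (t/2) p)

theorem mtPi_cont (σ : SignType) (t : ℝ) : Continuous (mtPi σ t) := by
  unfold mtPi
  cases σ <;> simp <;> fun_prop

theorem mtPi_near (σ : SignType) (t p q : ℝ) (ht : 0 < t) :
    (q - mtPi σ t q) ^ 2 ≤ (q - mtPi σ t p) ^ 2 := by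
  unfold mtPi
  apply sq_le_sq.2
  cases σ <;> simp <;> grind

theorem mtPi_lev (σ : SignType) (t p : ℝ) :
    ∃ c, mtPi σ t p = p ∨ mtPi σ t p = mtLev c * t := by
  unfold mtPi
  cases σ
  · simp
    rcases le_total (t/2) p with h | h
    · rcases le_total (-(t/2)) (t/2) with h' | h'
      · exact ⟨2, Or.inr (by simp [mtLev, h, h']; ring)⟩
      · exact ⟨3, Or.inr (by simp [mtLev, h, h']; ring)⟩
    · rcases le_total (-(t/2)) p with h' | h'
      · exact ⟨2, Or.inl (by simp [h, h'])⟩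
      · exact ⟨3, Or.inr (by simp [mtLev, h, h']; ring)⟩
  · simp
    rcases le_total (-t) p with h | h
    · exact ⟨1, Or.inr (by simp [mtLev, h])⟩
    · exact ⟨1, Or.inl (by linarith)⟩
  · simp
    rcases le_total t p with h | h
    · exact ⟨0, Or.inl (by linarith)⟩
    · exact ⟨0, Or.inr (by simp [mtLev, h])⟩

theorem mtPi_feas (t p : ℝ) (ht : 0 < t) (h : p ≠ 0 → t < |p|) :
    mtPi (SignType.sign p) t p = p := by
  unfold mtPi
  rcases lt_trichotomy p 0 with hp | hp | hp
  · have := h hp.ne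
    rw [abs_of_neg hp] at this
    simp [sign_neg hp]; linarith
  · subst hp
    have h1 : min (t / 2) 0 = 0 := min_eq_right (by linarith)
    have h2 : max (-(t / 2)) 0 = 0 := max_eq_right (by linarith)
    simp [h1, h2]
  · have := h hp.ne'
    rw [abs_of_pos hp] at this
    simp [sign_pos hp]; linarith

noncomputable def mtDec (t p : ℝ) : SignType :=
  if 3 * t / 4 < p then 1 else if p < -(3 * t / 4) then -1 else 0

theorem mtPi_dec (σ : SignType) (t p : ℝ) (ht : 0 < t) (h : (p - mtPi σ t p) ^ 2 < (t / 4) ^ 2) :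
    mtDec t p = σ := by
  have h2 := abs_lt_of_sq_lt_sq h (by positivity)
  unfold mtPi at h2
  unfold mtDec
  rw [abs_lt] at h2
  cases σ <;> simp at h2 ⊢ <;> grind

def mtCrit {d ℓ : ℕ} (P : Fin ℓ → MvPolynomial (Fin d) ℝ) (s : ℕ) (η : ℝ) (t : Fin ℓ → ℝ)
    (code : Σ I : Finset (Fin ℓ), (I → Fin 4)) (x : Fin d → ℝ) : Prop :=
  ∀ k, eval x (pderiv k (C η * ∑ k, X k ^ (2 * s + 2) +
    ∑ i : code.1, (P i - C (mtLev (code.2 i) * t i)) ^ 2)) = 0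

theorem mt_compact (d s : ℕ) (M : ℝ) :
    IsCompact {y : Fin d → ℝ | ∑ k, y k ^ (2 * s + 2) ≤ M} := by
  have hb : {y : Fin d → ℝ | ∑ k, y k ^ (2 * s + 2) ≤ M} ⊆
      Set.Icc (fun _ => -(1 + |M|)) (fun _ => 1 + |M|) := by
    intro y hy
    have : ∀ k, |y k| ≤ 1 + |M| := by
      intro k
      have he : Even (2 * s + 2) := ⟨s + 1, by ring⟩
      have h1 : y k ^ (2 * s + 2) ≤ M :=
        (Finset.single_le_sum (f := fun k => y k ^ (2 * s + 2))
          (fun i _ => he.pow_nonneg _) (Finset.mem_univ k)).trans hy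
      by_contra hcon
      push Not at hcon
      have h2 : |y k| ≤ |y k| ^ (2 * s + 2) :=
        le_self_pow₀ (by linarith [abs_nonneg M]) (by omega)
      rw [he.pow_abs] at h2
      linarith [le_abs_self M]
    exact ⟨fun k => (abs_le.1 (this k)).1, fun k => (abs_le.1 (this k)).2⟩
  refine isCompact_Icc.of_isClosed_subset ?_ hb
  exact isClosed_le (by fun_prop) continuous_const

theorem mt_one {d ℓ : ℕ} (P : Fin ℓ → MvPolynomial (Fin d) ℝ) (s : ℕ) (η M : ℝ) (t : Fin ℓ → ℝ)
    (hη : 0 < η) (ht : ∀ i, 0 < t i) (x₀ : Fin d → ℝ) (hM : ∑ k, x₀ k ^ (2 * s + 2) ≤ M)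
    (hx₀ : ∀ i, eval x₀ (P i) ≠ 0 → t i < |eval x₀ (P i)|)
    (hgap : ∀ i, η * M < (t i / 4) ^ 2)
    (hgen : ∀ y : Fin d → ℝ, ∑ k, y k ^ (2 * s + 2) ≤ M → ∀ I : Finset (Fin ℓ), I.card = d + 1 →
      ∀ c : Fin ℓ → Fin 4, η * M < ∑ i ∈ I, (eval y (P i) - mtLev (c i) * t i) ^ 2) :
    ∃ (x : Fin d → ℝ) (code : Σ I : Finset (Fin ℓ), (I → Fin 4)),
      (∀ j, mtDec (t j) (eval x (P j)) = SignType.sign (eval x₀ (P j))) ∧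
      code.1.card ≤ d ∧ mtCrit P s η t code x := by
  classical
  set g : (Fin d → ℝ) → ℝ := fun y => ∑ k, y k ^ (2 * s + 2) with hg
  have hg0 : ∀ y, 0 ≤ g y := fun y => Finset.sum_nonneg
    (fun i _ => (show Even (2 * s + 2) from ⟨s + 1, by ring⟩).pow_nonneg _)
  set π : Fin ℓ → ℝ → ℝ := fun i => mtPi (SignType.sign (eval x₀ (P i))) (t i) with hπ
  set V : (Fin d → ℝ) → ℝ := fun y => ∑ i, (eval y (P i) - π i (eval y (P i))) ^ 2 with hV
  have hV0 : ∀ y, 0 ≤ V y := fun y => Finset.sum_nonneg (fun i _ => sq_nonneg _)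
  have hVx₀ : V x₀ = 0 := by
    apply Finset.sum_eq_zero
    intro i _
    simp only [hπ]
    rw [mtPi_feas _ _ (ht i) (hx₀ i)]
    simp
  have hcV : Continuous V := by
    refine continuous_finsetSum _ (fun i _ => ?_)
    have h1 : Continuous (fun y : Fin d → ℝ => eval y (P i)) := MvPolynomial.continuous_eval _
    exact (h1.sub ((mtPi_cont _ _).comp h1)).pow 2
  have hcg : Continuous g := by fun_prop
  obtain ⟨x, hxK, hxmin⟩ := (mt_compact d s (g x₀)).exists_isMinOn
    (f := fun y => η * g y + V y) ⟨x₀, le_refl (g x₀)⟩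
    (((continuous_const.mul hcg).add hcV).continuousOn)
  have hxmin' : ∀ y, η * g x + V x ≤ η * g y + V y := by
    intro y
    by_cases hy : g y ≤ g x₀
    · exact hxmin hy
    · push Not at hy
      have h1 : η * g x + V x ≤ η * g x₀ + V x₀ := hxmin (le_refl (g x₀))
      have h2 : η * g x₀ < η * g y := mul_lt_mul_of_pos_left hy hη
      linarith [hV0 y]
  have hVx : V x ≤ η * M := by
    have h1 := hxmin' x₀
    have h2 : η * g x₀ ≤ η * M := mul_le_mul_of_nonneg_left hM hη.le
    have h3 : 0 ≤ η * g x := mul_nonneg hη.le (hg0 x)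
    linarith
  have hgx : g x ≤ M := le_trans hxK hM
  choose c hc using fun i => mtPi_lev (SignType.sign (eval x₀ (P i))) (t i) (eval x (P i))
  set I : Finset (Fin ℓ) := Finset.univ.filter (fun i => π i (eval x (P i)) ≠ eval x (P i)) with hI
  have hcI : ∀ i ∈ I, π i (eval x (P i)) = mtLev (c i) * t i := by
    intro i hi
    exact (hc i).resolve_left (Finset.mem_filter.1 hi).2
  refine ⟨x, ⟨I, fun i => c i⟩, ?_, ?_, ?_⟩
  · intro j
    apply mtPi_dec _ _ _ (ht j)
    refine lt_of_le_of_lt ?_ (hgap j)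
    refine le_trans ?_ hVx
    exact Finset.single_le_sum (f := fun i => (eval x (P i) - π i (eval x (P i))) ^ 2)
      (fun i _ => sq_nonneg _) (Finset.mem_univ j)
  · by_contra hcon
    simp only [not_le] at hcon
    obtain ⟨J, hJI, hJ⟩ := Finset.exists_subset_card_eq (show d + 1 ≤ I.card from hcon)
    have h1 := hgen x hgx J hJ c
    have h2 : ∑ i ∈ J, (eval x (P i) - mtLev (c i) * t i) ^ 2 ≤ V x := by
      rw [Finset.sum_congr rfl (fun i hi => by rw [← hcI i (hJI hi)])]
      exact Finset.sum_le_sum_of_subset_of_nonneg (Finset.subset_univ _)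
        (fun i _ _ => sq_nonneg _)
    linarith
  · intro k
    have hH := mt_pderiv (C η * ∑ k, X k ^ (2 * s + 2) +
      ∑ i, (P i - C (π i (eval x (P i)))) ^ 2) x (by
        intro y
        have h1 := hxmin' y
        have h2 : V y ≤ ∑ i, (eval y (P i) - π i (eval x (P i))) ^ 2 :=
          Finset.sum_le_sum (fun i _ => mtPi_near _ _ _ _ (ht i))
        simp only [map_add, map_mul, eval_C, map_sum, map_pow, eval_X, map_sub]
        simp only [hg, hV] at h1 h2
        linarith) k
    rw [← hH]
    simp only [map_add, map_sum]
    congr 1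
    rw [← Finset.sum_subset (Finset.subset_univ I)]
    · rw [← Finset.sum_coe_sort I]
      refine Finset.sum_congr rfl (fun i _ => ?_)
      rw [hcI i i.2]
    · intro i _ hi
      have : π i (eval x (P i)) = eval x (P i) := by
        by_contra h
        exact hi (by simp [hI, h])
      rw [pderiv_pow]
      simp [this]

theorem mt_binom (d ℓ : ℕ) (hd : 2 ≤ d) (hℓ : d ≤ ℓ) :
    (∑ k ∈ Finset.range (d + 1), (ℓ.choose k : ℝ)) ≤ (3 * ℓ / d : ℝ) ^ d := by
  have hd0 : (0:ℝ) < d := by positivity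
  have hl0 : (0:ℝ) < ℓ := by
    have : (d:ℝ) ≤ ℓ := by exact_mod_cast hℓ
    linarith
  set r : ℝ := d / ℓ with hr
  have hr0 : 0 < r := by positivity
  have hr1 : r ≤ 1 := by
    rw [hr, div_le_one hl0]; exact_mod_cast hℓ
  have h1 : (∑ k ∈ Finset.range (d + 1), (ℓ.choose k : ℝ)) * r ^ d ≤ (1 + r) ^ ℓ := by
    rw [Finset.sum_mul, add_comm 1 r, add_pow]
    calc _ ≤ ∑ k ∈ Finset.range (d + 1), r ^ k * 1 ^ (ℓ - k) * (ℓ.choose k : ℝ) := by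
          refine Finset.sum_le_sum (fun k hk => ?_)
          have : r ^ d ≤ r ^ k := pow_le_pow_of_le_one hr0.le hr1 (by
            have := Finset.mem_range.1 hk; omega)
          rw [one_pow, mul_one, mul_comm]
          gcongr
      _ ≤ _ := Finset.sum_le_sum_of_subset_of_nonneg
          (Finset.range_subset_range.2 (by omega)) (fun i _ _ => by positivity)
  have h2 : (1 + r) ^ ℓ ≤ 3 ^ d := by
    calc (1 + r) ^ ℓ ≤ (Real.exp r) ^ ℓ := by
          gcongr
          linarith [Real.add_one_le_exp r]
      _ = (Real.exp 1) ^ d := by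
          rw [← Real.exp_nat_mul, ← Real.exp_nat_mul]
          congr 1
          rw [hr]; field_simp
      _ ≤ 3 ^ d := by
          gcongr
          linarith [Real.exp_one_lt_d9]
  have h3 : (3 * ℓ / d : ℝ) ^ d = 3 ^ d / r ^ d := by
    rw [← div_pow, hr]; congr 1; field_simp
  rw [h3, le_div_iff₀ (by positivity)]
  exact h1.trans h2

theorem mt_min {ι : Type*} [Finite ι] (f : ι → ℝ) (hf : ∀ i, 0 < f i) :
    ∃ a > 0, ∀ i, a ≤ f i := by
  rcases isEmpty_or_nonempty ι with h | h
  · exact ⟨1, one_pos, fun i => h.elim i⟩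
  · obtain ⟨i, hi⟩ := Finite.exists_min f
    exact ⟨f i, hf i, hi⟩

theorem mt_fiber {d ℓ s : ℕ} (P : Fin ℓ → MvPolynomial (Fin d) ℝ)
    (hdeg : ∀ j, (P j).totalDegree ≤ s) (η : ℝ) (hη : 0 < η) (t : Fin ℓ → ℝ)
    (code : Σ I : Finset (Fin ℓ), (I → Fin 4)) (T : Finset (Fin d → ℝ))
    (hT : ∀ x ∈ T, mtCrit P s η t code x) : T.card ≤ (2 * s + 1) ^ d := by
  classical
  set Q : MvPolynomial (Fin d) ℝ := ∑ i : code.1, (P i - C (mtLev (code.2 i) * t i)) ^ 2 with hQ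
  refine mt_bezout T (fun k => C (-(η * (2 * s + 2))⁻¹) * pderiv k Q) ?_ ?_
  · intro k
    have h1 : Q.totalDegree ≤ 2 * s := by
      refine totalDegree_finsetSum_le (fun i _ => ?_)
      refine (totalDegree_pow _ _).trans ?_
      have := totalDegree_sub_C_le (P i) (mtLev (code.2 i) * t i)
      have := hdeg i
      omega
    have h2 := mt_degp Q k
    have h3 := totalDegree_mul (C (-(η * (2 * s + 2))⁻¹)) (pderiv k Q)
    rw [totalDegree_C] at h3
    omega
  · intro x hx k
    have h := hT x hx k
    rw [← hQ] at h
    have h4 : pderiv k (∑ j, X j ^ (2 * s + 2) : MvPolynomial (Fin d) ℝ)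
        = C (2 * s + 2 : ℝ) * X k ^ (2 * s + 1) := by
      rw [map_sum, Finset.sum_eq_single k]
      · rw [pderiv_pow, pderiv_X_self]
        have h2 : (C (2:ℝ) : MvPolynomial (Fin d) ℝ) = 2 := map_ofNat C 2
        simp [h2]
      · intro j _ hj
        rw [pderiv_pow, pderiv_X_of_ne hj, mul_zero]
      · simp
    rw [map_add, pderiv_C_mul, h4] at h
    simp only [map_add, map_mul, eval_C, map_pow, eval_X] at h ⊢
    have h5 : η * (2 * s + 2) ≠ 0 := by positivity
    field_simp
    linarith

theorem mt_codes (d ℓ : ℕ) :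
    ((Finset.univ.filter (fun c : Σ I : Finset (Fin ℓ), (I → Fin 4) => c.1.card ≤ d)).card : ℝ)
      ≤ 4 ^ d * ∑ k ∈ Finset.range (d + 1), (ℓ.choose k : ℝ) := by
  classical
  have h1 : (Finset.univ.filter (fun c : Σ I : Finset (Fin ℓ), (I → Fin 4) => c.1.card ≤ d))
      = (Finset.univ.filter (fun I : Finset (Fin ℓ) => I.card ≤ d)).sigma
        (fun _ => Finset.univ) := by
    ext c; simp
  have h2 : (Finset.univ.filter (fun I : Finset (Fin ℓ) => I.card ≤ d)).card
      ≤ ∑ k ∈ Finset.range (d + 1), ℓ.choose k := by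
    have : (Finset.univ.filter (fun I : Finset (Fin ℓ) => I.card ≤ d))
      ⊆ (Finset.range (d + 1)).biUnion (fun k => Finset.powersetCard k Finset.univ) := by
      intro I hI
      simp only [Finset.mem_filter, Finset.mem_univ, true_and] at hI
      simp [Finset.mem_powersetCard]; omega
    refine (Finset.card_le_card this).trans (Finset.card_biUnion_le.trans ?_)
    simp
  have h3 : (Finset.univ.filter
      (fun c : Σ I : Finset (Fin ℓ), (I → Fin 4) => c.1.card ≤ d)).card
      ≤ 4 ^ d * ∑ k ∈ Finset.range (d + 1), ℓ.choose k := by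
    rw [h1, Finset.card_sigma]
    calc _ ≤ ∑ I ∈ Finset.univ.filter (fun I : Finset (Fin ℓ) => I.card ≤ d), 4 ^ d := by
          refine Finset.sum_le_sum (fun I hI => ?_)
          simp only [Finset.mem_filter, Finset.mem_univ, true_and] at hI
          simp only [Finset.card_univ, Fintype.card_fun, Fintype.card_fin, Fintype.card_coe]
          exact Nat.pow_le_pow_right (by norm_num) hI
      _ ≤ _ := by
          rw [Finset.sum_const, smul_eq_mul, mul_comm]
          exact Nat.mul_le_mul_left _ h2
  exact_mod_cast h3

/-- **Milnor–Thom.** Any `ℓ` polynomials in `ℝ[x_1,…,x_d]`, each of degree at most `s`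
(with `2 ≤ d ≤ ℓ`, `s ≥ 1`), have at most `(50·s·ℓ/d)^d` realizable sign conditions. -/
theorem milnor_thom_sign_conditions (d ℓ s : ℕ) (hd : 2 ≤ d) (hℓ : d ≤ ℓ) (hs : 1 ≤ s)
    (P : Fin ℓ → MvPolynomial (Fin d) ℝ)
    (hdeg : ∀ j, (P j).totalDegree ≤ s) :
    (Set.ncard {ν : Fin ℓ → SignType |
        ∃ x : Fin d → ℝ, ∀ j, SignType.sign (eval x (P j)) = ν j} : ℝ)
      ≤ ((50 * s * ℓ : ℝ) / d) ^ d := by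
  classical
  set A : Set (Fin ℓ → SignType) := {ν : Fin ℓ → SignType |
        ∃ x : Fin d → ℝ, ∀ j, SignType.sign (eval x (P j)) = ν j} with hA
  have hex : ∀ ν : Fin ℓ → SignType, ∃ x : Fin d → ℝ,
      ν ∈ A → ∀ j, SignType.sign (eval x (P j)) = ν j := by
    intro ν
    by_cases h : ν ∈ A
    · obtain ⟨x, hx⟩ := h
      exact ⟨x, fun _ => hx⟩
    · exact ⟨0, fun h' => absurd h' h⟩
  choose x₀ hx₀ using hex
  obtain ⟨a, ha0, ha⟩ := mt_min (fun q : (Fin ℓ → SignType) × Fin ℓ =>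
    if eval (x₀ q.1) (P q.2) = 0 then 1 else |eval (x₀ q.1) (P q.2)|) (by
      intro q
      split_ifs with h
      · exact one_pos
      · exact abs_pos.2 h)
  obtain ⟨t, ht, htgen⟩ := mt_gen P a ha0
  have he : Even (2 * s + 2) := ⟨s + 1, by ring⟩
  set M : ℝ := ∑ ν, ∑ k, x₀ ν k ^ (2 * s + 2) with hM
  have hMν : ∀ ν, ∑ k, x₀ ν k ^ (2 * s + 2) ≤ M := fun ν =>
    Finset.single_le_sum (f := fun ν => ∑ k, x₀ ν k ^ (2 * s + 2))
      (fun ν _ => Finset.sum_nonneg (fun k _ => he.pow_nonneg _)) (Finset.mem_univ ν)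
  have hM0 : 0 ≤ M := Finset.sum_nonneg
    (fun ν _ => Finset.sum_nonneg (fun k _ => he.pow_nonneg _))
  have hm : ∀ q : Finset (Fin ℓ) × (Fin ℓ → Fin 4), ∃ m : ℝ, 0 < m ∧
      (q.1.card = d + 1 → ∀ y : Fin d → ℝ, ∑ k, y k ^ (2 * s + 2) ≤ M →
        m ≤ ∑ i ∈ q.1, (eval y (P i) - mtLev (q.2 i) * t i) ^ 2) := by
    intro q
    by_cases hq : q.1.card = d + 1
    · have hc : Continuous (fun y : Fin d → ℝ =>
          ∑ i ∈ q.1, (eval y (P i) - mtLev (q.2 i) * t i) ^ 2) :=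
        continuous_finsetSum _ (fun i _ =>
          ((MvPolynomial.continuous_eval (P i)).sub continuous_const).pow 2)
      have hne : {y : Fin d → ℝ | ∑ k, y k ^ (2 * s + 2) ≤ M}.Nonempty :=
        ⟨0, by simpa using hM0⟩
      obtain ⟨y, _, hy⟩ := (mt_compact d s M).exists_isMinOn hne hc.continuousOn
      refine ⟨_, ?_, fun _ z hz => hy hz⟩
      obtain ⟨i, hi, hne⟩ := htgen q.1 hq q.2 y
      exact Finset.sum_pos' (fun i _ => sq_nonneg _)
        ⟨i, hi, by have := sub_ne_zero.2 hne; positivity⟩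
    · exact ⟨1, one_pos, fun h => absurd h hq⟩
  choose m hm0 hm using hm
  obtain ⟨b₁, hb₁, hb₁'⟩ := mt_min m hm0
  obtain ⟨b₂, hb₂, hb₂'⟩ := mt_min (fun i => (t i / 4) ^ 2) (fun i => by
    have := (ht i).1
    positivity)
  set b := min b₁ b₂ with hb
  have hb0 : 0 < b := lt_min hb₁ hb₂
  set η := b / (M + 1) with hηd
  have hη : 0 < η := by positivity
  have hηM : η * M < b := by
    rw [hηd, div_mul_eq_mul_div, div_lt_iff₀ (by positivity)]
    nlinarith
  have hone : ∀ ν, ∃ (x : Fin d → ℝ) (code : Σ I : Finset (Fin ℓ), (I → Fin 4)),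
      (∀ j, mtDec (t j) (eval x (P j)) = SignType.sign (eval (x₀ ν) (P j))) ∧
      code.1.card ≤ d ∧ mtCrit P s η t code x := by
    intro ν
    refine mt_one P s η M t hη (fun i => (ht i).1) (x₀ ν) (hMν ν) ?_ ?_ ?_
    · intro i hi
      have := ha (ν, i)
      simp only [hi, if_false] at this
      exact (ht i).2.trans_le this
    · intro i
      exact hηM.trans_le ((min_le_right _ _).trans (hb₂' i))
    · intro y hy I hI c
      exact hηM.trans_le ((min_le_left _ _).trans ((hb₁' (I, c)).trans (hm (I, c) hI y hy)))
  choose x code hdec hcard hcrit using hone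
  have hcount : A.toFinset.card ≤ (2 * s + 1) ^ d * (A.toFinset.image code).card := by
    refine Finset.card_le_mul_card_image _ _ (fun q _ => ?_)
    rw [← Finset.card_image_of_injOn (f := x)]
    · refine mt_fiber P hdeg η hη t q _ ?_
      intro z hz
      obtain ⟨ν, hν, rfl⟩ := Finset.mem_image.1 hz
      rw [← (Finset.mem_filter.1 hν).2]
      exact hcrit ν
    · intro ν hν μ hμ hxx
      have h1 := hx₀ ν (Set.mem_toFinset.1 (Finset.mem_filter.1 hν).1)
      have h2 := hx₀ μ (Set.mem_toFinset.1 (Finset.mem_filter.1 hμ).1)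
      funext j
      rw [← h1 j, ← h2 j, ← hdec ν j, ← hdec μ j]
      rw [hxx]
  have himg : ((A.toFinset.image code).card : ℝ)
      ≤ 4 ^ d * (3 * ℓ / d : ℝ) ^ d := by
    refine le_trans ?_ ((mt_codes d ℓ).trans
      (mul_le_mul_of_nonneg_left (mt_binom d ℓ hd hℓ) (by positivity)))
    have : A.toFinset.image code ⊆ Finset.univ.filter
        (fun c : Σ I : Finset (Fin ℓ), (I → Fin 4) => c.1.card ≤ d) := by
      intro q hq
      obtain ⟨ν, _, rfl⟩ := Finset.mem_image.1 hq
      simpa using hcard ν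
    exact_mod_cast Finset.card_le_card this
  rw [Set.ncard_eq_toFinset_card']
  have hs1 : (1:ℝ) ≤ s := by exact_mod_cast hs
  calc (A.toFinset.card : ℝ) ≤ (2 * s + 1) ^ d * (A.toFinset.image code).card := by
        exact_mod_cast hcount
    _ ≤ (2 * s + 1) ^ d * (4 ^ d * (3 * ℓ / d : ℝ) ^ d) := by gcongr
    _ = ((2 * s + 1) * (4 * (3 * ℓ / d : ℝ))) ^ d := by rw [mul_pow, mul_pow]
    _ ≤ _ := by
        refine pow_le_pow_left₀ (by positivity) ?_ d
        have : (0:ℝ) ≤ ℓ / d := by positivity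
        calc ((2 * s + 1) * (4 * (3 * ℓ / d : ℝ))) = (24 * s + 12) * (ℓ / d : ℝ) := by ring
          _ ≤ (50 * s) * (ℓ / d : ℝ) := by gcongr; linarith
          _ = _ := by ring
end

section
/- (Guth's generalized polynomial partitioning.) Let S be a finite family of semi-algebraic sets in ℝ^d, each of dimension at most r and complexity at most b. There exist constants C = C(d) > 0 and c = c(b,d) > 0 such that for every integer k ≥ 1 there is a tuple (P_1,…,P_k) of d-variate real polynomials with deg P_j ≤ C·2^{j/d} for each j, such that all 2^k strict sign conditions of (P_1,…,P_k) are realizable and the realization of each strict sign condition intersects at most |S|/(c·2^{k(1−r/d)}) sets from S. -/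
open MvPolynomial

/-- A set `S ⊆ ℝ^d` is semi-algebraic of complexity at most `b`: it is the locus of points
satisfying a Boolean formula with at most `b` atoms of the form `P(x) < 0` or `P(x) = 0`,
where each `P` is a `d`-variate real polynomial of degree at most `b`. -/
def IsSemiAlgebraicOfComplexity (d b : ℕ) (S : Set (Fin d → ℝ)) : Prop :=
  ∃ (P : Fin b → MvPolynomial (Fin d) ℝ) (τ : Fin b → Bool) (φ : (Fin b → Prop) → Prop),
    (∀ i, (P i).totalDegree ≤ b) ∧
    S = {x | φ fun i => if τ i then eval x (P i) < 0 else eval x (P i) = 0}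

/-- The realization of the strict sign condition `ν ∈ {−1,1}^k` (encoded by `Bool`, with
`true ↦ +1` and `false ↦ −1`) of the tuple of polynomials `(P 0, …, P (k-1))`. -/
def StrictRealization {d k : ℕ} (P : Fin k → MvPolynomial (Fin d) ℝ)
    (ν : Fin k → Bool) : Set (Fin d → ℝ) :=
  {x | ∀ j, if ν j then 0 < eval x (P j) else eval x (P j) < 0}


namespace GPP

/-! ### Cochains on lists, mod 2 -/
section cochain
variable {X : Type*}

def Dp : List (X → ZMod 2) → List X → ZMod 2
  | [], _ => 1
  | a :: as, x :: y :: l => (a x + a y) * Dp as (y :: l)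
  | _ :: _, _ => 0

def Ep (h : X → ZMod 2) (bs : List (X → ZMod 2)) : List (X → ZMod 2) → List X → ZMod 2
  | [], [] => 0
  | [], x :: l => h x * Dp bs (x :: l)
  | a :: as, x :: y :: l => (a x + a y) * Ep h bs as (y :: l)
  | _ :: _, _ => 0

def bd (f : List X → ZMod 2) (l : List X) : ZMod 2 :=
  ∑ t ∈ Finset.range l.length, f (l.eraseIdx t)

lemma bd_cons (f : List X → ZMod 2) (x : X) (l : List X) :
    bd f (x :: l) = f l + bd (fun l' => f (x :: l')) l := by
  simp [bd, Finset.sum_range_succ', add_comm]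

lemma bd_mul (c : ZMod 2) (f : List X → ZMod 2) (l : List X) :
    bd (fun l' => c * f l') l = c * bd f l := by
  simp [bd, Finset.mul_sum]

lemma zz (a : ZMod 2) : a + a = 0 := CharTwo.add_self_eq_zero a

lemma bd_Dp (as : List (X → ZMod 2)) : ∀ l : List X, l.length = as.length + 2 →
    bd (Dp as) l = 0 := by
  induction as with
  | nil =>
    intro l hl
    match l, hl with
    | [x, y], _ => simp [bd, Dp]; rfl
  | cons a as ih =>
    intro l hl
    match l, hl with
    | x :: y :: z :: l, hl =>
      have h1 := ih (y :: z :: l) (by simpa using hl)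
      rw [bd_cons] at h1
      rw [bd_cons, bd_cons]
      simp only [Dp]
      rw [bd_mul]
      linear_combination (a x + a y) * h1 + zz (a z * Dp as (z :: l))

lemma bd_Ep (h : X → ZMod 2) (bs as : List (X → ZMod 2)) : ∀ l : List X,
    l.length = as.length + bs.length + 2 →
    bd (Ep h bs as) l = Dp (as ++ h :: bs) l := by
  induction as with
  | nil =>
    intro l hl
    match l, hl with
    | x :: y :: l, hl =>
      have h1 := bd_Dp bs (x :: y :: l) (by simpa using hl)
      rw [bd_cons] at h1
      rw [bd_cons]
      simp only [Ep, Dp, List.nil_append]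
      rw [bd_mul]
      linear_combination h x * h1 - zz (h x * Dp bs (y :: l))
  | cons a as ih =>
    intro l hl
    match l, hl with
    | [x, y], hl => simp at hl
    | x :: y :: z :: l, hl =>
      have h1 := ih (y :: z :: l) (by simp at hl ⊢; omega)
      rw [bd_cons] at h1
      rw [bd_cons, bd_cons]
      simp only [Ep, Dp, List.cons_append]
      rw [bd_mul]
      linear_combination (a x + a y) * h1 + zz (a z * Ep h bs as (z :: l))

lemma Dp_add (a h : X → ZMod 2) (bs as : List (X → ZMod 2)) : ∀ l : List X,
    Dp (as ++ (a + h) :: bs) l = Dp (as ++ a :: bs) l + Dp (as ++ h :: bs) l := by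
  induction as with
  | nil =>
    intro l
    match l with
    | [] => simp [Dp]
    | [x] => simp [Dp]
    | x :: y :: l => simp [Dp]; ring
  | cons b as ih =>
    intro l
    match l with
    | [] => simp [Dp]
    | [x] => simp [Dp]
    | x :: y :: l => simp only [List.cons_append, Dp, ih]; ring

lemma Dp_ofFn (n : ℕ) : ∀ (a : Fin n → X → ZMod 2) (f : ℕ → X),
    Dp (List.ofFn a) ((List.range (n + 1)).map f) = ∏ t : Fin n, (a t (f t) + a t (f (t + 1))) := by
  induction n with
  | zero => intro a f; simp [Dp]
  | succ n ih =>
    intro a f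
    rw [List.ofFn_succ, List.range_succ_eq_map, List.map_cons, List.map_map, List.range_succ_eq_map,
      List.map_cons, Dp, Fin.prod_univ_succ, ← List.map_cons, ← List.range_succ_eq_map,
      ih]
    simp

/-- invariance under partially defined flips -/
def Inv {J : Type*} (B : J → X → Prop) (T : J → X → X) (f : List X → ZMod 2) : Prop :=
  ∀ j l, (∀ u ∈ l, B j u) → f (l.map (T j)) = f l

def QInv {J : Type*} (B : J → X → Prop) (T : J → X → X) (a : X → ZMod 2) : Prop :=
  ∀ j, ∃ c, ∀ u, B j u → a (T j u) = a u + c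

lemma Dp_inv {J : Type*} (B : J → X → Prop) (T : J → X → X) (as : List (X → ZMod 2))
    (h : ∀ a ∈ as, QInv B T a) : Inv B T (Dp as) := by
  induction as with
  | nil => intro j l _; simp [Dp]
  | cons a as ih =>
    intro j l hl
    match l with
    | [] => simp [Dp]
    | [x] => simp [Dp]
    | x :: y :: l =>
      have := ih (fun b hb => h b (by simp [hb])) j (y :: l) (fun u hu => hl u (by simp at hu ⊢; tauto))
      obtain ⟨c, hc⟩ := h a (by simp) j
      simp only [List.map_cons, Dp] at this ⊢
      rw [this, hc x (hl x (by simp)), hc y (hl y (by simp))]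
      linear_combination (Dp as (y :: l)) * zz c

lemma Ep_inv {J : Type*} (B : J → X → Prop) (T : J → X → X) (h : X → ZMod 2)
    (hh : ∀ j u, B j u → h (T j u) = h u) (bs as : List (X → ZMod 2))
    (hb : ∀ a ∈ bs, QInv B T a) (ha : ∀ a ∈ as, QInv B T a) : Inv B T (Ep h bs as) := by
  induction as with
  | nil =>
    intro j l hl
    match l with
    | [] => simp [Ep]
    | x :: l =>
      have := Dp_inv B T bs hb j (x :: l) hl
      simp only [List.map_cons, Ep] at this ⊢
      rw [this, hh j x (hl x (by simp))]
  | cons a as ih =>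
    intro j l hl
    match l with
    | [] => simp [Ep]
    | [x] => simp [Ep]
    | x :: y :: l =>
      have := ih (fun b hb => ha b (by simp [hb])) j (y :: l) (fun u hu => hl u (by simp at hu ⊢; tauto))
      obtain ⟨c, hc⟩ := ha a (by simp) j
      simp only [List.map_cons, Ep] at this ⊢
      rw [this, hc x (hl x (by simp)), hc y (hl y (by simp))]
      linear_combination (Ep h bs as (y :: l)) * zz c

lemma Dp_change {J I : Type*} (B : J → X → Prop) (T : J → X → X) (S : Finset I) (p : I → List X)
    (as : List ((X → ZMod 2) × (X → ZMod 2)))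
    (hcyc : ∀ f, Inv B T f → ∑ i ∈ S, bd f (p i) = 0)
    (h1 : ∀ a ∈ as, QInv B T a.1) (h2 : ∀ a ∈ as, ∀ j u, B j u → a.2 (T j u) = a.2 u)
    (cs : List (X → ZMod 2)) (hcs : ∀ a ∈ cs, QInv B T a)
    (hlen : ∀ i ∈ S, (p i).length = cs.length + as.length + 1) :
    ∑ i ∈ S, Dp (cs ++ as.map (fun a => a.1 + a.2)) (p i) =
      ∑ i ∈ S, Dp (cs ++ as.map Prod.fst) (p i) := by
  induction as generalizing cs with
  | nil => simp
  | cons a as ih =>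
    have e1 := ih (fun b hb => h1 b (by simp [hb])) (fun b hb => h2 b (by simp [hb]))
      (cs ++ [a.1 + a.2]) (by
        intro b hb
        simp only [List.mem_append, List.mem_singleton] at hb
        rcases hb with hb | rfl
        · exact hcs b hb
        · intro j
          obtain ⟨c, hc⟩ := h1 a (by simp) j
          refine ⟨c, fun u hu => ?_⟩
          simp [hc u hu, h2 a (by simp) j u hu]; ring)
        (by intro i hi; rw [hlen i hi]; simp; ring)
    simp only [List.append_assoc, List.singleton_append] at e1
    simp only [List.map_cons]
    rw [e1]
    have e2 : ∀ i ∈ S, Dp (cs ++ (a.1 + a.2) :: as.map Prod.fst) (p i) =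
        Dp (cs ++ a.1 :: as.map Prod.fst) (p i) + bd (Ep a.2 (as.map Prod.fst) cs) (p i) := by
      intro i hi
      rw [Dp_add, bd_Ep]
      rw [hlen i hi]; simp; ring
    rw [Finset.sum_congr rfl e2, Finset.sum_add_distrib, hcyc, add_zero]
    apply Ep_inv B T _ (h2 a (by simp)) _ _ _ hcs
    intro b hb
    obtain ⟨b', hb', rfl⟩ := List.mem_map.1 hb
    exact h1 b' (by simp [hb'])

end cochain
end GPP

namespace GPP

/-! ### The small fundamental cycle -/
section cycle
variable {k n : ℕ}

abbrev Idx (n : ℕ) := (Fin (n+1) → Bool) × (Fin (n+1) → ℕ) × Equiv.Perm (Fin (n+1))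

def sg (b : Bool) : ℤ := if b then -1 else 1

/-- vertex number `t` of the simplex -/
def vert (I : Idx n) (t : ℕ) : Fin (n+1) → ℤ :=
  fun c => sg (I.1 c) * ((I.2.1 c : ℤ) + if (I.2.2 c : ℕ) < t then 1 else 0)

def simplices (n m : ℕ) : Finset (Idx n) :=
  Finset.univ ×ˢ ((Fintype.piFinset fun _ => Finset.range m) ×ˢ Finset.univ)

def path (I : Idx n) : List (Fin (n+1) → ℤ) := (List.range (n + 2)).map (vert I)

def bdry (block : Fin (n+1) → Fin k) (m : ℕ) (j : Fin k) (u : Fin (n+1) → ℤ) : Prop :=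
  ∃ c, block c = j ∧ |u c| = m

def flipZ (block : Fin (n+1) → Fin k) (j : Fin k) (u : Fin (n+1) → ℤ) : Fin (n+1) → ℤ :=
  fun c => if block c = j then - u c else u c

lemma mem_simplices (m : ℕ) (I : Idx n) : I ∈ simplices n m ↔ ∀ c, I.2.1 c < m := by
  simp [simplices]

lemma sg_not (b : Bool) : sg (!b) = - sg b := by cases b <;> simp [sg]
lemma abs_sg (b : Bool) : |sg b| = 1 := by cases b <;> simp [sg]

lemma bd_path (f : List (Fin (n+1) → ℤ) → ZMod 2) (I : Idx n) :
    bd f (path I) = f ((List.range (n+1)).map (fun t => vert I (t+1)))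
      + ∑ t ∈ Finset.range n, f (((List.range (n+2)).eraseIdx (t+1)).map (vert I))
      + f ((List.range (n+1)).map (vert I)) := by
  have hl : (path I).length = n + 2 := by simp [path]
  rw [bd, hl, Finset.sum_range_succ, Finset.sum_range_succ']
  have e0 : (path I).eraseIdx 0 = (List.range (n+1)).map (fun t => vert I (t+1)) := by
    rw [path, List.range_succ_eq_map]; simp
  have eM : (path I).eraseIdx (n+1) = (List.range (n+1)).map (vert I) := by
    rw [path, List.eraseIdx_map, List.range_succ]
    rw [List.eraseIdx_append_of_length_le (by simp)]
    simp
  rw [e0, eM]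
  simp only [path, List.eraseIdx_map]
  ring

lemma cyc_mid (m : ℕ) (f : List (Fin (n+1) → ℤ) → ZMod 2) (t : ℕ) (ht : t < n) :
    ∑ I ∈ simplices n m, f (((List.range (n+2)).eraseIdx (t+1)).map (vert I)) = 0 := by
  let a : Fin (n+1) := ⟨t, by omega⟩
  let b : Fin (n+1) := ⟨t+1, by omega⟩
  have hab : a ≠ b := by simp [a, b, Fin.ext_iff]
  apply Finset.sum_involution (fun I _ => (I.1, I.2.1, I.2.2.trans (Equiv.swap a b)))
  · intro I _
    have : ((List.range (n+2)).eraseIdx (t+1)).map (vert I) = ((List.range (n+2)).eraseIdx (t+1)).map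
        (vert (I.1, I.2.1, I.2.2.trans (Equiv.swap a b))) := by
      apply List.map_congr_left
      intro x hx
      have hx' : x ≠ t + 1 := by
        rintro rfl
        rw [List.mem_eraseIdx_iff_getElem] at hx
        obtain ⟨i, hi, h1, h2⟩ := hx
        simp at h2
        omega
      funext c
      have : ((Equiv.swap a b (I.2.2 c) : Fin (n+1)) : ℕ) < x ↔ (I.2.2 c : ℕ) < x := by
        rw [Equiv.swap_apply_def]
        split_ifs with h1 h2
        · rw [h1]; simp only [a, b]; omega
        · rw [h2]; simp only [a, b]; omega
        · rfl
      simp only [vert, Equiv.trans_apply, this]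
    rw [← this, zz]
  · intro I _ _ h
    have h3 : I.2.2.trans (Equiv.swap a b) = I.2.2 := congrArg (fun J : Idx n => J.2.2) h
    have h4 := congrArg (fun e => e (I.2.2.symm a)) h3
    simp at h4
    exact hab h4.symm
  swap
  · intro I hI
    rw [mem_simplices] at hI ⊢
    exact hI
  · intro I _
    ext <;> simp

lemma cyc_first (block : Fin (n+1) → Fin k) (m : ℕ) (f : List (Fin (n+1) → ℤ) → ZMod 2)
    (hf : Inv (bdry block m) (flipZ block) f) :
    ∑ I ∈ simplices n m with I.2.1 (I.2.2.symm 0) + 1 = m,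
      f ((List.range (n+1)).map (fun t => vert I (t+1))) = 0 := by
  apply Finset.sum_involution (fun (I : Idx n) _ =>
    ((fun c => if block c = block (I.2.2.symm 0) then !(I.1 c) else I.1 c), I.2.1, I.2.2))
  · intro I hI
    rw [Finset.mem_filter] at hI
    have h1 := hf (block (I.2.2.symm 0)) ((List.range (n+1)).map (fun t => vert I (t+1))) (by
      intro u hu
      obtain ⟨t, ht, rfl⟩ := List.mem_map.1 hu
      refine ⟨I.2.2.symm 0, rfl, ?_⟩
      simp only [vert, abs_mul, abs_sg, Equiv.apply_symm_apply]
      rw [← hI.2]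
      simp
      positivity)
    rw [← h1, List.map_map]
    have : (flipZ block (block (I.2.2.symm 0)) ∘ fun t => vert I (t + 1)) =
      (fun t => vert ((fun c => if block c = block (I.2.2.symm 0) then !(I.1 c) else I.1 c), I.2.1, I.2.2) (t + 1)) := by
      funext t c
      simp only [flipZ, vert, Function.comp]
      split_ifs <;> simp [sg_not]
    rw [this, zz]
  · intro I _ _ h
    have h3 := congrFun (congrArg (fun J : Idx n => J.1) h) (I.2.2.symm 0)
    simp at h3
  · intro I hI
    rw [Finset.mem_filter, mem_simplices] at hI ⊢
    exact hI
  · intro I _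
    ext c <;> simp
    split_ifs <;> simp

lemma cyc_last (m : ℕ) (f : List (Fin (n+1) → ℤ) → ZMod 2) :
    ∑ I ∈ simplices n m with I.2.1 (I.2.2.symm (Fin.last n)) = 0,
      f ((List.range (n+1)).map (vert I)) = 0 := by
  apply Finset.sum_involution (fun I _ =>
    (Function.update I.1 (I.2.2.symm (Fin.last n)) (!(I.1 (I.2.2.symm (Fin.last n)))), I.2.1, I.2.2))
  · intro I hI
    rw [Finset.mem_filter] at hI
    have : (List.range (n+1)).map (vert I) = (List.range (n+1)).map (vert
      (Function.update I.1 (I.2.2.symm (Fin.last n)) (!(I.1 (I.2.2.symm (Fin.last n)))), I.2.1, I.2.2)) := by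
      apply List.map_congr_left
      intro t ht
      funext c
      by_cases hc : c = I.2.2.symm (Fin.last n)
      · subst hc
        simp at ht
        simp [vert, hI.2]
        rw [if_neg (by omega), if_neg (by omega)]
      · simp [vert, hc]
    rw [← this, zz]
  · intro I _ _ h
    have h3 := congrFun (congrArg (fun J : Idx n => J.1) h) (I.2.2.symm (Fin.last n))
    simp at h3
  swap
  · intro I hI
    rw [Finset.mem_filter, mem_simplices] at hI ⊢
    exact hI
  · intro I _
    ext c <;> simp

lemma rot_val (x : Fin (n+1)) (hx : x ≠ 0) : (((finRotate (n+1)).symm x : Fin (n+1)) : ℕ) + 1 = x := by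
  have h : finRotate (n+1) ((finRotate (n+1)).symm x) = x := by simp
  set y := (finRotate (n+1)).symm x
  have hy : y ≠ Fin.last n := by
    rintro h'; rw [h', finRotate_last] at h; exact hx h.symm
  rw [← h, coe_finRotate_of_ne_last hy]

lemma cyc_match (m : ℕ) (f : List (Fin (n+1) → ℤ) → ZMod 2) :
    ∑ I ∈ simplices n m with ¬ I.2.1 (I.2.2.symm 0) + 1 = m,
      f ((List.range (n+1)).map (fun t => vert I (t+1))) =
    ∑ I ∈ simplices n m with ¬ I.2.1 (I.2.2.symm (Fin.last n)) = 0,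
      f ((List.range (n+1)).map (vert I)) := by
  refine Finset.sum_nbij' (fun I => (I.1, Function.update I.2.1 (I.2.2.symm 0) (I.2.1 (I.2.2.symm 0) + 1),
    I.2.2.trans (finRotate (n+1)).symm))
    (fun I => (I.1, Function.update I.2.1 (I.2.2.symm (Fin.last n)) (I.2.1 (I.2.2.symm (Fin.last n)) - 1),
    I.2.2.trans (finRotate (n+1)))) ?_ ?_ ?_ ?_ ?_
  · intro I hI
    rw [Finset.mem_filter, mem_simplices] at hI ⊢
    constructor
    · intro c
      by_cases hc : c = I.2.2.symm 0
      · subst hc; simp; have := hI.1 (I.2.2.symm 0); omega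
      · simp [hc, hI.1 c]
    · simp
  · intro I hI
    rw [Finset.mem_filter, mem_simplices] at hI ⊢
    have h0 : (finRotate (n+1)).symm 0 = Fin.last n := by
      rw [Equiv.symm_apply_eq]; simp
    constructor
    · intro c
      by_cases hc : c = I.2.2.symm (Fin.last n)
      · subst hc; simp; have := hI.1 (I.2.2.symm (Fin.last n)); omega
      · simp [hc, hI.1 c]
    · simp [h0]; have := hI.1 (I.2.2.symm (Fin.last n)); have := hI.2; omega
  · intro I hI
    ext c <;> simp
  · intro I hI
    have h0 : (finRotate (n+1)).symm 0 = Fin.last n := by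
      rw [Equiv.symm_apply_eq]; simp
    rw [Finset.mem_filter, mem_simplices] at hI
    have := hI.2
    ext c
    · simp
    · simp [h0]
      rw [Nat.sub_add_cancel (by omega)]; simp
    · simp
  · intro I hI
    congr 1
    apply List.map_congr_left
    intro t ht
    simp at ht
    funext c
    by_cases hc : c = I.2.2.symm 0
    · subst hc
      have h0 : (finRotate (n+1)).symm 0 = Fin.last n := by
        rw [Equiv.symm_apply_eq]; simp
      simp [vert, h0]
      left; omega
    · have h1 : I.2.2 c ≠ 0 := fun h => hc (by rw [← h]; simp)
      have h2 := rot_val _ h1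
      simp only [vert, Equiv.trans_apply, Function.update_of_ne hc]
      rw [← h2]
      simp

lemma cycle (block : Fin (n+1) → Fin k) (m : ℕ) (f : List (Fin (n+1) → ℤ) → ZMod 2)
    (hf : Inv (bdry block m) (flipZ block) f) :
    ∑ I ∈ simplices n m, bd f (path I) = 0 := by
  simp only [bd_path, Finset.sum_add_distrib]
  rw [Finset.sum_comm, Finset.sum_eq_zero (s := Finset.range n) (fun t ht => cyc_mid m f t (Finset.mem_range.1 ht)),
    ← Finset.sum_filter_add_sum_filter_not (simplices n m) (fun I => I.2.1 (I.2.2.symm 0) + 1 = m),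
    cyc_first block m f hf, cyc_match,
    ← Finset.sum_filter_add_sum_filter_not (simplices n m) (fun I => I.2.1 (I.2.2.symm (Fin.last n)) = 0),
    cyc_last]
  simp [zz]
end cycle
end GPP

namespace GPP

section eval
variable {k n : ℕ} (block : Fin (n+1) → Fin k)

def top (j : Fin k) (u : Fin (n+1) → ℤ) (c : Fin (n+1)) : Prop :=
  block c = j ∧ u c ≠ 0 ∧ ∀ c' > c, block c' = j → u c' = 0

open Classical in
noncomputable def sj (j : Fin k) (u : Fin (n+1) → ℤ) : ZMod 2 :=
  if ∃ c, top block j u c ∧ u c < 0 then 1 else 0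

noncomputable def sa (α : Finset (Fin k)) (u : Fin (n+1) → ℤ) : ZMod 2 := ∑ j ∈ α, sj block j u

lemma top_unique {j : Fin k} {u : Fin (n+1) → ℤ} {c c'} (h : top block j u c) (h' : top block j u c') :
    c = c' := by
  rcases lt_trichotomy c c' with hc | hc | hc
  · exact absurd (h.2.2 c' hc h'.1) h'.2.1
  · exact hc
  · exact absurd (h'.2.2 c hc h.1) h.2.1

lemma sj_top {j : Fin k} {u : Fin (n+1) → ℤ} {c} (h : top block j u c) :
    sj block j u = if u c < 0 then 1 else 0 := by
  unfold sj
  congr 1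
  apply propext
  constructor
  · rintro ⟨c', h', h0⟩
    rwa [top_unique block h h']
  · intro h0; exact ⟨c, h, h0⟩

lemma exists_top {j : Fin k} {u : Fin (n+1) → ℤ} {c} (h : block c = j) (h0 : u c ≠ 0) :
    ∃ c', c ≤ c' ∧ top block j u c' := by
  let s := Finset.univ.filter (fun c => block c = j ∧ u c ≠ 0)
  have hs : s.Nonempty := ⟨c, by simp [s, h, h0]⟩
  have hm := s.max'_mem hs
  refine ⟨s.max' hs, s.le_max' c (by simp [s, h, h0]), ?_, ?_, ?_⟩
  · simp [s] at hm; exact hm.1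
  · simp [s] at hm; exact hm.2
  · intro c' hc' hb
    by_contra h1
    exact absurd (s.le_max' c' (by simp [s, hb, h1])) (not_le.2 hc')

lemma sj_none {j : Fin k} {u : Fin (n+1) → ℤ} (h : ∀ c, block c = j → u c = 0) :
    sj block j u = 0 := by
  unfold sj
  rw [if_neg]
  rintro ⟨c, h1, h2⟩
  exact h1.2.1 (h c h1.1)

lemma sj_congr {j : Fin k} {u u' : Fin (n+1) → ℤ} (h : ∀ c, block c = j → (u c).sign = (u' c).sign) :
    sj block j u = sj block j u' := by
  by_cases h0 : ∃ c, block c = j ∧ u c ≠ 0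
  · obtain ⟨c, h1, h2⟩ := h0
    obtain ⟨c', -, hc'⟩ := exists_top block h1 h2
    have h3 : top block j u' c' := by
      refine ⟨hc'.1, ?_, ?_⟩
      · have := h c' hc'.1
        intro h4
        rw [h4, Int.sign_zero, Int.sign_eq_zero_iff_zero] at this
        exact hc'.2.1 this
      · intro c'' h5 h6
        have := h c'' h6
        rw [hc'.2.2 c'' h5 h6, Int.sign_zero, eq_comm, Int.sign_eq_zero_iff_zero] at this
        exact this
    rw [sj_top block hc', sj_top block h3]
    have := h c' hc'.1
    congr 1
    rw [← Int.sign_eq_neg_one_iff_neg, ← Int.sign_eq_neg_one_iff_neg, this]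
  · push Not at h0
    rw [sj_none block h0, sj_none block]
    intro c hc
    have := h c hc
    rw [h0 c hc, Int.sign_zero, eq_comm, Int.sign_eq_zero_iff_zero] at this
    exact this

lemma sj_high {j : Fin k} {u u' : Fin (n+1) → ℤ} {c} (hc : block c = j) (h0 : u c ≠ 0)
    (h : ∀ c' ≥ c, u c' = u' c') : sj block j u = sj block j u' := by
  obtain ⟨c', h1, h2⟩ := exists_top block hc h0
  have h3 : top block j u' c' := by
    refine ⟨h2.1, ?_, ?_⟩
    · rw [← h c' h1]; exact h2.2.1
    · intro c'' h5 h6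
      rw [← h c'' (by exact le_trans h1 (le_of_lt h5))]; exact h2.2.2 c'' h5 h6
  rw [sj_top block h2, sj_top block h3, h c' h1]

lemma sj_flip (m : ℕ) (hm : 1 ≤ m) (j j' : Fin k) (u) (h : bdry block m j' u) :
    sj block j (flipZ block j' u) = sj block j u + if j = j' then 1 else 0 := by
  split_ifs with hj
  · subst hj
    obtain ⟨c, h1, h2⟩ := h
    have h0 : u c ≠ 0 := by intro h; rw [h] at h2; simp at h2; omega
    obtain ⟨c', -, hc'⟩ := exists_top block h1 h0
    have h3 : top block j (flipZ block j u) c' := by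
      refine ⟨hc'.1, ?_, ?_⟩
      · simp [flipZ, hc'.1, hc'.2.1]
      · intro c'' h5 h6
        simp [flipZ, hc'.2.2 c'' h5 h6]
    rw [sj_top block hc', sj_top block h3]
    simp only [flipZ, hc'.1, if_true]
    have := hc'.2.1
    rcases lt_or_gt_of_ne this with h | h
    · rw [if_pos h, if_neg (by linarith)]; rfl
    · rw [if_pos (by linarith), if_neg (by linarith)]; rfl
  · rw [add_zero]
    apply sj_congr
    intro c hc
    simp [flipZ, hc, hj]

lemma sa_flip (m : ℕ) (hm : 1 ≤ m) (α : Finset (Fin k)) (j' : Fin k) (u) (h : bdry block m j' u) :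
    sa block α (flipZ block j' u) = sa block α u + if j' ∈ α then 1 else 0 := by
  unfold sa
  rw [Finset.sum_congr rfl (fun j _ => sj_flip block m hm j j' u h), Finset.sum_add_distrib]
  simp

lemma vert_succ (I : Idx n) (t : Fin (n+1)) (c : Fin (n+1)) (hc : c ≠ I.2.2.symm t) :
    vert I (t + 1) c = vert I t c := by
  have : I.2.2 c ≠ t := by rintro rfl; simp at hc
  have h2 : (I.2.2 c : ℕ) ≠ t := by rwa [Ne, ← Fin.ext_iff]
  unfold vert
  congr 2
  congr 1
  apply propext
  omega

lemma sa_step (α : Finset (Fin k)) (I : Idx n) (t : Fin (n+1)) :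
    sa block α (vert I t) + sa block α (vert I (t+1)) =
    if block (I.2.2.symm t) ∈ α then sj block (block (I.2.2.symm t)) (vert I t) +
      sj block (block (I.2.2.symm t)) (vert I (t+1)) else 0 := by
  unfold sa
  rw [← Finset.sum_add_distrib]
  have : ∀ j ∈ α, sj block j (vert I t) + sj block j (vert I (t+1)) =
      if j = block (I.2.2.symm t) then sj block j (vert I t) + sj block j (vert I (t+1)) else 0 := by
    intro j _
    split_ifs with hj
    · rfl
    · rw [sj_congr block (u := vert I (t+1)) (u' := vert I t), zz]
      intro c hc
      rw [vert_succ]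
      rintro rfl
      exact hj hc.symm
  rw [Finset.sum_congr rfl this]
  rw [Finset.sum_ite_eq' α (block (I.2.2.symm t))]

lemma sj_step_ne (I : Idx n) (t : Fin (n+1))
    (h : sj block (block (I.2.2.symm t)) (vert I t) +
      sj block (block (I.2.2.symm t)) (vert I (t+1)) ≠ 0) :
    I.2.1 (I.2.2.symm t) = 0 ∧ ∀ c > I.2.2.symm t, block c = block (I.2.2.symm t) → t < I.2.2 c := by
  constructor
  · by_contra h0
    apply h
    rw [sj_congr block (u := vert I (t+1)) (u' := vert I t), zz]
    intro c hc
    by_cases hc' : c = I.2.2.symm t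
    · subst hc'
      simp only [vert, Int.sign_mul, Equiv.apply_symm_apply]
      congr 1
      rw [Int.sign_eq_one_of_pos, Int.sign_eq_one_of_pos] <;> split_ifs <;> omega
    · rw [vert_succ I t c hc']
  · intro c hc hb
    by_contra h0
    apply h
    have h1 : I.2.2 c ≠ t := by rintro rfl; simp at hc
    have h2 : (I.2.2 c : ℕ) < t := by
      rw [← Fin.lt_def]; exact lt_of_le_of_ne (not_lt.1 h0) h1
    rw [sj_high block hb (u' := vert I (t+1)), zz]
    · simp only [vert, h2, if_true]
      have := abs_sg (I.1 c)
      intro h3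
      rcases mul_eq_zero.1 h3 with h4 | h4
      · rw [h4] at this; simp at this
      · omega
    · intro c' hc'
      rw [vert_succ]
      intro h3
      rw [h3] at hc'
      exact absurd hc (not_lt.2 hc')

lemma perm_block (ρ : Equiv.Perm (Fin (n+1))) (h : ∀ t, block (ρ.symm t) ≤ block t) (t) :
    block (ρ.symm t) = block t := by
  have h1 : ∑ t, (block (ρ.symm t) : ℕ) = ∑ t, (block t : ℕ) := Equiv.sum_comp ρ.symm (fun t => (block t : ℕ))
  rw [Finset.sum_eq_sum_iff_of_le (fun i _ => by exact_mod_cast h i)] at h1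
  exact Fin.ext (h1 t (Finset.mem_univ _))

lemma perm_id (ρ : Equiv.Perm (Fin (n+1))) (h : ∀ t, block (ρ.symm t) = block t)
    (hm : ∀ c c', c < c' → block c = block c' → ρ c < ρ c') : ρ = Equiv.refl _ := by
  ext c
  congr 1
  induction c using WellFoundedLT.induction with
  | _ c ih =>
    by_contra hne
    simp at hne ih
    rcases lt_or_gt_of_ne hne with h1 | h1
    · exact hne (ρ.injective (ih _ h1))
    · have h2 : block (ρ.symm c) = block c := h c
      rcases lt_trichotomy (ρ.symm c) c with h3 | h3 | h3
      · have := ih _ h3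
        simp at this
        rw [← this] at h3
        exact lt_irrefl _ h3
      · apply hne; conv_lhs => rw [← h3]
        simp
      · have := hm _ _ h3 h2.symm
        simp at this
        exact absurd h1 (not_lt.2 this.le)

lemma tri_sum {N : ℕ} (g : Fin N → (Fin N → Bool) → ZMod 2)
    (hg : ∀ t σ σ', (∀ t' < t, σ t' = σ' t') → g t σ = g t σ') :
    ∑ σ : Fin N → Bool, ∏ t, (g t σ + if σ t then 1 else 0) = 1 := by
  let Φ : (Fin N → Bool) → (Fin N → ZMod 2) := fun σ t => g t σ + if σ t then 1 else 0
  have hinj : Function.Injective Φ := by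
    intro σ σ' h
    funext t
    induction t using WellFoundedLT.induction with
    | _ t ih =>
      have := congrFun h t
      simp only [Φ, hg t σ σ' ih, add_right_inj] at this
      by_cases h1 : σ t <;> by_cases h2 : σ' t <;> simp [h1, h2] at this ⊢
  have hb : Function.Bijective Φ := by
    rw [Fintype.bijective_iff_injective_and_card]
    refine ⟨hinj, by simp [ZMod.card]⟩
  have : ∑ σ : Fin N → Bool, ∏ t, (g t σ + if σ t then 1 else 0) = ∑ τ : Fin N → ZMod 2, ∏ t, τ t :=
    Function.Bijective.sum_comp hb (fun τ => ∏ t, τ t)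
  rw [this]
  have h2 := Finset.prod_univ_sum (fun _ : Fin N => (Finset.univ : Finset (ZMod 2))) (fun _ x => x)
  rw [Fintype.piFinset_univ] at h2
  rw [← h2]
  have : ∑ x : ZMod 2, x = 1 := by decide
  simp [this]

theorem eval_cycle (m : ℕ) (hm : 1 ≤ m) (α : Fin (n+1) → Finset (Fin k))
    (h1 : ∀ t, block t ∈ α t) (h2 : ∀ t, ∀ j ∈ α t, j ≤ block t) :
    ∑ I ∈ simplices n m, ∏ t : Fin (n+1), (sa block (α t) (vert I t) + sa block (α t) (vert I (t+1))) = 1 := by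
  let emb : (Fin (n+1) → Bool) → Idx n := fun σ => (σ, (fun _ => 0), Equiv.refl _)
  have hemb : Function.Injective emb := fun σ σ' h => congrArg Prod.fst h
  have hsub : Finset.univ.image emb ⊆ simplices n m := by
    intro I hI
    obtain ⟨σ, -, rfl⟩ := Finset.mem_image.1 hI
    rw [mem_simplices]
    intro c; exact hm
  rw [← Finset.sum_subset hsub]
  · rw [Finset.sum_image (fun _ _ _ _ h => hemb h)]
    rw [← tri_sum (fun (t : Fin (n+1)) σ => sj block (block t) (vert (emb σ) t))]
    · apply Finset.sum_congr rfl
      intro σ _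
      apply Finset.prod_congr rfl
      intro t _
      rw [sa_step]
      simp only [emb, Equiv.refl_symm, Equiv.refl_apply, h1, if_true]
      congr 1
      rw [sj_top block (c := t)]
      · simp only [vert, Equiv.refl_apply]
        simp [sg]
        cases σ t <;> simp
      · refine ⟨rfl, ?_, ?_⟩
        · simp [vert, sg]; split_ifs <;> simp
        · intro c hc _
          simp [vert, sg]
          intro h
          exact absurd hc (not_lt.2 (Fin.le_def.2 (by omega)))
    · intro t σ σ' h
      congr 1
      funext c
      show sg (σ c) * (((0:ℕ):ℤ) + if (c : ℕ) < t then 1 else 0) =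
        sg (σ' c) * (((0:ℕ):ℤ) + if (c : ℕ) < t then 1 else 0)
      by_cases h3 : (c : ℕ) < t
      · rw [h c (Fin.lt_def.2 h3)]
      · simp only [if_neg h3]; simp
  · intro I hI hI'
    by_contra h0
    rw [Finset.prod_eq_zero_iff] at h0
    push Not at h0
    have h3 : ∀ t, block (I.2.2.symm t) ∈ α t := by
      intro t
      have := h0 t (Finset.mem_univ _)
      rw [sa_step] at this
      by_contra h; simp [h] at this
    have h4 := fun t => sj_step_ne block I t (by
      have := h0 t (Finset.mem_univ _)
      rw [sa_step, if_pos (h3 t)] at this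
      exact this)
    have h5 := perm_block block I.2.2 (fun t => h2 t _ (h3 t))
    have h6 := perm_id block I.2.2 h5 (by
      intro c c' hc hb
      have := (h4 (I.2.2 c)).2 c'
      simp at this
      exact this hc hb.symm)
    apply hI'
    rw [Finset.mem_image]
    refine ⟨I.1, Finset.mem_univ _, ?_⟩
    refine Prod.ext rfl (Prod.ext ?_ h6.symm)
    funext c
    have := (h4 (I.2.2 c)).1
    simpa using this.symm

end eval
end GPP

namespace GPP

section BU
variable {k n : ℕ} (block : Fin (n+1) → Fin k)

abbrev EE (n k : ℕ) := (Fin (n+1) → ℝ) × (Fin k → ℝ)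

def flipR (j : Fin k) (x : EE n k) : EE n k :=
  (fun c => if block c = j then - x.1 c else x.1 c, fun i => if i = j then - x.2 i else x.2 i)

def KK : Set (EE n k) :=
  {x | ‖x‖ ≤ 1 ∧ ∀ j, 1 ≤ |x.2 j| + ∑ c with block c = j, |x.1 c|}

def bsup (u : Fin (n+1) → ℤ) (j : Fin k) : ℕ :=
  (Finset.univ.filter (fun c => block c = j)).sup (fun c => (u c).natAbs)

noncomputable def Rl (m : ℕ) (u : Fin (n+1) → ℤ) : EE n k :=
  (fun c => (u c : ℝ) / m, fun j => ((m - bsup block u j : ℕ) : ℝ) / m)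

lemma KK_compact : IsCompact (KK block) := by
  apply Metric.isCompact_of_isClosed_isBounded
  · unfold KK
    rw [Set.ofPred_and]
    apply IsClosed.inter
    · exact isClosed_le continuous_norm continuous_const
    · simp only [Set.ofPred_forall]
      apply isClosed_iInter
      intro j
      apply isClosed_le continuous_const
      fun_prop
  · refine (Metric.isBounded_closedBall (x := 0) (r := 1)).subset ?_
    intro x hx
    simpa using hx.1

lemma Rl_mem (m : ℕ) (hm : 1 ≤ m) (u : Fin (n+1) → ℤ) (hu : ∀ c, (u c).natAbs ≤ m) :
    Rl block m u ∈ KK block := by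
  have hm' : (0:ℝ) < m := by exact_mod_cast hm
  have habs : ∀ c, |(u c : ℝ)| = ((u c).natAbs : ℝ) := fun c => by
    rw [← Int.cast_abs, ← Int.cast_natCast, Int.natCast_natAbs]
  constructor
  · rw [Rl, Prod.norm_def, max_le_iff, pi_norm_le_iff_of_nonneg zero_le_one,
      pi_norm_le_iff_of_nonneg zero_le_one]
    constructor
    · intro c
      simp only [norm_div, Real.norm_eq_abs, habs, Nat.abs_cast]
      rw [div_le_one hm']
      exact_mod_cast hu c
    · intro j
      simp only [norm_div, Real.norm_eq_abs, Nat.abs_cast]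
      rw [div_le_one hm']
      exact_mod_cast Nat.sub_le _ _
  · intro j
    simp only [Rl, abs_div, Nat.abs_cast, habs]
    rw [← Finset.sum_div, ← add_div, one_le_div hm']
    have : bsup block u j ≤ ∑ c with block c = j, (u c).natAbs := by
      apply Finset.sup_le
      intro c hc
      exact Finset.single_le_sum (f := fun c => (u c).natAbs) (fun _ _ => Nat.zero_le _) hc
    have h2 : m ≤ (m - bsup block u j) + ∑ c with block c = j, (u c).natAbs := by omega
    exact_mod_cast h2

lemma Rl_flip (m : ℕ) (u : Fin (n+1) → ℤ) (j : Fin k) (h : bdry block m j u) :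
    Rl block m (flipZ block j u) = flipR block j (Rl block m u) := by
  have hs : ∀ i, bsup block (flipZ block j u) i = bsup block u i := by
    intro i
    unfold bsup
    congr 1
    funext c
    simp only [flipZ]
    split_ifs <;> simp
  refine Prod.ext ?_ ?_
  · funext c
    simp only [Rl, flipR, flipZ]
    split_ifs <;> simp [neg_div]
  · funext i
    simp only [Rl, flipR, hs]
    split_ifs with hi
    · subst hi
      obtain ⟨c, h1, h2⟩ := h
      have : m ≤ bsup block u i := by
        have h3 : (u c).natAbs ≤ bsup block u i :=
          Finset.le_sup (f := fun c => (u c).natAbs) (by simp [h1])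
        have h4 : ((u c).natAbs : ℤ) = m := by rw [Int.natCast_natAbs]; exact h2
        omega
      simp [Nat.sub_eq_zero_of_le this]
    · rfl

lemma Rl_dist (m : ℕ) (hm : 1 ≤ m) (u u' : Fin (n+1) → ℤ) (h : ∀ c, |u c - u' c| ≤ 1) :
    dist (Rl block m u) (Rl block m u') ≤ 1 / m := by
  have hm' : (0:ℝ) < m := by exact_mod_cast hm
  rw [Rl, Rl, Prod.dist_eq, max_le_iff, dist_pi_le_iff (by positivity), dist_pi_le_iff (by positivity)]
  have hb : ∀ (u u' : Fin (n+1) → ℤ) (h : ∀ c, |u c - u' c| ≤ 1) j, bsup block u j ≤ bsup block u' j + 1 := by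
    intro u u' h j
    apply Finset.sup_le
    intro c hc
    have : (u' c).natAbs ≤ bsup block u' j := Finset.le_sup (f := fun c => (u' c).natAbs) hc
    have := h c
    rw [abs_le] at this
    omega
  constructor
  · intro c
    simp only [Real.dist_eq]
    rw [← sub_div, abs_div, Nat.abs_cast]
    gcongr
    exact_mod_cast h c
  · intro j
    simp only [Real.dist_eq]
    rw [← sub_div, abs_div, Nat.abs_cast]
    gcongr
    have h1 := hb u u' h j
    have h2 := hb u' u (fun c => by rw [abs_sub_comm]; exact h c) j
    rw [abs_le]
    constructor
    · rw [neg_le_sub_iff_le_add]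
      have : m - bsup block u' j ≤ (m - bsup block u j) + 1 := by omega
      exact_mod_cast this
    · rw [sub_le_iff_le_add]
      have : m - bsup block u j ≤ 1 + (m - bsup block u' j) := by omega
      exact_mod_cast this

theorem borsukUlam (α : Fin (n+1) → Finset (Fin k))
    (h1 : ∀ t, block t ∈ α t) (h2 : ∀ t, ∀ j ∈ α t, j ≤ block t)
    (F : Fin (n+1) → EE n k → ℝ) (hF : ∀ t, Continuous (F t))
    (hflip : ∀ t j x, F t (flipR block j x) = if j ∈ α t then - F t x else F t x) :
    ∃ x ∈ KK block, ∀ t, F t x = 0 := by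
  by_contra hcon
  push Not at hcon
  let G : EE n k → (Fin (n+1) → ℝ) := fun x t => F t x
  have hG : Continuous G := continuous_pi hF
  obtain ⟨ε, hε, hmin⟩ := (KK_compact block).exists_forall_le' (f := fun x => ‖G x‖) (a := 0)
    hG.norm.continuousOn (by
      intro x hx
      obtain ⟨t, ht⟩ := hcon x hx
      rw [norm_pos_iff]
      intro h
      exact ht (congrFun h t))
  have huc := (KK_compact block).uniformContinuousOn_of_continuous hG.continuousOn
  rw [Metric.uniformContinuousOn_iff] at huc
  obtain ⟨δ, hδ, huc⟩ := huc (ε/2) (by linarith)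
  obtain ⟨m, hm⟩ := exists_nat_one_div_lt hδ
  have hm1 : 1 ≤ m + 1 := by omega
  generalize hM : m + 1 = M at *
  have hm : 1 / (M:ℝ) < δ := by rw [← hM]; push_cast; exact hm
  let h : Fin (n+1) → (Fin (n+1) → ℤ) → ZMod 2 := fun t u =>
    if ε/2 < |F t (Rl block M u)| then sa block (α t) u + (if F t (Rl block M u) < 0 then 1 else 0) else 0
  have hinv : ∀ t j u, bdry block M j u → h t (flipZ block j u) = h t u := by
    intro t j u hb
    simp only [h]
    rw [Rl_flip block M u j hb, hflip, sa_flip block M hm1 (α t) j u hb]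
    by_cases hj : j ∈ α t
    · simp only [hj, if_true, abs_neg]
      split_ifs with h3 h4 h5 h6
      · linarith
      · linear_combination zz 1
      · ring
      · exfalso
        have : F t (Rl block M u) = 0 := by linarith
        rw [this] at h3; simp at h3; linarith
      · rfl
    · simp [hj]
  have hq : ∀ t, QInv (bdry block M) (flipZ block) (sa block (α t)) := fun t j =>
    ⟨_, fun u hu => sa_flip block M hm1 (α t) j u hu⟩
  have key := Dp_change (bdry block M) (flipZ block) (simplices n M) path
    (List.ofFn fun t => (sa block (α t), h t)) (fun f hf => cycle block M f hf)
    (by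
      intro a ha
      obtain ⟨t, rfl⟩ := List.mem_ofFn.1 ha
      exact hq t)
    (by
      intro a ha
      obtain ⟨t, rfl⟩ := List.mem_ofFn.1 ha
      exact hinv t) [] (by simp) (by intro i _; simp [path])
  simp only [List.nil_append, List.map_ofFn] at key
  have e1 : ∑ i ∈ simplices n M, Dp (List.ofFn (Prod.fst ∘ fun t => (sa block (α t), h t))) (path i) = 1 := by
    rw [← eval_cycle block M hm1 α h1 h2]
    apply Finset.sum_congr rfl
    intro I _
    rw [path, Dp_ofFn]
    rfl
  have e2 : ∑ i ∈ simplices n M, Dp (List.ofFn ((fun a => a.1 + a.2) ∘ fun t => (sa block (α t), h t))) (path i) = 0 := by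
    apply Finset.sum_eq_zero
    intro I hI
    rw [mem_simplices] at hI
    rw [path, Dp_ofFn]
    have hmem : ∀ s, Rl block M (vert I s) ∈ KK block := by
      intro s
      apply Rl_mem block M hm1
      intro c
      rw [vert, Int.natAbs_mul]
      have := hI c
      have h3 : (sg (I.1 c)).natAbs = 1 := by cases I.1 c <;> rfl
      rw [h3]
      split_ifs <;> omega
    have hd : ∀ s, dist (Rl block M (vert I 0)) (Rl block M (vert I s)) < δ := by
      intro s
      refine lt_of_le_of_lt (Rl_dist block M hm1 _ _ ?_) hm
      intro c
      simp only [vert]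
      rw [← mul_sub, abs_mul, abs_sg]
      split_ifs <;> simp
    obtain ⟨t, ht⟩ : ∃ t, ε ≤ |F t (Rl block M (vert I 0))| := by
      by_contra hc
      push Not at hc
      have := hmin _ (hmem 0)
      rw [← not_lt, pi_norm_lt_iff hε] at this
      exact this hc
    apply Finset.prod_eq_zero (Finset.mem_univ t)
    have hcl : ∀ s, |F t (Rl block M (vert I 0)) - F t (Rl block M (vert I s))| < ε/2 := by
      intro s
      have := huc _ (hmem 0) _ (hmem s) (hd s)
      rw [dist_pi_lt_iff (by linarith)] at this
      exact this t
    have hval : ∀ s, sa block (α t) (vert I s) + h t (vert I s) =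
        if F t (Rl block M (vert I 0)) < 0 then 1 else 0 := by
      intro s
      have h3 := hcl s
      have h4 : ε/2 < |F t (Rl block M (vert I s))| := by
        have := abs_sub_abs_le_abs_sub (F t (Rl block M (vert I 0))) (F t (Rl block M (vert I s)))
        linarith
      simp only [h, if_pos h4]
      rw [← add_assoc, zz, zero_add]
      congr 1
      apply propext
      rw [abs_lt] at h3
      constructor
      · intro h5
        by_contra h6
        rw [abs_of_nonneg (not_lt.1 h6)] at ht
        linarith
      · intro h5
        rw [abs_of_neg h5] at ht
        linarith
    simp only [Function.comp, Pi.add_apply]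
    have a1 := hval t
    have a2 := hval (t+1)
    rw [a1, a2, zz]
  rw [e1, e2] at key
  exact absurd key (by decide)

end BU
end GPP

namespace GPP
open MvPolynomial Filter Topology

section bezout
variable {τ ω : Type} [Fintype τ] [Fintype ω]

lemma hom_aeval {ω : Type} {R : Type*} [CommRing R] [Algebra ℝ R] (φ : R →+* ℝ) (hφ : ∀ a, φ (algebraMap ℝ R a) = a)
    (g : ω → R) (W : MvPolynomial ω ℝ) : φ (aeval g W) = eval (fun i => φ (g i)) W := by
  rw [MvPolynomial.map_aeval, ← MvPolynomial.eval₂_id]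
  have : φ.comp (algebraMap ℝ R) = RingHom.id ℝ := RingHom.ext hφ
  rw [this]
  rfl

theorem bez_indep {N : ℕ} (F : ω → MvPolynomial τ ℝ) (p : Fin N → (τ → ℝ))
    (hopen : ∀ n, 𝓝 (0 : ω → ℝ) ≤ map (fun x i => eval x (F i)) (𝓝 (p n)))
    (s : Fin N → MvPolynomial τ ℝ) (hs1 : ∀ n, eval (p n) (s n) ≠ 0)
    (hs2 : ∀ n n', n' ≠ n → eval (p n) (s n') = 0)
    (W : Fin N → MvPolynomial ω ℝ) (hW : ∑ n, aeval F (W n) * s n = 0) : ∀ n, W n = 0 := by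
  suffices H : ∀ v : ω → ℝ, ∀ n, aeval (fun i => Polynomial.C (v i) * Polynomial.X) (W n) = (0 : Polynomial ℝ) by
    intro n
    apply MvPolynomial.funext
    intro v
    have := congrArg (Polynomial.eval 1) (H v n)
    rw [← Polynomial.coe_evalRingHom, hom_aeval (Polynomial.evalRingHom (1:ℝ)) (by simp)] at this
    simpa using this
  intro v
  by_contra hcon
  push Not at hcon
  set w : Fin N → Polynomial ℝ := fun n => aeval (fun i => Polynomial.C (v i) * Polynomial.X) (W n) with hw
  have hex : ∃ s, ∃ n, (w n).coeff s ≠ 0 := by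
    obtain ⟨n, hn⟩ := hcon
    by_contra h
    push Not at h
    exact hn (Polynomial.ext (fun s => by simpa using h s n))
  classical
  obtain ⟨n, hn⟩ := Nat.find_spec hex
  set o := Nat.find hex
  have hdiv : ∀ n', Polynomial.X ^ o ∣ w n' := by
    intro n'
    rw [Polynomial.X_pow_dvd_iff]
    intro e he
    have := Nat.find_min hex he
    push Not at this
    exact this n'
  choose q hq using hdiv
  have hq0 : (q n).eval 0 ≠ 0 := by
    rw [hq n, Polynomial.coeff_X_pow_mul'] at hn
    simpa [Polynomial.coeff_zero_eq_eval_zero] using hn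
  let Ψ : ℝ × (τ → ℝ) → ℝ := fun z => ∑ n', (q n').eval z.1 * eval z.2 (s n')
  have hΨ : Continuous Ψ := by
    apply continuous_finsetSum
    intro n' _
    exact ((q n').continuous.comp continuous_fst).mul ((MvPolynomial.continuous_eval (s n')).comp continuous_snd)
  have hΨ0 : Ψ (0, p n) ≠ 0 := by
    simp only [Ψ]
    rw [Finset.sum_eq_single n]
    · exact mul_ne_zero hq0 (hs1 n)
    · intro n' _ h; rw [hs2 n n' h, mul_zero]
    · simp
  have hev : ∀ᶠ z in 𝓝 ((0:ℝ), p n), Ψ z ≠ 0 := hΨ.continuousAt.eventually_ne hΨ0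
  rw [nhds_prod_eq] at hev
  obtain ⟨pa, ha, pb, hb, hab⟩ := eventually_prod_iff.1 hev
  have h3 : ∀ᶠ y in 𝓝 (0 : ω → ℝ), ∃ x, pb x ∧ (fun i => eval x (F i)) = y := by
    have : {y : ω → ℝ | ∃ x, pb x ∧ (fun i => eval x (F i)) = y} ∈ map (fun x i => eval x (F i)) (𝓝 (p n)) := by
      rw [mem_map]
      filter_upwards [hb] with x hx
      exact ⟨x, hx, rfl⟩
    exact hopen n this
  have h4 : Tendsto (fun t : ℝ => t • v) (𝓝 0) (𝓝 0) := by
    have : Continuous (fun t : ℝ => t • v) := by fun_prop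
    simpa using this.tendsto 0
  have h5 : ∀ᶠ t in 𝓝[≠] (0:ℝ), pa t ∧ (∃ x, pb x ∧ (fun i => eval x (F i)) = t • v) ∧ t ≠ 0 := by
    filter_upwards [nhdsWithin_le_nhds ha, nhdsWithin_le_nhds (h4.eventually h3), self_mem_nhdsWithin] with t h1 h2 h3
    exact ⟨h1, h2, h3⟩
  obtain ⟨t, h6, ⟨x, h7, h8⟩, h9⟩ := h5.exists
  apply hab h6 h7
  have h10 : ∀ n', eval x (aeval F (W n')) = t ^ o * (q n').eval t := by
    intro n'
    have e1 : eval x (aeval F (W n')) = eval (t • v) (W n') := by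
      rw [hom_aeval (eval x) (by simp), ← h8]
    have e2 : (w n').eval t = eval (t • v) (W n') := by
      have : t • v = fun i => Polynomial.evalRingHom t (Polynomial.C (v i) * Polynomial.X) := by
        funext i
        simp only [Polynomial.coe_evalRingHom, Polynomial.eval_mul, Polynomial.eval_C, Polynomial.eval_X,
          Pi.smul_apply, smul_eq_mul]
        exact mul_comm _ _
      rw [← Polynomial.coe_evalRingHom, hw, this, ← hom_aeval (Polynomial.evalRingHom t) (by simp)]
    rw [e1, ← e2, hq n']
    simp
  have h11 := congrArg (eval x) hW
  simp only [map_sum, map_mul, map_zero, h10] at h11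
  have : t ^ o * Ψ (t, x) = 0 := by
    rw [← h11]
    simp only [Ψ, Finset.mul_sum, mul_assoc]
  exact (mul_eq_zero.1 this).resolve_left (pow_ne_zero _ h9)

theorem bez_count {N : ℕ} (F : ω → MvPolynomial τ ℝ) (p : Fin N → (τ → ℝ))
    (hopen : ∀ n, 𝓝 (0 : ω → ℝ) ≤ map (fun x i => eval x (F i)) (𝓝 (p n)))
    (s : Fin N → MvPolynomial τ ℝ) (hs1 : ∀ n, eval (p n) (s n) ≠ 0)
    (hs2 : ∀ n n', n' ≠ n → eval (p n) (s n') = 0)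
    (A : ω → ℕ) (L : τ → ℕ)
    (hL : ∀ n j, ∑ i, A i * (F i).degreeOf j + (s n).degreeOf j ≤ L j) :
    N * ∏ i, A i ≤ ∏ j, (L j + 1) := by
  classical
  let fam : (Fin N × (∀ i, Fin (A i))) → MvPolynomial τ ℝ := fun z => (∏ i, F i ^ (z.2 i : ℕ)) * s z.1
  let ex : (∀ i, Fin (A i)) → (ω →₀ ℕ) := fun a => Finsupp.equivFunOnFinite.symm (fun i => (a i : ℕ))
  have hexinj : Function.Injective ex := by
    intro a a' h
    funext i
    have := DFunLike.congr_fun h i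
    exact Fin.ext this
  have hli : LinearIndependent ℝ fam := by
    rw [Fintype.linearIndependent_iff]
    intro g hg
    let W : Fin N → MvPolynomial ω ℝ := fun n => ∑ a, monomial (ex a) (g (n, a))
    have hW := bez_indep F p hopen s hs1 hs2 W (by
      rw [← hg, Fintype.sum_prod_type]
      apply Finset.sum_congr rfl
      intro n _
      simp only [W, map_sum, Finset.sum_mul, fam]
      apply Finset.sum_congr rfl
      intro a _
      rw [aeval_monomial, Finsupp.prod_fintype _ _ (by simp), Algebra.smul_def]
      simp [ex, mul_assoc])
    rintro ⟨n, a⟩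
    have := congrArg (coeff (ex a)) (hW n)
    simp only [W, coeff_sum, coeff_monomial, coeff_zero] at this
    rw [Finset.sum_eq_single a] at this
    · simpa using this
    · intro b _ hb
      rw [if_neg (fun h => hb (hexinj h))]
    · simp
  let mons : Finset (MvPolynomial τ ℝ) := Finset.univ.image
    (fun m : (∀ j, Fin (L j + 1)) => monomial (Finsupp.equivFunOnFinite.symm (fun j => (m j : ℕ))) (1:ℝ))
  have hspan : Set.range fam ≤ Submodule.span ℝ (mons : Set (MvPolynomial τ ℝ)) := by
    rintro _ ⟨z, rfl⟩
    have hdeg : ∀ j, (fam z).degreeOf j ≤ L j := by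
      intro j
      refine le_trans ?_ (hL z.1 j)
      refine (degreeOf_mul_le _ _ _).trans ?_
      gcongr
      refine (degreeOf_prod_le _ _ _).trans ?_
      apply Finset.sum_le_sum
      intro i _
      refine (degreeOf_pow_le _ _ _).trans ?_
      gcongr
      exact (z.2 i).2.le
    rw [SetLike.mem_coe, (fam z).as_sum]
    apply Submodule.sum_mem
    intro m hm
    have : monomial m (coeff m (fam z)) = (coeff m (fam z)) • monomial m (1:ℝ) := by
      rw [smul_monomial]; simp
    rw [this]
    apply Submodule.smul_mem
    apply Submodule.subset_span
    simp only [mons, Finset.coe_image, Finset.coe_univ, Set.image_univ, Set.mem_range]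
    refine ⟨fun j => ⟨m j, Nat.lt_succ_of_le ((monomial_le_degreeOf j hm).trans (hdeg j))⟩, ?_⟩
    congr 1
    congr 1
    ext j
    rfl
  have := linearIndependent_le_span_aux' fam hli mons hspan
  have h2 : mons.card ≤ ∏ j, (L j + 1) := by
    refine Finset.card_image_le.trans ?_
    simp
  simp only [Fintype.card_prod, Fintype.card_fin, Fintype.card_pi] at this
  refine this.trans ?_
  simpa using h2

end bezout
end GPP

namespace GPP
open MvPolynomial Filter Topology MeasureTheory

section basics
set_option linter.unusedSectionVars false
variable {τ : Type} [Fintype τ] [DecidableEq τ]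

noncomputable def dE (p : MvPolynomial τ ℝ) (x : τ → ℝ) : (τ → ℝ) →L[ℝ] ℝ :=
  ∑ i, eval x (pderiv i p) • ContinuousLinearMap.proj (R := ℝ) (φ := fun _ : τ => ℝ) i

lemma dE_apply (p : MvPolynomial τ ℝ) (x v : τ → ℝ) : dE p x v = ∑ i, eval x (pderiv i p) * v i := by
  simp [dE]

lemma hasStrict (p : MvPolynomial τ ℝ) (x : τ → ℝ) :
    HasStrictFDerivAt (fun x => eval x p) (dE p x) x := by
  induction p using MvPolynomial.induction_on with
  | C a =>
    simp only [eval_C]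
    convert! hasStrictFDerivAt_const a x
    ext v; simp [dE_apply]
  | add p q hp hq =>
    simp only [map_add]
    convert! hp.add hq
    ext v; simp [dE_apply, Finset.sum_add_distrib, add_mul]
  | mul_X p i hp =>
    simp only [map_mul, eval_X]
    convert! hp.mul (hasStrictFDerivAt_apply (𝕜 := ℝ) i x)
    ext v
    simp only [dE_apply, Derivation.leibniz, pderiv_X, smul_eq_mul, map_add, map_mul, eval_X,
      add_mul, Finset.sum_add_distrib, add_apply, smul_apply,
      Finset.mul_sum, ContinuousLinearMap.proj_apply]
    congr 1
    · rw [Finset.sum_eq_single i]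
      · simp
      · intro b _ hb; simp [hb.symm]
      · simp
    · apply Finset.sum_congr rfl; intros; ring

lemma totalDegree_pderiv (p : MvPolynomial τ ℝ) (i : τ) : (pderiv i p).totalDegree ≤ p.totalDegree := by
  conv_lhs => rw [p.as_sum, map_sum]
  apply totalDegree_finsetSum_le
  intro m hm
  rw [pderiv_monomial]
  refine (totalDegree_monomial_le _ _).trans ?_
  refine le_trans ?_ (le_totalDegree hm)
  change (m - Finsupp.single i 1).degree ≤ m.degree
  exact Finsupp.degree_mono tsub_le_self

noncomputable def evs (f : τ → MvPolynomial τ ℝ) (x : τ → ℝ) : τ → ℝ := fun i => eval x (f i)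

noncomputable def jac (f : τ → MvPolynomial τ ℝ) (x : τ → ℝ) : Matrix τ τ ℝ :=
  Matrix.of fun a b => eval x (pderiv b (f a))

lemma hasStrict_evs (f : τ → MvPolynomial τ ℝ) (x : τ → ℝ) :
    HasStrictFDerivAt (evs f) (LinearMap.toContinuousLinearMap (Matrix.toLin' (jac f x))) x := by
  rw [hasStrictFDerivAt_pi']
  intro i
  convert! hasStrict (f i) x
  ext v
  simp [dE_apply, jac, Matrix.mulVec, dotProduct]

lemma jac_open (f : τ → MvPolynomial τ ℝ) (x : τ → ℝ) (h : (jac f x).det ≠ 0) :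
    𝓝 (evs f x) ≤ map (evs f) (𝓝 x) := by
  apply ge_of_eq
  apply (hasStrict_evs f x).map_nhds_eq_of_surj
  rw [LinearMap.range_eq_top]
  intro y
  refine ⟨((jac f x)⁻¹).mulVec y, ?_⟩
  simp only [LinearMap.coe_toContinuousLinearMap', Matrix.toLin'_apply, Matrix.mulVec_mulVec, ContinuousLinearMap.coe_coe]
  rw [Matrix.mul_nonsing_inv _ (isUnit_iff_ne_zero.2 h), Matrix.one_mulVec]

theorem sard {ι κ : Type} [Fintype ι] [Fintype κ] [DecidableEq ι] [DecidableEq κ]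
    (f : ι ⊕ κ → MvPolynomial (ι ⊕ κ) ℝ) :
    ∀ᵐ δ : ι → ℝ, ∀ᵐ u : κ → ℝ, ∀ x, (∀ i, eval x (f (Sum.inl i)) = δ i) →
      (∀ i, eval x (f (Sum.inr i)) = u i) → (jac f x).det ≠ 0 := by
  let s : Set (ι ⊕ κ → ℝ) := {x | (jac f x).det = 0}
  have h0 : volume (evs f '' s) = 0 := by
    apply addHaar_image_eq_zero_of_det_fderivWithin_eq_zero volume
      (fun x _ => (hasStrict_evs f x).hasFDerivAt.hasFDerivWithinAt)
    intro x hx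
    rw [ContinuousLinearMap.det]
    have hx2 : (jac f x).det = 0 := hx
    simpa [LinearMap.det_toLin'] using hx2
  have h1 := (volume_measurePreserving_sumPiEquivProdPi_symm (fun _ : ι ⊕ κ => ℝ)).quasiMeasurePreserving.preimage_null h0
  have h2 : ∀ᵐ z : (ι → ℝ) × (κ → ℝ), (MeasurableEquiv.sumPiEquivProdPi (fun _ : ι ⊕ κ => ℝ)).symm z ∉ evs f '' s :=
    measure_eq_zero_iff_ae_notMem.1 h1
  have h3 := Measure.ae_ae_of_ae_prod h2
  filter_upwards [h3] with δ hδ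
  filter_upwards [hδ] with u hu
  intro x hx1 hx2 hdet
  apply hu
  refine ⟨x, hdet, ?_⟩
  funext a
  rcases a with i | i
  · exact hx1 i
  · exact hx2 i

end basics
end GPP

namespace GPP
open MvPolynomial Filter Topology MeasureTheory

section fiber
set_option linter.unusedSectionVars false
variable {ι κ : Type} [Fintype ι] [Fintype κ] [DecidableEq ι] [DecidableEq κ]

lemma cont_elim : Continuous (fun w : (ι → ℝ) × (κ → ℝ) => (Sum.elim w.1 w.2 : ι ⊕ κ → ℝ)) := by
  apply continuous_pi
  intro i
  rcases i with i | i
  · simp only [Sum.elim_inl]; fun_prop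
  · simp only [Sum.elim_inr]; fun_prop

theorem fiber_crit (Q : MvPolynomial (ι ⊕ κ) ℝ) (U : Set (ι ⊕ κ → ℝ)) (hU : IsOpen U)
    (z0 : ι → ℝ) (y0 : κ → ℝ) (s : ℝ) (hs : 0 < s)
    (hball : ∀ z, dist z z0 ≤ s → Sum.elim z y0 ∈ U)
    (hQ0 : eval (Sum.elim z0 y0) Q = 0)
    (hsph : ∀ z, dist z z0 = s → 0 < eval (Sum.elim z y0) Q) :
    ∃ ε > 0, ∀ (δ : ι → ℝ) (y : κ → ℝ), ‖δ‖ < ε → dist y y0 < ε →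
      ∃ z, Sum.elim z y ∈ U ∧ ∀ l, eval (Sum.elim z y) (pderiv (Sum.inl l) Q) = δ l := by
  let Θ : ((ι → ℝ) × (κ → ℝ)) → (ι → ℝ) → ℝ := fun a z =>
    eval (Sum.elim z a.2) Q - ∑ l, a.1 l * (z l - z0 l)
  have hcQ : Continuous (fun w : (ι → ℝ) × (κ → ℝ) => eval (Sum.elim w.1 w.2 : ι ⊕ κ → ℝ) Q) :=
    (MvPolynomial.continuous_eval Q).comp cont_elim
  have hΘ : Continuous (fun w : ((ι → ℝ) × (κ → ℝ)) × (ι → ℝ) => Θ w.1 w.2) := by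
    have a1 : Continuous (fun w : ((ι → ℝ) × (κ → ℝ)) × (ι → ℝ) => (w.2, w.1.2)) := by fun_prop
    have a2 : Continuous (fun w : ((ι → ℝ) × (κ → ℝ)) × (ι → ℝ) =>
        eval (Sum.elim w.2 w.1.2 : ι ⊕ κ → ℝ) Q) := 
        Continuous.comp (g := fun w : (ι → ℝ) × (κ → ℝ) => eval (Sum.elim w.1 w.2 : ι ⊕ κ → ℝ) Q)
          (f := fun w : ((ι → ℝ) × (κ → ℝ)) × (ι → ℝ) => (w.2, w.1.2)) hcQ a1
    have a3 : Continuous (fun w : ((ι → ℝ) × (κ → ℝ)) × (ι → ℝ) => ∑ l, w.1.1 l * (w.2 l - z0 l)) := by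
      fun_prop
    exact a2.sub a3
  have e1 : ∀ᶠ a in 𝓝 ((0 : ι → ℝ), y0), ∀ z ∈ Metric.sphere z0 s, Θ a z0 < Θ a z := by
    apply (isCompact_sphere z0 s).eventually_forall_of_forall_eventually
    intro z hz
    have hc1 : Continuous (fun w : ((ι → ℝ) × (κ → ℝ)) × (ι → ℝ) => Θ w.1 z0) :=
      Continuous.comp (f := fun w : ((ι → ℝ) × (κ → ℝ)) × (ι → ℝ) => (w.1, z0)) hΘ (by fun_prop)
    apply hc1.continuousAt.eventually_lt hΘ.continuousAt
    simp only [Θ]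
    simpa [hQ0] using hsph z hz
  have e2 : ∀ᶠ a in 𝓝 ((0 : ι → ℝ), y0), ∀ z ∈ Metric.closedBall z0 s, Sum.elim z a.2 ∈ U := by
    apply (isCompact_closedBall z0 s).eventually_forall_of_forall_eventually
    intro z hz
    have hc : Continuous (fun w : ((ι → ℝ) × (κ → ℝ)) × (ι → ℝ) => (Sum.elim w.2 w.1.2 : ι ⊕ κ → ℝ)) :=
      Continuous.comp (f := fun w : ((ι → ℝ) × (κ → ℝ)) × (ι → ℝ) => (w.2, w.1.2)) cont_elim (by fun_prop)
    exact hc.continuousAt.eventually_mem (hU.mem_nhds (hball z hz))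
  obtain ⟨ε, hε, H⟩ := Metric.eventually_nhds_iff.1 (e1.and e2)
  refine ⟨ε, hε, fun δ y hδ hy => ?_⟩
  obtain ⟨h1, h2⟩ := H (y := (δ, y)) (by
    rw [Prod.dist_eq]; simp only [max_lt_iff, dist_zero_right]; exact ⟨hδ, hy⟩)
  have hcz : Continuous (Θ (δ, y)) := 
    Continuous.comp (f := fun z : ι → ℝ => ((δ, y), z)) hΘ (by fun_prop)
  obtain ⟨z, hz, hmin⟩ := (isCompact_closedBall z0 s).exists_isMinOn ⟨z0, by simp [hs.le]⟩ hcz.continuousOn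
  refine ⟨z, h2 z hz, ?_⟩
  have hz' : z ∈ Metric.ball z0 s := by
    rw [Metric.mem_ball]
    refine lt_of_le_of_ne hz (fun h => ?_)
    have a1 := h1 z h
    have a2 := hmin (show z0 ∈ Metric.closedBall z0 s by simp [hs.le])
    exact absurd a1 (not_lt.2 a2)
  have hloc : IsLocalMin (Θ (δ, y)) z := hmin.isLocalMin (Filter.mem_of_superset (Metric.isOpen_ball.mem_nhds hz') Metric.ball_subset_closedBall)
  let J' : (ι → ℝ) →L[ℝ] (ι ⊕ κ → ℝ) := ContinuousLinearMap.pi (fun i => Sum.casesOn i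
    (fun l => ContinuousLinearMap.proj (R := ℝ) (φ := fun _ : ι => ℝ) l) (fun _ => 0))
  have hJ : HasFDerivAt (fun z : ι → ℝ => (Sum.elim z y : ι ⊕ κ → ℝ)) J' z := by
    rw [hasFDerivAt_pi']
    intro i
    rcases i with i | i
    · exact hasFDerivAt_apply i z
    · exact hasFDerivAt_const _ _
  have hQ := (hasStrict Q (Sum.elim z y)).hasFDerivAt.comp z hJ
  let lin : (ι → ℝ) →L[ℝ] ℝ := ∑ l, δ l • ContinuousLinearMap.proj (R := ℝ) (φ := fun _ : ι => ℝ) l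
  have hl : HasFDerivAt (fun z : ι → ℝ => ∑ l, δ l * (z l - z0 l)) lin z := by
    apply HasFDerivAt.fun_sum
    intro l _
    exact ((hasFDerivAt_apply (𝕜 := ℝ) l z).sub_const (z0 l)).const_mul (δ l)
  have h0 := hloc.hasFDerivAt_eq_zero (hQ.sub hl)
  intro l
  have := congrArg (fun φ => φ (Pi.single l 1)) h0
  simp only [sub_apply, ContinuousLinearMap.comp_apply, dE_apply, lin, zero_apply, Fintype.sum_sum_type, sum_apply, smul_apply, ContinuousLinearMap.proj_apply, J', ContinuousLinearMap.pi_apply] at this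
  simp [Pi.single_apply] at this
  linarith

end fiber
end GPP

namespace GPP
open MvPolynomial Filter Topology MeasureTheory

section sys
set_option linter.unusedSectionVars false
variable {ι κ : Type} [Fintype ι] [Fintype κ] [DecidableEq ι] [DecidableEq κ]

noncomputable def gg (Q : MvPolynomial (ι ⊕ κ) ℝ) (l : ι) : MvPolynomial (ι ⊕ κ) ℝ := pderiv (Sum.inl l) Q

noncomputable def hes (Q : MvPolynomial (ι ⊕ κ) ℝ) : MvPolynomial (ι ⊕ κ) ℝ :=
  (Matrix.of fun l l' => pderiv (Sum.inl l') (gg Q l)).det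

noncomputable def sys1 (Q : MvPolynomial (ι ⊕ κ) ℝ) : ι ⊕ κ → MvPolynomial (ι ⊕ κ) ℝ :=
  Sum.elim (gg Q) (fun i => X (Sum.inr i))

lemma eval_hes (Q : MvPolynomial (ι ⊕ κ) ℝ) (x : ι ⊕ κ → ℝ) :
    eval x (hes Q) = (Matrix.of fun l l' => eval x (pderiv (Sum.inl l') (gg Q l))).det := by
  rw [hes, RingHom.map_det]
  rfl

lemma det_sys1 (Q : MvPolynomial (ι ⊕ κ) ℝ) (x : ι ⊕ κ → ℝ) :
    (jac (sys1 Q) x).det = eval x (hes Q) := by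
  rw [eval_hes]
  have : jac (sys1 Q) x = Matrix.fromBlocks (Matrix.of fun l l' => eval x (pderiv (Sum.inl l') (gg Q l)))
      (Matrix.of fun l i => eval x (pderiv (Sum.inr i) (gg Q l))) 0 1 := by
    ext a b
    rcases a with a | a <;> rcases b with b | b
    · simp [jac, sys1]
    · simp [jac, sys1]
    · simp [jac, sys1]
    · simp [jac, sys1, pderiv_X, Matrix.one_apply, Pi.single_apply]
  rw [this, Matrix.det_fromBlocks_zero₂₁]
  simp

lemma totalDegree_hes (Q : MvPolynomial (ι ⊕ κ) ℝ) (e : ℕ) (h : Q.totalDegree ≤ e) :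
    (hes Q).totalDegree ≤ Fintype.card ι * e := by
  rw [hes, Matrix.det_apply]
  apply totalDegree_finsetSum_le
  intro σ _
  refine le_trans ?_ (c := Fintype.card ι * e) (b := (∏ i, (Matrix.of fun l l' => pderiv (Sum.inl l') (gg Q l)) (σ i) i).totalDegree) ?_
  · rcases Int.units_eq_one_or (Equiv.Perm.sign σ) with h1 | h1 <;> simp [h1]
  · refine (totalDegree_finsetProd _ _).trans ?_
    refine (Finset.sum_le_card_nsmul _ _ e ?_).trans ?_
    · intro i _
      simp only [Matrix.of_apply, gg]
      exact (totalDegree_pderiv _ _).trans ((totalDegree_pderiv _ _).trans h)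
    · simp

lemma lagrange (Q ψ : MvPolynomial (ι ⊕ κ) ℝ) (q : ι ⊕ κ → ℝ)
    (hloc : IsLocalMaxOn (fun x => eval x ψ) {x | ∀ l, eval x (gg Q l) = eval q (gg Q l)} q)
    (hh : eval q (hes Q) ≠ 0) :
    ∃ lam : ι → ℝ, ∀ c, eval q (pderiv c ψ) = ∑ l, lam l * eval q (pderiv c (gg Q l)) := by
  have hloc' : IsLocalExtrOn (fun x => eval x ψ) {x | ∀ l, eval x (gg Q l) = eval q (gg Q l)} q := Or.inr hloc
  obtain ⟨Λ, Λ0, hne, hsum⟩ := IsLocalExtrOn.exists_multipliers_of_hasStrictFDerivAt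
    (f := fun l x => eval x (gg Q l)) hloc' (fun l => hasStrict (gg Q l) q) (hasStrict ψ q)
  have hc : ∀ c, ∑ l, Λ l * eval q (pderiv c (gg Q l)) + Λ0 * eval q (pderiv c ψ) = 0 := by
    intro c
    have := congrArg (fun φ => φ (Pi.single c 1)) hsum
    simpa [dE_apply, Pi.single_apply] using this
  have h0 : Λ0 ≠ 0 := by
    intro h0
    apply hne
    rw [h0]
    rw [eval_hes] at hh
    have hv : Matrix.vecMul Λ (Matrix.of fun l l' => eval q (pderiv (Sum.inl l') (gg Q l))) = 0 := by
      funext l'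
      have := hc (Sum.inl l')
      rw [h0] at this
      simpa [Matrix.vecMul, dotProduct] using this
    have := Matrix.eq_zero_of_vecMul_eq_zero hh hv
    rw [this]; rfl
  refine ⟨fun l => - Λ l / Λ0, fun c => ?_⟩
  have := hc c
  rw [← mul_right_inj' h0, Finset.mul_sum]
  have e : ∀ l, Λ0 * (-Λ l / Λ0 * eval q (pderiv c (gg Q l))) = - (Λ l * eval q (pderiv c (gg Q l))) := by
    intro l; field_simp
  simp only [e, Finset.sum_neg_distrib]
  linarith

abbrev OM (ι κ : Type) := ι ⊕ (ι ⊕ κ)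

noncomputable def sys2 (Q Φ : MvPolynomial (ι ⊕ κ) ℝ) : OM ι κ → MvPolynomial (OM ι κ) ℝ :=
  Sum.elim (fun l => rename Sum.inr (gg Q l))
    (fun c => rename Sum.inr (pderiv c Φ) - ∑ l, X (Sum.inl l) * rename Sum.inr (pderiv c (gg Q l)))

noncomputable def sys3 (Q Φ : MvPolynomial (ι ⊕ κ) ℝ) (δ : ι → ℝ) (u : ι ⊕ κ → ℝ) : OM ι κ → MvPolynomial (OM ι κ) ℝ :=
  fun a => sys2 Q Φ a - C (Sum.elim δ u a)

lemma jac_sys3 (Q Φ : MvPolynomial (ι ⊕ κ) ℝ) (δ : ι → ℝ) (u : ι ⊕ κ → ℝ) (x) :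
    jac (sys3 Q Φ δ u) x = jac (sys2 Q Φ) x := by
  ext a b
  simp [jac, sys3]

lemma crit_open (Q Φ : MvPolynomial (ι ⊕ κ) ℝ) (δ : ι → ℝ) (u : ι ⊕ κ → ℝ)
    (hreg : ∀ x, (∀ i, eval x (sys2 Q Φ (Sum.inl i)) = δ i) →
      (∀ i, eval x (sys2 Q Φ (Sum.inr i)) = u i) → (jac (sys2 Q Φ) x).det ≠ 0)
    (q : ι ⊕ κ → ℝ) (hq : ∀ l, eval q (gg Q l) = δ l)
    (hloc : IsLocalMaxOn (fun x => eval x Φ - ∑ c, u c * x c) {x | ∀ l, eval x (gg Q l) = δ l} q)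
    (hh : eval q (hes Q) ≠ 0) :
    ∃ lam : ι → ℝ, 𝓝 (0 : OM ι κ → ℝ) ≤ map (fun x i => eval x (sys3 Q Φ δ u i)) (𝓝 (Sum.elim lam q)) := by
  let ψ := Φ - ∑ c, C (u c) * X c
  obtain ⟨lam, hlam⟩ := lagrange Q ψ q (by
    simp only [hq]
    convert hloc using 2
    simp [ψ]) hh
  have hψ : ∀ c, pderiv c ψ = pderiv c Φ - C (u c) := by
    intro c
    simp only [ψ, map_sub, map_sum, pderiv_C_mul, pderiv_X]
    rw [Finset.sum_eq_single c]
    · simp [smul_eq_C_mul]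
    · intro b _ hb; simp [Pi.single_apply, hb]
    · simp
  have hr : ∀ p : MvPolynomial (ι ⊕ κ) ℝ, eval (Sum.elim lam q) (rename Sum.inr p) = eval q p := by
    intro p; rw [eval_rename]; rfl
  have h1 : ∀ i, eval (Sum.elim lam q) (sys2 Q Φ (Sum.inl i)) = δ i := by
    intro i; simp only [sys2, Sum.elim_inl, hr, hq]
  have h2 : ∀ i, eval (Sum.elim lam q) (sys2 Q Φ (Sum.inr i)) = u i := by
    intro i
    have := hlam i
    rw [hψ] at this
    simp only [map_sub, eval_C] at this
    simp only [sys2, Sum.elim_inr, map_sub, hr, map_sum, map_mul, eval_X, Sum.elim_inl]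
    linarith
  refine ⟨lam, ?_⟩
  have h3 := jac_open (sys3 Q Φ δ u) (Sum.elim lam q) (by rw [jac_sys3]; exact hreg _ h1 h2)
  have h4 : evs (sys3 Q Φ δ u) (Sum.elim lam q) = 0 := by
    funext a
    rcases a with a | a
    · simp [evs, sys3, h1]
    · simp [evs, sys3, h2]
  rw [h4] at h3
  exact h3

end sys
end GPP

namespace GPP
open MvPolynomial Filter Topology MeasureTheory

section cl
set_option linter.unusedSectionVars false
variable {ι κ : Type} [Fintype ι] [Fintype κ] [DecidableEq ι] [DecidableEq κ]

lemma degreeOf_inl_rename {α β : Type} (p : MvPolynomial β ℝ) (l : α) :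
    degreeOf (Sum.inl l : α ⊕ β) (rename Sum.inr p) = 0 := by
  classical
  by_contra h
  have := vars_rename (Sum.inr : β → α ⊕ β) p ((mem_vars_iff_degreeOf_ne_zero).2 h)
  simp at this

lemma degreeOf_inr_rename {α β : Type} (p : MvPolynomial β ℝ) (l : β) :
    degreeOf (Sum.inr l : α ⊕ β) (rename Sum.inr p) ≤ p.totalDegree := by
  rw [degreeOf_rename_of_injective Sum.inr_injective]
  exact degreeOf_le_totalDegree _ _

lemma sub_C_deg {σ : Type} (p : MvPolynomial σ ℝ) (a : ℝ) (i : σ) : (p - C a).degreeOf i ≤ p.degreeOf i :=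
  (degreeOf_sub_le i p (C a)).trans (by simp [degreeOf_C])

noncomputable def sepQ {N : ℕ} {τ : Type} [Fintype τ] (q : Fin N → (τ → ℝ)) (n : Fin N) : MvPolynomial τ ℝ :=
  ∏ n' ∈ Finset.univ.erase n, ∑ c, (X c - C (q n' c)) ^ 2

lemma eval_sepQ {N : ℕ} {τ : Type} [Fintype τ] (q : Fin N → (τ → ℝ)) (n : Fin N) (x) :
    eval x (sepQ q n) = ∏ n' ∈ Finset.univ.erase n, ∑ c, (x c - q n' c) ^ 2 := by
  simp [sepQ]

lemma deg_sepQ {N : ℕ} {τ : Type} [Fintype τ] (q : Fin N → (τ → ℝ)) (n : Fin N) :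
    (sepQ q n).totalDegree ≤ 2 * N := by
  refine (totalDegree_finsetProd _ _).trans ?_
  refine (Finset.sum_le_card_nsmul _ _ 2 ?_).trans ?_
  · intro n' _
    apply totalDegree_finsetSum_le
    intro c _
    refine (totalDegree_pow _ _).trans ?_
    have := totalDegree_sub_C_le (X c : MvPolynomial τ ℝ) (q n' c)
    rw [totalDegree_X] at this
    omega
  · have : (Finset.univ.erase n).card ≤ N := (Finset.card_le_univ _).trans (by simp)
    simp; omega

lemma bez_crit (Q Φ : MvPolynomial (ι ⊕ κ) ℝ) (δ : ι → ℝ) (u : ι ⊕ κ → ℝ) (e f D N : ℕ) (hD : 1 ≤ D)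
    (hQ : Q.totalDegree ≤ e) (hΦ : Φ.totalDegree ≤ D * f) (q : Fin N → (ι ⊕ κ → ℝ))
    (hq : Function.Injective q) (lam : Fin N → (ι → ℝ))
    (hopen : ∀ n, 𝓝 0 ≤ map (fun x i => eval x (sys3 Q Φ δ u i)) (𝓝 (Sum.elim (lam n) (q n)))) :
    N ≤ ((Fintype.card (ι ⊕ κ) + 1) ^ Fintype.card ι *
      (Fintype.card ι * e + Fintype.card (ι ⊕ κ) * (f + e) + 2) ^ Fintype.card (ι ⊕ κ)) * D ^ Fintype.card κ := by
  have hd1 : ∀ l a, (sys3 Q Φ δ u (Sum.inl l)).degreeOf (Sum.inl a) = 0 := by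
    intro l a
    refine Nat.le_zero.1 ((sub_C_deg _ _ _).trans ?_)
    simp [sys2, degreeOf_inl_rename]
  have hg : ∀ l, (gg Q l).totalDegree ≤ e := fun l => (totalDegree_pderiv _ _).trans hQ
  have hd2 : ∀ l a, (sys3 Q Φ δ u (Sum.inl l)).degreeOf (Sum.inr a) ≤ e := by
    intro l a
    refine ((sub_C_deg _ _ _).trans ?_)
    simp only [sys2, Sum.elim_inl]
    exact (degreeOf_inr_rename _ _).trans (hg l)
  have hd3 : ∀ c a, (sys3 Q Φ δ u (Sum.inr c)).degreeOf (Sum.inl a) ≤ 1 := by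
    intro c a
    refine ((sub_C_deg _ _ _).trans ?_)
    simp only [sys2, Sum.elim_inr]
    refine (degreeOf_sub_le _ _ _).trans (max_le (by simp [degreeOf_inl_rename]) ?_)
    refine (degreeOf_sum_le _ _ _).trans (Finset.sup_le fun l _ => ?_)
    refine (degreeOf_mul_le _ _ _).trans ?_
    rw [degreeOf_inl_rename, degreeOf_X]
    split_ifs <;> simp
  have hd4 : ∀ c a, (sys3 Q Φ δ u (Sum.inr c)).degreeOf (Sum.inr a) ≤ D * (f + e) := by
    intro c a
    refine ((sub_C_deg _ _ _).trans ?_)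
    simp only [sys2, Sum.elim_inr]
    refine (degreeOf_sub_le _ _ _).trans (max_le ?_ ?_)
    · refine (degreeOf_inr_rename _ _).trans ((totalDegree_pderiv _ _).trans (hΦ.trans ?_))
      gcongr; omega
    refine (degreeOf_sum_le _ _ _).trans (Finset.sup_le fun l _ => ?_)
    refine (degreeOf_mul_le _ _ _).trans ?_
    rw [degreeOf_X, if_neg (by simp), zero_add]
    refine (degreeOf_inr_rename _ _).trans ((totalDegree_pderiv _ _).trans ((hg l).trans ?_))
    nlinarith
  set m := Fintype.card ι
  set d := Fintype.card (ι ⊕ κ) with hd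
  have hdm : d = m + Fintype.card κ := by simp [hd, m]
  have key := bez_count (sys3 Q Φ δ u) (fun n => (Sum.elim (lam n) (q n) : OM ι κ → ℝ)) hopen
    (fun n => rename Sum.inr (sepQ q n)) (by
      intro n
      have : ((Sum.elim (lam n) (q n) : ι ⊕ (ι ⊕ κ) → ℝ) ∘ Sum.inr) = q n := by funext i; rfl
      rw [eval_rename, this, eval_sepQ]
      rw [Finset.prod_ne_zero_iff]
      intro n' hn' h0
      apply (Finset.mem_erase.1 hn').1
      apply hq
      funext c
      have := (Finset.sum_eq_zero_iff_of_nonneg (fun c _ => sq_nonneg _)).1 h0 c (Finset.mem_univ _)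
      have := pow_eq_zero_iff (two_ne_zero) |>.1 this
      linarith) (by
      intro n n' hn
      have : ((Sum.elim (lam n) (q n) : ι ⊕ (ι ⊕ κ) → ℝ) ∘ Sum.inr) = q n := by funext i; rfl
      rw [eval_rename, this, eval_sepQ]
      apply Finset.prod_eq_zero (i := n) (by simp [hn.symm])
      simp) (Sum.elim (fun _ => D * (N + 1)) (fun _ => N + 1))
      (Sum.elim (fun _ => d * (N + 1)) (fun _ => m * (D * (N + 1) * e) + d * ((N + 1) * (D * (f + e))) + 2 * N))
      (by
        intro n j
        change (∑ i : ι ⊕ (ι ⊕ κ), _) + _ ≤ _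
        rw [Fintype.sum_sum_type]
        rcases j with j | j
        · simp only [Sum.elim_inl, Sum.elim_inr, hd1, degreeOf_inl_rename]
          simp only [mul_zero, Finset.sum_const_zero, zero_add, add_zero]
          refine (Finset.sum_le_card_nsmul _ _ (N+1) ?_).trans ?_
          · intro c _
            exact (Nat.mul_le_mul_left _ (hd3 c j)).trans (by simp)
          · simp [hd]
        · simp only [Sum.elim_inl, Sum.elim_inr]
          refine add_le_add (add_le_add ?_ ?_) ((degreeOf_inr_rename _ _).trans (deg_sepQ _ _))
          · refine (Finset.sum_le_card_nsmul _ _ (D * (N+1) * e) ?_).trans ?_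
            · intro c _
              exact Nat.mul_le_mul_left _ (hd2 c j)
            · simp [m]
          · refine (Finset.sum_le_card_nsmul _ _ ((N+1) * (D * (f+e))) ?_).trans ?_
            · intro c _
              exact Nat.mul_le_mul_left _ (hd4 c j)
            · simp [hd])
  have key : N * ∏ i : ι ⊕ (ι ⊕ κ), _ ≤ ∏ j : ι ⊕ (ι ⊕ κ), _ := key
  simp only [Fintype.prod_sum_type, Sum.elim_inl, Sum.elim_inr, Finset.prod_const, Finset.card_univ] at key
  change N * ((D * (N+1)) ^ m * (N+1) ^ d) ≤ (d * (N+1) + 1) ^ m * (_) ^ d at key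
  set k1 := m * e + d * (f + e) + 2 with hk1
  have b1 : d * (N+1) + 1 ≤ (d+1) * (N+1) := by nlinarith
  have b2 : m * (D * (N + 1) * e) + d * ((N + 1) * (D * (f + e))) + 2 * N + 1 ≤ k1 * (D * (N + 1)) := by
    have : k1 * (D * (N + 1)) = m * (D * (N + 1) * e) + d * ((N + 1) * (D * (f + e))) + 2 * (D * (N+1)) := by
      rw [hk1]; ring
    rw [this]
    nlinarith
  have k2 : N * ((D * (N+1)) ^ m * (N+1) ^ d) ≤ ((d+1) * (N+1)) ^ m * (k1 * (D * (N + 1))) ^ d :=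
    key.trans (Nat.mul_le_mul (Nat.pow_le_pow_left b1 _) (Nat.pow_le_pow_left b2 _))
  have k3 : (N) * ((N+1)^m * (N+1)^d * D^m) ≤ ((d+1)^m * k1^d * D ^ Fintype.card κ) * ((N+1)^m * (N+1)^d * D^m) := by
    calc _ = N * ((D * (N+1)) ^ m * (N+1) ^ d) := by rw [mul_pow]; ring
      _ ≤ _ := k2
      _ = _ := by
        have : D ^ d = D ^ m * D ^ Fintype.card κ := by rw [hdm, pow_add]
        rw [mul_pow, mul_pow, mul_pow, this]; ring
  exact Nat.le_of_mul_le_mul_right k3 (by positivity)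

end cl
end GPP

namespace GPP
open MvPolynomial Filter Topology MeasureTheory

section cl
set_option linter.unusedSectionVars false
variable {ι κ : Type} [Fintype ι] [Fintype κ] [DecidableEq ι] [DecidableEq κ]

def bigB (m r e : ℕ) : ℕ := (m + r + 1) ^ m * (m * e + (m + r) * (1 + 2 * (m * e) + e) + 2) ^ (m + r)

lemma ae_near {α : Type} [Fintype α] {p : (α → ℝ) → Prop} (h : ∀ᵐ x, p x) {q : (α → ℝ) → Prop} (x0 : α → ℝ)
    (hq : ∀ᶠ x in 𝓝 x0, q x) : ∃ x, p x ∧ q x := by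
  have hd : Dense {x | p x} := Measure.dense_of_ae h
  obtain ⟨x, h1, h2⟩ := mem_closure_iff_nhds.1 (hd x0) _ hq
  exact ⟨x, h2, h1⟩

theorem counting (Q Φ0 : MvPolynomial (ι ⊕ κ) ℝ) (e D N : ℕ) (hD : 1 ≤ D)
    (hQ : Q.totalDegree ≤ e) (hΦ0 : Φ0.totalDegree ≤ D) (Cs : Fin N → Set (ι ⊕ κ → ℝ))
    (ho : ∀ n, IsOpen (Cs n)) (hb : ∀ n, Bornology.IsBounded (Cs n))
    (hdis : ∀ n n', n ≠ n' → Disjoint (Cs n) (Cs n'))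
    (hpos : ∀ n, ∀ x ∈ Cs n, 0 < eval x Φ0)
    (hfr : ∀ n, ∀ x ∈ closure (Cs n), x ∉ Cs n → eval x Φ0 = 0)
    (z0 : Fin N → ι → ℝ) (y0 : Fin N → κ → ℝ) (s : Fin N → ℝ) (hs : ∀ n, 0 < s n)
    (hball : ∀ n z, dist z (z0 n) ≤ s n → Sum.elim z (y0 n) ∈ Cs n)
    (hQ0 : ∀ n, eval (Sum.elim (z0 n) (y0 n)) Q = 0)
    (hsph : ∀ n z, dist z (z0 n) = s n → 0 < eval (Sum.elim z (y0 n)) Q) :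
    N ≤ bigB (Fintype.card ι) (Fintype.card κ) e * D ^ Fintype.card κ := by
  have hfib := fun n => fiber_crit Q (Cs n) (ho n) (z0 n) (y0 n) (s n) (hs n) (hball n) (hQ0 n) (hsph n)
  choose ε hε hfib using hfib
  set Φ := Φ0 * (hes Q) ^ 2 with hΦ
  obtain ⟨δ, ⟨hδ1, hδ2⟩, hδ⟩ := ae_near ((sard (sys1 Q)).and (sard (sys2 Q Φ))) (q := fun δ => ∀ n, ‖δ‖ < ε n) 0 (by
    rw [eventually_all]
    intro n
    have : Continuous (fun δ : ι → ℝ => ‖δ‖) := continuous_norm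
    exact this.continuousAt.eventually_lt continuousAt_const (by simpa using hε n))
  have hx1 : ∀ n, ∃ x ∈ Cs n, (∀ l, eval x (gg Q l) = δ l) ∧ 0 < eval x Φ := by
    intro n
    obtain ⟨y, hy, hyd⟩ := ae_near hδ1 (q := fun y => dist y (y0 n) < ε n) (y0 n) (Metric.ball_mem_nhds _ (hε n))
    obtain ⟨z, hz, hzl⟩ := hfib n δ y (hδ n) hyd
    refine ⟨_, hz, hzl, ?_⟩
    have hh : eval (Sum.elim z y) (hes Q) ≠ 0 := by
      rw [← det_sys1]
      apply hy
      · intro i; exact hzl i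
      · intro i; simp [sys1]
    rw [hΦ]
    simp only [map_mul, map_pow]
    have := hpos n _ hz
    positivity
  choose x1 hx1C hx1g hx1Φ using hx1
  have hcl : ∀ n, IsCompact (closure (Cs n)) := fun n => (hb n).isCompact_closure
  obtain ⟨u, hu1, hu⟩ := ae_near hδ2 (q := fun u => ∀ n, ∀ x ∈ closure (Cs n), |∑ c, u c * x c| < eval (x1 n) Φ / 2) 0 (by
    rw [eventually_all]
    intro n
    apply (hcl n).eventually_forall_of_forall_eventually
    intro x _
    have hc : Continuous (fun w : (ι ⊕ κ → ℝ) × (ι ⊕ κ → ℝ) => |∑ c, w.1 c * w.2 c|) := by fun_prop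
    apply hc.continuousAt.eventually_lt continuousAt_const
    simpa using hx1Φ n)
  have hq : ∀ n, ∃ q ∈ Cs n, (∀ l, eval q (gg Q l) = δ l) ∧ eval q (hes Q) ≠ 0 ∧
      IsLocalMaxOn (fun x => eval x Φ - ∑ c, u c * x c) {x | ∀ l, eval x (gg Q l) = δ l} q := by
    intro n
    have hclosed : IsClosed {x : ι ⊕ κ → ℝ | ∀ l, eval x (gg Q l) = δ l} := by
      simp only [Set.ofPred_forall]
      exact isClosed_iInter fun l => isClosed_eq (MvPolynomial.continuous_eval _) continuous_const
    have hcont : Continuous (fun x : ι ⊕ κ → ℝ => eval x Φ - ∑ c, u c * x c) :=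
      (MvPolynomial.continuous_eval Φ).sub (by fun_prop)
    obtain ⟨q, ⟨hqC, hqg⟩, hmax⟩ := ((hcl n).inter_right hclosed).exists_isMaxOn
      ⟨x1 n, subset_closure (hx1C n), hx1g n⟩ hcont.continuousOn
    have hqΦ : 0 < eval q Φ := by
      have a1 : eval (x1 n) Φ - ∑ c, u c * x1 n c ≤ eval q Φ - ∑ c, u c * q c :=
        hmax ⟨subset_closure (hx1C n), hx1g n⟩
      have a2 := abs_lt.1 (hu n _ (subset_closure (hx1C n)))
      have a3 := abs_lt.1 (hu n _ hqC)
      linarith [a2.1, a2.2, a3.1, a3.2]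
    have e1 : eval q Φ = eval q Φ0 * eval q (hes Q) ^ 2 := by rw [hΦ]; simp
    have hqC' : q ∈ Cs n := by
      by_contra h
      rw [e1, hfr n q hqC h] at hqΦ
      simp at hqΦ
    refine ⟨q, hqC', hqg, ?_, ?_⟩
    · intro h
      rw [e1, h] at hqΦ
      simp at hqΦ
    · have : ∀ᶠ x in 𝓝[{x | ∀ l, eval x (gg Q l) = δ l}] q, x ∈ Cs n :=
        mem_nhdsWithin_of_mem_nhds ((ho n).mem_nhds hqC')
      filter_upwards [this, self_mem_nhdsWithin] with x hx hx'
      exact hmax ⟨subset_closure hx, hx'⟩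
  choose q hqC hqg hqh hqm using hq
  have hl := fun n => crit_open Q Φ δ u hu1 (q n) (hqg n) (hqm n) (hqh n)
  choose lam hlam using hl
  have hinj : Function.Injective q := by
    intro n n' h
    by_contra hne
    exact Set.disjoint_left.1 (hdis n n' hne) (hqC n) (h ▸ hqC n')
  have := bez_crit Q Φ δ u e (1 + 2 * (Fintype.card ι * e)) D N hD hQ (by
    rw [hΦ]
    refine (totalDegree_mul _ _).trans ?_
    have h1 := totalDegree_pow (hes Q) 2
    have h2 := totalDegree_hes Q e hQ
    nlinarith [Nat.zero_le (Fintype.card ι * e)]) q hinj lam hlam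
  rw [bigB]
  simpa using this

end cl
end GPP

namespace GPP
open MvPolynomial Filter Topology MeasureTheory

section shear
set_option linter.unusedSectionVars false
variable {ι κ : Type} [Fintype ι] [Fintype κ] [DecidableEq ι] [DecidableEq κ]

/-- the incidence condition -/
def inc (x t : ι ⊕ κ → ℝ) (B : ι → κ → ℝ) : Prop :=
  ∀ i, t (Sum.inr i) - x (Sum.inr i) + ∑ l, B l i * (t (Sum.inl l) - x (Sum.inl l)) = 0

def shL (l : ι) : (Option κ → ℝ) →ₗ[ℝ] ((ι → κ → ℝ) × ℝ) where
  toFun g := (Pi.single l (fun i => g (some i)), g none)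
  map_add' a b := by
    ext l' i
    · by_cases h : l' = l
      · subst h; simp
      · simp [h]
    · simp
  map_smul' a b := by
    ext l' i
    · by_cases h : l' = l
      · subst h; simp
      · simp [h]
    · simp

lemma shear_null (K : Set (ι ⊕ κ → ℝ)) (x : ι ⊕ κ → ℝ) (l : ι)
    (hl : ∀ t ∈ K, t (Sum.inl l) - x (Sum.inl l) ≠ 0) (hdim : dimH K ≤ (Fintype.card κ : ENNReal))
    (B : (ι → κ → ℝ)) (s : ℝ) :
    ∀ᵐ g : Option κ → ℝ, (B, s) + shL l g ∈ {p : (ι → κ → ℝ) × ℝ | ∃ t ∈ K, inc x t p.1 ∧ |t (Sum.inl l) - x (Sum.inl l)| = p.2}ᶜ := by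
  let f : (ι ⊕ κ → ℝ) → (Option κ → ℝ) := fun t o => Option.casesOn o
    (|t (Sum.inl l) - x (Sum.inl l)| - s)
    (fun i => -(t (Sum.inr i) - x (Sum.inr i) + ∑ l', B l' i * (t (Sum.inl l') - x (Sum.inl l'))) / (t (Sum.inl l) - x (Sum.inl l)))
  have hf : ∀ t ∈ K, ContDiffAt ℝ 1 f t := by
    intro t ht
    rw [contDiffAt_pi]
    intro o
    rcases o with _ | i
    · change ContDiffAt ℝ 1 (fun t : ι ⊕ κ → ℝ => |t (Sum.inl l) - x (Sum.inl l)| - s) t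
      have h1 : ContDiffAt ℝ 1 (fun t : ι ⊕ κ → ℝ => t (Sum.inl l) - x (Sum.inl l)) t := by fun_prop
      exact (ContDiffAt.abs h1 (hl t ht)).sub contDiffAt_const
    · change ContDiffAt ℝ 1 (fun t : ι ⊕ κ → ℝ => -(t (Sum.inr i) - x (Sum.inr i) + ∑ l', B l' i * (t (Sum.inl l') - x (Sum.inl l'))) / (t (Sum.inl l) - x (Sum.inl l))) t
      exact ContDiffAt.div (by fun_prop) (by fun_prop) (hl t ht)
  have hdf : dimH (f '' K) ≤ (Fintype.card κ : ENNReal) := by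
    refine (dimH_image_le_of_locally_lipschitzOn ?_).trans hdim
    intro t ht
    obtain ⟨C, u, hu, hL⟩ := (hf t ht).exists_lipschitzOnWith
    exact ⟨C, u, mem_nhdsWithin_of_mem_nhds hu, hL⟩
  have h0 : volume (f '' K) = 0 := by
    apply measure_zero_of_dimH_lt (d := (Fintype.card (Option κ) : NNReal))
    · rw [← hausdorffMeasure_pi_real]
      exact Measure.AbsolutelyContinuous.refl _
    · refine hdf.trans_lt ?_
      rw [Fintype.card_option]
      norm_cast
      exact Nat.lt_succ_self _
  rw [ae_iff]
  refine measure_mono_null ?_ h0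
  intro g hg
  simp only [Set.mem_compl_iff, not_not] at hg
  obtain ⟨t, ht, hi, hs⟩ := hg
  refine ⟨t, ht, ?_⟩
  funext o
  rcases o with _ | i
  · change |t (Sum.inl l) - x (Sum.inl l)| - s = _
    rw [hs]
    simp [shL]
  · change -(t (Sum.inr i) - x (Sum.inr i) + ∑ l', B l' i * (t (Sum.inl l') - x (Sum.inl l'))) / (t (Sum.inl l) - x (Sum.inl l)) = _
    rw [div_eq_iff (hl t ht)]
    have := hi i
    have e : ∑ l', ((B, s) + shL l g).1 l' i * (t (Sum.inl l') - x (Sum.inl l')) =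
      ∑ l', B l' i * (t (Sum.inl l') - x (Sum.inl l')) + g (some i) * (t (Sum.inl l) - x (Sum.inl l)) := by
      simp only [shL, LinearMap.coe_mk, AddHom.coe_mk, Prod.fst_add, Pi.add_apply, add_mul, Finset.sum_add_distrib]
      congr 1
      rw [Finset.sum_eq_single l]
      · simp
      · intro b _ hb; simp [hb]
      · simp
    rw [e] at this
    linarith

lemma shear_closed (K : Set (ι ⊕ κ → ℝ)) (hK : IsCompact K) (x : ι ⊕ κ → ℝ) (l : ι) :
    IsClosed {p : (ι → κ → ℝ) × ℝ | ∃ t ∈ K, inc x t p.1 ∧ |t (Sum.inl l) - x (Sum.inl l)| = p.2} := by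
  have : CompactSpace K := isCompact_iff_compactSpace.1 hK
  have h := isClosedMap_snd_of_compactSpace (X := K) (Y := (ι → κ → ℝ) × ℝ)
  have hcc : ∀ a, Continuous (fun q : K × ((ι → κ → ℝ) × ℝ) => (q.1 : ι ⊕ κ → ℝ) a) := fun a =>
    (continuous_apply a).comp (continuous_subtype_val.comp continuous_fst)
  have hc : IsClosed {q : K × ((ι → κ → ℝ) × ℝ) | inc x q.1 q.2.1 ∧ |(q.1 : ι ⊕ κ → ℝ) (Sum.inl l) - x (Sum.inl l)| = q.2.2} := by
    rw [Set.ofPred_and]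
    apply IsClosed.inter
    · simp only [inc, Set.ofPred_forall]
      refine isClosed_iInter fun i => isClosed_eq ?_ continuous_const
      refine ((hcc _).sub continuous_const).add (continuous_finsetSum _ fun l' _ => Continuous.mul ?_ ((hcc _).sub continuous_const))
      fun_prop
    · exact isClosed_eq ((hcc _).sub continuous_const).abs (by fun_prop)
  convert h _ hc using 1
  ext p
  constructor
  · rintro ⟨t, ht, h⟩
    exact ⟨(⟨t, ht⟩, p), h, rfl⟩
  · rintro ⟨⟨t, p'⟩, h, rfl⟩
    exact ⟨t, t.2, h⟩

lemma shear_ae1 (K : Set (ι ⊕ κ → ℝ)) (hK : IsSigmaCompact K) (x : ι ⊕ κ → ℝ) (l : ι)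
    (hl : ∀ t ∈ K, t (Sum.inl l) - x (Sum.inl l) ≠ 0) (hdim : dimH K ≤ (Fintype.card κ : ENNReal)) :
    ∀ᵐ p : (ι → κ → ℝ) × ℝ, ∀ t ∈ K, inc x t p.1 → |t (Sum.inl l) - x (Sum.inl l)| ≠ p.2 := by
  obtain ⟨Ks, hc, rfl⟩ := hK
  have : ∀ n, ∀ᵐ p : (ι → κ → ℝ) × ℝ, p ∈ {p : (ι → κ → ℝ) × ℝ | ∃ t ∈ Ks n, inc x t p.1 ∧ |t (Sum.inl l) - x (Sum.inl l)| = p.2}ᶜ := by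
    intro n
    have : (volume : Measure ((ι → κ → ℝ) × ℝ)).IsAddHaarMeasure := by
      have : (volume : Measure (ι → κ → ℝ)).IsAddHaarMeasure :=
        Measure.pi.isAddHaarMeasure (fun _ : ι => (volume : Measure (κ → ℝ)))
      rw [Measure.volume_eq_prod]; infer_instance
    apply ae_mem_of_ae_add_linearMap_mem (shL l) volume volume
    · exact (shear_closed (Ks n) (hc n) x l).measurableSet.compl
    · rintro ⟨B, s⟩
      exact shear_null (Ks n) x l (fun t ht => hl t (Set.mem_iUnion.2 ⟨n, ht⟩))
        ((dimH_mono (Set.subset_iUnion _ n)).trans hdim) B s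
  filter_upwards [ae_all_iff.2 this] with p hp t ht hi hs
  obtain ⟨n, hn⟩ := Set.mem_iUnion.1 ht
  exact hp n ⟨t, hn, hi, hs⟩

lemma sigmaCompact_inter {E : Type} [MetricSpace E] [SigmaCompactSpace E] (F O : Set E) (hF : IsClosed F) (hO : IsOpen O) :
    IsSigmaCompact (F ∩ O) := by
  obtain ⟨G, hG, -, hU, -⟩ := hO.exists_iUnion_isClosed
  rw [← hU, Set.inter_iUnion]
  exact isSigmaCompact_iUnion _ fun n => IsSigmaCompact.of_isClosed_subset isSigmaCompact_univ (hF.inter (hG n)) (Set.subset_univ _)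

theorem shear_ae (F O : Set (ι ⊕ κ → ℝ)) (hF : IsClosed F) (hO : IsOpen O) (x : ι ⊕ κ → ℝ)
    (hdim : dimH (F ∩ O) ≤ (Fintype.card κ : ENNReal)) :
    ∀ᵐ B : (ι → κ → ℝ), ∀ᵐ s : ℝ, 0 < s → ∀ t ∈ F ∩ O, inc x t B → dist (fun l => t (Sum.inl l)) (fun l => x (Sum.inl l)) ≠ s := by
  have h1 : ∀ l, ∀ᵐ p : (ι → κ → ℝ) × ℝ, ∀ t ∈ F ∩ (O ∩ {t | t (Sum.inl l) - x (Sum.inl l) ≠ 0}), inc x t p.1 → |t (Sum.inl l) - x (Sum.inl l)| ≠ p.2 := by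
    intro l
    have ho : IsOpen {t : ι ⊕ κ → ℝ | t (Sum.inl l) - x (Sum.inl l) ≠ 0} :=
      isOpen_ne_fun (by fun_prop) continuous_const
    apply shear_ae1 _ (sigmaCompact_inter _ _ hF (hO.inter ho)) x l
    · intro t ht; exact ht.2.2
    · exact (dimH_mono (by intro t ht; exact ⟨ht.1, ht.2.1⟩)).trans hdim
  have h2 := ae_all_iff.2 h1
  rw [Measure.volume_eq_prod] at h2
  have h3 := Measure.ae_ae_of_ae_prod h2
  filter_upwards [h3] with B hB
  filter_upwards [hB] with s hs hs0 t ht hi hd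
  obtain ⟨l, hl⟩ : ∃ l, dist (t (Sum.inl l)) (x (Sum.inl l)) = s := by
    by_contra hcon
    push Not at hcon
    have : dist (fun l => t (Sum.inl l)) (fun l => x (Sum.inl l)) < s := by
      rw [dist_pi_lt_iff hs0]
      intro l
      refine lt_of_le_of_ne ?_ (hcon l)
      rw [← hd]
      exact dist_le_pi_dist (fun l => t (Sum.inl l)) (fun l => x (Sum.inl l)) l
    exact absurd hd this.ne
  rw [Real.dist_eq] at hl
  refine hs l t ⟨ht.1, ht.2, ?_⟩ hi hl
  intro h0
  rw [h0] at hl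
  simp at hl; linarith

end shear
end GPP

namespace GPP
open MvPolynomial Filter Topology MeasureTheory

lemma totalDegree_aeval_le {σ τ : Type} [Fintype σ] (g : σ → MvPolynomial τ ℝ) (hg : ∀ i, (g i).totalDegree ≤ 1)
    (p : MvPolynomial σ ℝ) : (aeval g p).totalDegree ≤ p.totalDegree := by
  rw [aeval_def, eval₂_eq']
  apply totalDegree_finsetSum_le
  intro d hd
  refine (totalDegree_mul _ _).trans ?_
  have h1 : (algebraMap ℝ (MvPolynomial τ ℝ) (coeff d p)).totalDegree = 0 := totalDegree_C _
  rw [h1, zero_add]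
  refine (totalDegree_finsetProd _ _).trans ?_
  have h2 : ∑ i, d i ≤ p.totalDegree := by
    have := le_totalDegree hd
    rwa [Finsupp.sum_fintype _ _ (by simp)] at this
  refine le_trans (Finset.sum_le_sum fun i _ => ?_) h2
  refine (totalDegree_pow _ _).trans ?_
  have := hg i
  nlinarith

def sgR (b : Bool) : ℝ := if b then 1 else -1

lemma sgR_mul (b : Bool) : sgR b * sgR b = 1 := by cases b <;> simp [sgR]

section e1
set_option linter.unusedSectionVars false
variable {ι κ : Type} [Fintype ι] [Fintype κ] [DecidableEq ι] [DecidableEq κ]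

def cell {τ : Type} {k : ℕ} (P : Fin k → MvPolynomial τ ℝ) (ν : Fin k → Bool) : Set (τ → ℝ) :=
  {x | ∀ j, 0 < sgR (ν j) * eval x (P j)}

noncomputable def shG (B : ι → κ → ℝ) : ι ⊕ κ → MvPolynomial (ι ⊕ κ) ℝ :=
  Sum.elim (fun l => X (Sum.inl l)) (fun i => X (Sum.inr i) - ∑ l, C (B l i) * X (Sum.inl l))

def shM (B : ι → κ → ℝ) (w : ι ⊕ κ → ℝ) : ι ⊕ κ → ℝ :=
  Sum.elim (fun l => w (Sum.inl l)) (fun i => w (Sum.inr i) - ∑ l, B l i * w (Sum.inl l))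

lemma eval_shG (B : ι → κ → ℝ) (p : MvPolynomial (ι ⊕ κ) ℝ) (w) :
    eval w (aeval (shG B) p) = eval (shM B w) p := by
  rw [hom_aeval (eval w) (by simp)]
  congr 2
  funext a
  rcases a with a | a <;> simp [shG, shM]

lemma deg_shG (B : ι → κ → ℝ) (p : MvPolynomial (ι ⊕ κ) ℝ) :
    (aeval (shG B) p).totalDegree ≤ p.totalDegree := by
  apply totalDegree_aeval_le
  intro a
  rcases a with a | a
  · simp [shG]
  · simp only [shG, Sum.elim_inr]
    refine (totalDegree_sub _ _).trans (max_le (by simp) ?_)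
    apply totalDegree_finsetSum_le
    intro l _
    exact (totalDegree_mul _ _).trans (by simp)

lemma cont_shM (B : ι → κ → ℝ) : Continuous (shM B) := by
  apply continuous_pi
  intro a
  rcases a with a | a
  · simp only [shM, Sum.elim_inl]; fun_prop
  · simp only [shM, Sum.elim_inr]; fun_prop

theorem cells1 (Q : MvPolynomial (ι ⊕ κ) ℝ) (e : ℕ) (hQ : Q.totalDegree ≤ e) (hQn : ∀ x, 0 ≤ eval x Q)
    (O : Set (ι ⊕ κ → ℝ)) (hO : IsOpen O)
    (hdim : dimH ({x | eval x Q = 0} ∩ O) ≤ (Fintype.card κ : ENNReal))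
    {k : ℕ} (P : Fin k → MvPolynomial (ι ⊕ κ) ℝ) (D : ℕ) (hD : 1 ≤ D) (hP : ∑ j, (P j).totalDegree ≤ D)
    (N : ℕ) (ν : Fin N → Fin k → Bool) (hν : Function.Injective ν) 
    (hV : ∀ n, ∃ x ∈ {x | eval x Q = 0} ∩ O, x ∈ cell P (ν n)) :
    N ≤ bigB (Fintype.card ι) (Fintype.card κ) e * (4 * D) ^ Fintype.card κ := by
  choose x hxT hxc using hV
  have hZ : IsClosed {x | eval x Q = 0} := isClosed_eq (MvPolynomial.continuous_eval _) continuous_const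
  obtain ⟨B, hB⟩ := (ae_all_iff.2 fun n => shear_ae {x | eval x Q = 0} O hZ hO (x n) hdim).exists
  let w : Fin N → ι ⊕ κ → ℝ := fun n => Sum.elim (fun l => x n (Sum.inl l))
    (fun i => x n (Sum.inr i) + ∑ l, B l i * x n (Sum.inl l))
  have hw : ∀ n, shM B (w n) = x n := by
    intro n; funext a
    rcases a with a | a <;> simp [w, shM]
  let ρ : ℝ := 1 + ∑ n, ∑ c, w n c ^ 2
  have hρ : ∀ n, ∑ c, w n c ^ 2 < ρ := by
    intro n
    have := Finset.single_le_sum (f := fun n => ∑ c, w n c ^ 2) (fun n _ => by positivity) (Finset.mem_univ n)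
    simp only [ρ]; linarith
  let G : MvPolynomial (ι ⊕ κ) ℝ := C ρ - ∑ c, X c ^ 2
  have hG : ∀ v, eval v G = ρ - ∑ c, v c ^ 2 := by intro v; simp [G]
  let Cs : Fin N → Set (ι ⊕ κ → ℝ) := fun n => {v | (∀ j, 0 < sgR (ν n j) * eval (shM B v) (P j)) ∧ 0 < eval v G}
  have hcP : ∀ n j, Continuous (fun v => sgR (ν n j) * eval (shM B v) (P j)) := fun n j =>
    continuous_const.mul ((MvPolynomial.continuous_eval _).comp (cont_shM B))
  have hcG : Continuous (fun v => eval v G) := MvPolynomial.continuous_eval _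
  have ho : ∀ n, IsOpen (Cs n) := by
    intro n
    simp only [Cs]
    rw [Set.ofPred_and, Set.ofPred_forall]
    exact (isOpen_iInter_of_finite fun j => isOpen_lt continuous_const (hcP n j)).inter (isOpen_lt continuous_const hcG)
  have hwC : ∀ n, w n ∈ Cs n := by
    intro n
    refine ⟨fun j => ?_, ?_⟩
    · rw [hw]; exact hxc n j
    · rw [hG]; linarith [hρ n]
  have hwe : ∀ n, Sum.elim (fun l => w n (Sum.inl l)) (fun i => w n (Sum.inr i)) = w n := by
    intro n; funext a; rcases a with a | a <;> rfl
  have hs : ∀ n, ∃ s, 0 < s ∧ (∀ z, dist z (fun l => w n (Sum.inl l)) ≤ s → Sum.elim z (fun i => w n (Sum.inr i)) ∈ Cs n ∩ shM B ⁻¹' O) ∧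
      ∀ t ∈ {x | eval x Q = 0} ∩ O, inc (x n) t B → dist (fun l => t (Sum.inl l)) (fun l => x n (Sum.inl l)) ≠ s := by
    intro n
    have hopen : IsOpen ((fun z : ι → ℝ => (Sum.elim z (fun i => w n (Sum.inr i)) : ι ⊕ κ → ℝ)) ⁻¹' (Cs n ∩ shM B ⁻¹' O)) := by
      apply ((ho n).inter (hO.preimage (cont_shM B))).preimage
      exact Continuous.comp (g := fun w : (ι → ℝ) × (κ → ℝ) => (Sum.elim w.1 w.2 : ι ⊕ κ → ℝ)) (f := fun z => (z, fun i => w n (Sum.inr i))) cont_elim (by fun_prop)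
    obtain ⟨η, hη, hb⟩ := Metric.isOpen_iff.1 hopen (fun l => w n (Sum.inl l)) (by
      simp only [Set.mem_preimage, hwe]
      refine ⟨hwC n, ?_⟩
      simp only [Set.mem_preimage, hw]
      exact (hxT n).2)
    have hae := hB n
    have : Dense {s : ℝ | 0 < s → ∀ t ∈ {x | eval x Q = 0} ∩ O, inc (x n) t B → dist (fun l => t (Sum.inl l)) (fun l => x n (Sum.inl l)) ≠ s} :=
      Measure.dense_of_ae hae
    obtain ⟨s, hs, hs1, hs2⟩ := this.exists_between hη
    refine ⟨s, hs1, fun z hz => ?_, hs hs1⟩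
    exact hb (lt_of_le_of_lt hz hs2)
  choose s hs0 hsb hst using hs
  have key := counting (aeval (shG B) Q) (G * ∏ j, (aeval (shG B) (P j)) ^ 2) e (4 * D) N (by omega)
    ((deg_shG B Q).trans hQ) (by
      refine (totalDegree_mul _ _).trans ?_
      have h1 : G.totalDegree ≤ 2 := by
        refine (totalDegree_sub _ _).trans (max_le (by simp) ?_)
        apply totalDegree_finsetSum_le
        intro l _
        exact (totalDegree_pow _ _).trans (by simp)
      have h2 : (∏ j, (aeval (shG B) (P j)) ^ 2).totalDegree ≤ 2 * D := by
        refine (totalDegree_finsetProd _ _).trans ?_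
        refine le_trans (Finset.sum_le_sum (g := fun j => 2 * (P j).totalDegree) fun j _ => ?_) ?_
        · refine (totalDegree_pow _ _).trans ?_
          exact Nat.mul_le_mul_left _ (deg_shG B _)
        · rw [← Finset.mul_sum]; omega
      omega)
    Cs ho (by
      intro n
      refine (Metric.isBounded_closedBall (x := (0 : ι ⊕ κ → ℝ)) (r := ρ + 1)).subset ?_
      intro v hv
      rw [mem_closedBall_zero_iff]
      have hv2 : ∑ c, v c ^ 2 < ρ := by have := hv.2; rw [hG] at this; linarith
      have hρ0 : 0 ≤ ρ := le_trans (by positivity) hv2.le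
      rw [pi_norm_le_iff_of_nonneg (by linarith)]
      intro c
      have := Finset.single_le_sum (f := fun c => v c ^ 2) (fun n _ => by positivity) (Finset.mem_univ c)
      rw [Real.norm_eq_abs]
      apply abs_le_of_sq_le_sq _ (by linarith)
      nlinarith) (by
      intro n n' hne
      rw [Set.disjoint_left]
      intro v hv hv'
      apply hne
      apply hν
      funext j
      have h1 := hv.1 j
      have h2 := hv'.1 j
      cases h : ν n j <;> cases h' : ν n' j <;> simp [h, h', sgR] at h1 h2 ⊢ <;> linarith) (by
      intro n v hv
      simp only [map_mul, map_prod, map_pow, eval_shG]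
      apply mul_pos hv.2
      apply Finset.prod_pos
      intro j _
      have := hv.1 j
      have h0 : eval (shM B v) (P j) ≠ 0 := by
        intro h0; rw [h0] at this; simp at this
      positivity) (by
      intro n v hv hv'
      have hcl : ∀ j, 0 ≤ sgR (ν n j) * eval (shM B v) (P j) := by
        intro j
        have : closure (Cs n) ⊆ {v | 0 ≤ sgR (ν n j) * eval (shM B v) (P j)} :=
          closure_minimal (fun v hv => (hv.1 j).le) (isClosed_le continuous_const (hcP n j))
        exact this hv
      have hclG : 0 ≤ eval v G := by
        have : closure (Cs n) ⊆ {v | 0 ≤ eval v G} :=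
          closure_minimal (fun v hv => (hv.2).le) (isClosed_le continuous_const hcG)
        exact this hv
      simp only [map_mul, map_prod, map_pow, eval_shG]
      by_contra hne
      apply hv'
      rw [← ne_eq, mul_ne_zero_iff, Finset.prod_ne_zero_iff] at hne
      refine ⟨fun j => lt_of_le_of_ne (hcl j) ?_, lt_of_le_of_ne hclG hne.1.symm⟩
      have h1 := hne.2 j (Finset.mem_univ _)
      have h2 : sgR (ν n j) ≠ 0 := by cases ν n j <;> simp [sgR]
      exact (mul_ne_zero h2 (by simpa using h1)).symm)
    (fun n l => w n (Sum.inl l)) (fun n i => w n (Sum.inr i)) s hs0 (fun n z hz => (hsb n z hz).1) (by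
      intro n
      rw [hwe, eval_shG, hw]
      exact (hxT n).1) (by
      intro n z hz
      rw [eval_shG]
      refine lt_of_le_of_ne (hQn _) (fun h0 => ?_)
      refine hst n _ ⟨h0.symm, (hsb n z hz.le).2⟩ ?_ ?_
      · intro i
        simp only [shM, w, Sum.elim_inr, Sum.elim_inl, mul_sub, Finset.sum_sub_distrib]
        ring
      · simpa [shM, w] using hz)
  exact key

end e1
end GPP

namespace GPP
open MvPolynomial Filter Topology MeasureTheory

lemma sign_pos_iff (s : SignType) (hs : s ≠ 0) (a : ℝ) : 0 < (s : ℝ) * a ↔ SignType.sign a = s := by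
  rcases s with _ | _ | _
  · exact absurd rfl hs
  · change 0 < ((-1 : SignType) : ℝ) * a ↔ SignType.sign a = -1
    rw [sign_eq_neg_one_iff]; simp
  · change 0 < ((1 : SignType) : ℝ) * a ↔ SignType.sign a = 1
    rw [sign_eq_one_iff]; simp

lemma mem_SR {d k : ℕ} (P : Fin k → MvPolynomial (Fin d) ℝ) (ν : Fin k → Bool) (x) :
    x ∈ StrictRealization P ν ↔ ∀ j, 0 < sgR (ν j) * eval x (P j) := by
  simp only [StrictRealization, Set.mem_ofPred_eq]
  refine forall_congr' fun j => ?_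
  cases ν j <;> simp [sgR]

lemma piece (d b r : ℕ) (hr : r < d) (p : Fin b → MvPolynomial (Fin d) ℝ) (hp : ∀ i, (p i).totalDegree ≤ b)
    (σ : Fin b → SignType) (hdim : dimH {x | ∀ i, SignType.sign (eval x (p i)) = σ i} ≤ (r : ENNReal))
    {k : ℕ} (P : Fin k → MvPolynomial (Fin d) ℝ) (D : ℕ) (hD : 1 ≤ D) (hP : ∑ j, (P j).totalDegree ≤ D)
    (V : Finset (Fin k → Bool)) (hV : ∀ ν ∈ V, ∃ x, (∀ i, SignType.sign (eval x (p i)) = σ i) ∧ x ∈ StrictRealization P ν) :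
    V.card ≤ bigB (d - r) r (2 * b) * (4 * D) ^ r := by
  let eq : Fin (d - r) ⊕ Fin r ≃ Fin d := finSumFinEquiv.trans (finCongr (by omega))
  let Q : MvPolynomial (Fin (d - r) ⊕ Fin r) ℝ := ∑ i with σ i = 0, (rename eq.symm (p i)) ^ 2
  have hQe : ∀ w, eval w Q = ∑ i with σ i = 0, (eval (w ∘ eq.symm) (p i)) ^ 2 := by
    intro w; simp [Q, eval_rename]
  let O : Set (Fin (d - r) ⊕ Fin r → ℝ) := {w | ∀ i, σ i ≠ 0 → 0 < (σ i : ℝ) * eval (w ∘ eq.symm) (p i)}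
  have hO : IsOpen O := by
    simp only [O, Set.ofPred_forall]
    refine isOpen_iInter_of_finite fun i => isOpen_iInter_of_finite fun _ => isOpen_lt continuous_const ?_
    refine continuous_const.mul ((MvPolynomial.continuous_eval _).comp ?_)
    exact continuous_pi fun a => continuous_apply _
  have hmem : ∀ w, w ∈ {x | eval x Q = 0} ∩ O ↔ ∀ i, SignType.sign (eval (w ∘ eq.symm) (p i)) = σ i := by
    intro w
    simp only [Set.mem_inter_iff, Set.mem_ofPred_eq, hQe, O]
    rw [Finset.sum_eq_zero_iff_of_nonneg (fun i _ => sq_nonneg _)]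
    constructor
    · rintro ⟨h1, h2⟩ i
      by_cases h : σ i = 0
      · have := h1 i (by simp [h])
        rw [h, sign_eq_zero_iff]
        simpa using this
      · exact (sign_pos_iff _ h _).1 (h2 i h)
    · intro h
      refine ⟨fun i hi => ?_, fun i hi => (sign_pos_iff _ hi _).2 (h i)⟩
      have hi' : σ i = 0 := by simpa using hi
      have := h i
      rw [hi', sign_eq_zero_iff] at this
      simp [this]
  have hLip : LipschitzWith 1 (fun x : Fin d → ℝ => (x ∘ eq : Fin (d - r) ⊕ Fin r → ℝ)) := by
    apply LipschitzWith.of_dist_le_mul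
    intro x y
    rw [NNReal.coe_one, one_mul, dist_pi_le_iff dist_nonneg]
    intro a
    exact dist_le_pi_dist x y (eq a)
  have hd2 : dimH ({x | eval x Q = 0} ∩ O) ≤ (Fintype.card (Fin r) : ENNReal) := by
    rw [Fintype.card_fin]
    refine le_trans (dimH_mono ?_) ((hLip.dimH_image_le _).trans hdim)
    intro w hw
    refine ⟨w ∘ eq.symm, (hmem w).1 hw, ?_⟩
    funext a; simp
  have key := cells1 Q (2 * b) (by
      apply totalDegree_finsetSum_le
      intro i _
      refine (totalDegree_pow _ _).trans (Nat.mul_le_mul_left _ ((totalDegree_rename_le _ _).trans (hp i))))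
    (fun w => by rw [hQe]; positivity) O hO hd2 (fun j => rename eq.symm (P j)) D hD
    (le_trans (Finset.sum_le_sum fun j _ => totalDegree_rename_le _ _) hP) V.card
    (fun n => (V.equivFin.symm n : Fin k → Bool)) (Subtype.val_injective.comp V.equivFin.symm.injective) (by
      intro n
      obtain ⟨x, hx1, hx2⟩ := hV _ (V.equivFin.symm n).2
      have hxx : (x ∘ eq) ∘ eq.symm = x := by funext a; simp
      refine ⟨x ∘ eq, (hmem _).2 (by rw [hxx]; exact hx1), ?_⟩
      rw [mem_SR] at hx2
      intro j
      rw [eval_rename, hxx]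
      exact hx2 j)
  simpa using key

theorem cells2 (d b r : ℕ) (hr : r < d) (T : Set (Fin d → ℝ)) (hT : IsSemiAlgebraicOfComplexity d b T)
    (hdim : dimH T ≤ (r : ENNReal)) 
    {k : ℕ} (P : Fin k → MvPolynomial (Fin d) ℝ) (D : ℕ) (hD : 1 ≤ D) (hP : ∑ j, (P j).totalDegree ≤ D)
    (V : Finset (Fin k → Bool)) (hV : ∀ ν ∈ V, (T ∩ StrictRealization P ν).Nonempty) :
    V.card ≤ 3 ^ b * (bigB (d - r) r (2 * b) * (4 * D) ^ r) := by
  classical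
  obtain ⟨p, τ, φ, hp, rfl⟩ := hT
  set T := {x | φ fun i => if τ i then eval x (p i) < 0 else eval x (p i) = 0} with hTdef
  let Ts : (Fin b → SignType) → Set (Fin d → ℝ) := fun σ => {x | ∀ i, SignType.sign (eval x (p i)) = σ i}
  let W : (Fin b → SignType) → Finset (Fin k → Bool) := fun σ =>
    if Ts σ ⊆ T then Finset.univ.filter (fun ν => (Ts σ ∩ StrictRealization P ν).Nonempty) else ∅
  have hsub : V ⊆ Finset.univ.biUnion W := by
    intro ν hν
    obtain ⟨x, hx, hxν⟩ := hV ν hν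
    rw [Finset.mem_biUnion]
    refine ⟨fun i => SignType.sign (eval x (p i)), Finset.mem_univ _, ?_⟩
    have hs : Ts (fun i => SignType.sign (eval x (p i))) ⊆ T := by
      intro y hy
      simp only [hTdef, Set.mem_ofPred_eq] at hx ⊢
      convert hx using 3 with i
      · rw [← sign_eq_neg_one_iff, ← sign_eq_neg_one_iff, hy i]
      · rw [← sign_eq_zero_iff (a := eval y (p i)), ← sign_eq_zero_iff (a := eval x (p i)), hy i]
    simp only [W, if_pos hs, Finset.mem_filter, Finset.mem_univ, true_and]
    exact ⟨x, fun i => rfl, hxν⟩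
  refine (Finset.card_le_card hsub).trans (Finset.card_biUnion_le.trans ?_)
  refine (Finset.sum_le_card_nsmul _ _ (bigB (d - r) r (2 * b) * (4 * D) ^ r) ?_).trans ?_
  · intro σ _
    by_cases hs : Ts σ ⊆ T
    · simp only [W, if_pos hs]
      apply piece d b r hr p hp σ ((dimH_mono hs).trans hdim) P D hD hP
      intro ν hν
      obtain ⟨x, h1, h2⟩ := (Finset.mem_filter.1 hν).2
      exact ⟨x, h1, h2⟩
    · simp [W, hs]
  · rw [smul_eq_mul]
    have h3 : Fintype.card SignType = 3 := rfl
    simp [h3]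

end GPP

namespace GPP
open MvPolynomial Filter Topology MeasureTheory

def fl {k : ℕ} (j : Fin k) (ν : Fin k → Bool) : Fin k → Bool := Function.update ν j (!ν j)

lemma fl_fl {k : ℕ} (j : Fin k) (ν : Fin k → Bool) : fl j (fl j ν) = ν := by
  funext i
  by_cases h : i = j
  · subst h; simp [fl]
  · simp [fl, h]

lemma sgR_fl {k : ℕ} (j i : Fin k) (ν : Fin k → Bool) : sgR (fl j ν i) = if i = j then - sgR (ν i) else sgR (ν i) := by
  by_cases h : i = j
  · subst h; simp only [fl, Function.update_self, if_true]; cases ν i <;> simp [sgR]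
  · simp [fl, h]

lemma prod_sgR_fl {k : ℕ} (j : Fin k) (A : Finset (Fin k)) (ν : Fin k → Bool) :
    ∏ i ∈ A, sgR (fl j ν i) = if j ∈ A then - ∏ i ∈ A, sgR (ν i) else ∏ i ∈ A, sgR (ν i) := by
  split_ifs with h
  · rw [← Finset.mul_prod_erase A _ h, ← Finset.mul_prod_erase A (fun i => sgR (ν i)) h, sgR_fl, if_pos rfl, neg_mul]
    congr 2
    apply Finset.prod_congr rfl
    intro i hi
    rw [sgR_fl, if_neg (Finset.ne_of_mem_erase hi)]
  · apply Finset.prod_congr rfl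
    intro i hi
    rw [sgR_fl, if_neg]
    rintro rfl; exact h hi

lemma fourier {k : ℕ} (N : (Fin k → Bool) → ℝ)
    (h : ∀ A : Finset (Fin k), A.Nonempty → ∑ ν, (∏ j ∈ A, sgR (ν j)) * N ν = 0) (μ : Fin k → Bool) :
    2 ^ k * N μ = ∑ ν, N ν := by
  have h1 : ∀ ν : Fin k → Bool, ∏ j, (1 + sgR (μ j) * sgR (ν j)) = if ν = μ then (2 : ℝ) ^ k else 0 := by
    intro ν
    split_ifs with hν
    · subst hν
      simp only [sgR_mul]; norm_num
    · obtain ⟨j, hj⟩ := Function.ne_iff.1 hν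
      apply Finset.prod_eq_zero (Finset.mem_univ j)
      cases h1 : ν j <;> cases h2 : μ j <;> simp_all [sgR]
  have h2 : ∑ ν, (∏ j, (1 + sgR (μ j) * sgR (ν j))) * N ν = 2 ^ k * N μ := by
    simp [h1]
  rw [← h2]
  simp only [Finset.prod_one_add, Finset.sum_mul]
  rw [Finset.sum_comm, Finset.sum_eq_single ∅]
  · simp
  · intro A _ hA
    have := h A (Finset.nonempty_iff_ne_empty.2 hA)
    simp only [Finset.prod_mul_distrib, mul_assoc]
    rw [← Finset.mul_sum, this, mul_zero]
  · simp

theorem equalize (k : ℕ) (hk : 1 ≤ k) : ∃ (n : ℕ) (block : Fin (n+1) → Fin k),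
    (∀ j : Fin k, Fintype.card {t // block t = j} ≤ 2 ^ ((j : ℕ) + 2)) ∧
    ∀ (H : Bool → (Fin k → Bool) → EE n k → ℝ), (∀ c ν, Continuous (H c ν)) →
      (∀ c ν j x, H c ν (flipR block j x) = H c (fl j ν) x) →
      ∃ x ∈ KK block, ∀ c ν, 2 ^ k * H c ν x = ∑ μ, H c μ x := by
  let I := {A : Finset (Fin k) // A.Nonempty} × Bool
  have hI : Nonempty I := ⟨(⟨{⟨0, hk⟩}, by simp⟩, true)⟩
  obtain ⟨n, hn⟩ : ∃ n, Fintype.card I = n + 1 := ⟨Fintype.card I - 1, by have := Fintype.card_pos (α := I); omega⟩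
  let e : Fin (n+1) ≃ I := (Fintype.equivFinOfCardEq hn).symm
  let block : Fin (n+1) → Fin k := fun t => (e t).1.1.max' (e t).1.2
  refine ⟨n, block, ?_, ?_⟩
  · intro j
    let f : {t // block t = j} → {A // A ∈ (Finset.Iic j).powerset} × Bool := fun t =>
      (⟨(e t).1.1, by
        rw [Finset.mem_powerset]
        intro i hi
        rw [Finset.mem_Iic, ← t.2]
        exact Finset.le_max' _ _ hi⟩, (e t).2)
    have hf : Function.Injective f := by
      intro t t' h
      apply Subtype.ext
      apply e.injective
      simp only [f, Prod.mk.injEq, Subtype.mk.injEq] at h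
      exact Prod.ext (Subtype.ext h.1) h.2
    refine (Fintype.card_le_of_injective f hf).trans ?_
    rw [Fintype.card_prod, Fintype.card_coe, Finset.card_powerset, Fin.card_Iic, Fintype.card_bool]
    exact le_of_eq (by ring)
  · intro H hc hfl
    obtain ⟨x, hx, h0⟩ := borsukUlam block (fun t => (e t).1.1) (fun t => Finset.max'_mem _ _)
      (fun t j hj => Finset.le_max' _ _ hj)
      (fun t x => ∑ ν, (∏ j ∈ (e t).1.1, sgR (ν j)) * H (e t).2 ν x)
      (fun t => continuous_finsetSum _ fun ν _ => continuous_const.mul (hc _ _)) (by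
        intro t j x
        simp only [hfl]
        let E : (Fin k → Bool) ≃ (Fin k → Bool) := ⟨fl j, fl j, fl_fl j, fl_fl j⟩
        rw [← Equiv.sum_comp E]
        simp only [E, Equiv.coe_fn_mk, fl_fl, prod_sgR_fl]
        split_ifs
        · simp
        · rfl)
    refine ⟨x, hx, fun c ν => fourier (fun ν => H c ν x) (fun A hA => ?_) ν⟩
    have := h0 (e.symm (⟨A, hA⟩, c))
    simpa using this

end GPP

namespace GPP
open MvPolynomial Filter Topology MeasureTheory

section pol
set_option linter.unusedSectionVars false
variable {d k n : ℕ} (block : Fin (n+1) → Fin k) (q : Fin k → ℕ)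
  (em : ∀ j, Option {t // block t = j} → (Fin d → Fin (q j + 1)))

def coef (x : EE n k) (j : Fin k) : Option {t // block t = j} → ℝ
  | none => x.2 j
  | some t => x.1 t

noncomputable def Pol (x : EE n k) (j : Fin k) : MvPolynomial (Fin d) ℝ :=
  ∑ o, monomial (Finsupp.equivFunOnFinite.symm (fun i => (em j o i : ℕ))) (coef block x j o)

lemma coef_flip (x : EE n k) (j' j : Fin k) (o) :
    coef block (flipR block j' x) j o = if j = j' then - coef block x j o else coef block x j o := by
  rcases o with _ | t
  · simp [coef, flipR]
  · simp [coef, flipR, t.2]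

lemma Pol_flip (x : EE n k) (j' j : Fin k) :
    Pol block q em (flipR block j' x) j = if j = j' then - Pol block q em x j else Pol block q em x j := by
  simp only [Pol, coef_flip]
  split_ifs <;> simp

lemma Pol_deg (x : EE n k) (j : Fin k) : (Pol block q em x j).totalDegree ≤ d * q j := by
  apply totalDegree_finsetSum_le
  intro o _
  refine (totalDegree_monomial_le _ _).trans ?_
  rw [Finsupp.sum_fintype _ _ (by simp)]
  refine (Finset.sum_le_card_nsmul _ _ (q j) ?_).trans (by simp)
  intro i _
  simpa using Nat.lt_succ_iff.1 (em j o i).2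

lemma Pol_cont (y : Fin d → ℝ) (j : Fin k) : Continuous (fun x : EE n k => eval y (Pol block q em x j)) := by
  simp only [Pol, map_sum, eval_monomial]
  refine continuous_finsetSum _ fun o _ => Continuous.mul ?_ continuous_const
  rcases o with _ | t
  · simp only [coef]; fun_prop
  · simp only [coef]; fun_prop

lemma Pol_ne (hem : ∀ j, Function.Injective (em j)) (x : EE n k) (hx : x ∈ KK block) (j : Fin k) :
    Pol block q em x j ≠ 0 := by
  intro h
  have h0 : ∀ o, coef block x j o = 0 := by
    intro o
    have := congrArg (coeff (Finsupp.equivFunOnFinite.symm (fun i => (em j o i : ℕ)))) h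
    rw [Pol, coeff_sum] at this
    rw [Finset.sum_eq_single o] at this
    · simpa using this
    · intro o' _ ho
      rw [coeff_monomial, if_neg]
      intro he
      apply ho
      apply hem j
      funext i
      have := congrArg (fun f => f i) he
      exact Fin.ext (by simpa using this)
    · simp
  have h1 := hx.2 j
  have h2 : x.2 j = 0 := h0 none
  have h3 : ∑ c with block c = j, |x.1 c| = 0 := by
    apply Finset.sum_eq_zero
    intro c hc
    have : x.1 c = 0 := h0 (some ⟨c, by simpa using hc⟩)
    simp [this]
  rw [h2, h3] at h1
  norm_num at h1

lemma exists_em (hcard : ∀ j, Fintype.card {t // block t = j} < (q j + 1) ^ d) :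
    ∃ em : ∀ j, Option {t // block t = j} → (Fin d → Fin (q j + 1)), ∀ j, Function.Injective (em j) := by
  have : ∀ j, Nonempty (Option {t // block t = j} ↪ (Fin d → Fin (q j + 1))) := by
    intro j
    apply Function.Embedding.nonempty_of_card_le
    simpa using hcard j
  exact ⟨fun j => (this j).some, fun j => (this j).some.injective⟩

end pol

lemma grid {d : ℕ} (D : ℕ) : ∃ G : Finset (Fin d → ℝ), ∀ p : MvPolynomial (Fin d) ℝ, p ≠ 0 → p.totalDegree ≤ D →
    ∃ y ∈ G, eval y p ≠ 0 := by
  let s : Fin d → Finset ℝ := fun _ => (Finset.range (D+1)).image (fun i : ℕ => (i : ℝ))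
  refine ⟨Fintype.piFinset s, fun p hp hD => ?_⟩
  by_contra hcon
  push Not at hcon
  apply hp
  apply MvPolynomial.eq_zero_of_eval_zero_at_prod_finset p s
  · intro i
    rw [Finset.card_image_of_injective _ Nat.cast_injective, Finset.card_range]
    have := degreeOf_le_totalDegree p i
    omega
  · intro x hx
    exact hcon x (Fintype.mem_piFinset.2 hx)

end GPP

namespace GPP
open MvPolynomial Filter Topology MeasureTheory

noncomputable def pr {d k : ℕ} (P : Fin k → MvPolynomial (Fin d) ℝ) (ν : Fin k → Bool) (y : Fin d → ℝ) : ℝ :=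
  ∏ j, max 0 (sgR (ν j) * eval y (P j))

lemma pr_nonneg {d k : ℕ} (P : Fin k → MvPolynomial (Fin d) ℝ) (ν : Fin k → Bool) (y : Fin d → ℝ) : 0 ≤ pr P ν y :=
  Finset.prod_nonneg fun _ _ => le_max_left _ _

lemma pr_pos {d k : ℕ} (P : Fin k → MvPolynomial (Fin d) ℝ) (ν : Fin k → Bool) (y : Fin d → ℝ) :
    0 < pr P ν y ↔ y ∈ StrictRealization P ν := by
  rw [mem_SR]
  constructor
  · intro h j
    by_contra hj
    have : pr P ν y = 0 := Finset.prod_eq_zero (Finset.mem_univ j) (max_eq_left (not_lt.1 hj))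
    linarith
  · intro h
    exact Finset.prod_pos fun j _ => lt_max_of_lt_right (h j)

lemma SR_open {d k : ℕ} (P : Fin k → MvPolynomial (Fin d) ℝ) (ν : Fin k → Bool) : IsOpen (StrictRealization P ν) := by
  have : StrictRealization P ν = {x | ∀ j, 0 < sgR (ν j) * eval x (P j)} := by
    ext x; exact mem_SR P ν x
  rw [this, Set.ofPred_forall]
  exact isOpen_iInter_of_finite fun j => isOpen_lt continuous_const (continuous_const.mul (MvPolynomial.continuous_eval _))

lemma exists_seq {d : ℕ} (T : Set (Fin d → ℝ)) : ∃ g : ℕ → (Fin d → ℝ), T.Nonempty → (∀ i, g i ∈ T) ∧ T ⊆ closure (Set.range g) := by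
  by_cases h : T.Nonempty
  · have : Nonempty T := h.to_subtype
    refine ⟨fun i => (TopologicalSpace.denseSeq T i : Fin d → ℝ), fun _ => ⟨fun i => Subtype.coe_prop _, ?_⟩⟩
    intro x hx
    have hd := TopologicalSpace.denseRange_denseSeq T (⟨x, hx⟩ : T)
    have h2 := image_closure_subset_closure_image (f := ((↑) : T → (Fin d → ℝ))) continuous_subtype_val ⟨_, hd, rfl⟩
    rwa [← Set.range_comp] at h2
  · exact ⟨fun _ => 0, fun h' => absurd h' h⟩

theorem partition_core (d k : ℕ) (hk : 1 ≤ k) (q : Fin k → ℕ) (hq : ∀ j : Fin k, 2 ^ ((j : ℕ) + 2) < (q j + 1) ^ d)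
    (S : Finset (Set (Fin d → ℝ))) (R : ℕ)
    (hR : ∀ T ∈ S, ∀ P : Fin k → MvPolynomial (Fin d) ℝ, (∀ j, (P j).totalDegree ≤ d * q j) →
      ∀ V : Finset (Fin k → Bool), (∀ ν ∈ V, (T ∩ StrictRealization P ν).Nonempty) → V.card ≤ R) :
    ∃ P : Fin k → MvPolynomial (Fin d) ℝ, (∀ j, (P j).totalDegree ≤ d * q j) ∧
      (∀ ν, (StrictRealization P ν).Nonempty) ∧
      ∀ ν, (2 : ℝ) ^ k * (Set.ncard {T | T ∈ S ∧ (T ∩ StrictRealization P ν).Nonempty} : ℝ) ≤ S.card * R := by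
  classical
  obtain ⟨n, block, hcard, heq⟩ := equalize k hk
  obtain ⟨em, hem⟩ := exists_em block q (d := d) (fun j => lt_of_le_of_lt (hcard j) (hq j))
  obtain ⟨G, hG⟩ := grid (d := d) (∑ j, d * q j)
  choose g hg using exists_seq (d := d)
  let p : EE n k → Fin k → MvPolynomial (Fin d) ℝ := fun x => Pol block q em x
  have hpc : ∀ ν y, Continuous (fun x => pr (p x) ν y) := fun ν y =>
    continuous_finsetProd _ fun j _ => continuous_const.max (continuous_const.mul (Pol_cont block q em y j))
  have hpf : ∀ ν j x y, pr (p (flipR block j x)) ν y = pr (p x) (fl j ν) y := by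
    intro ν j x y
    apply Finset.prod_congr rfl
    intro i _
    simp only [p, Pol_flip, sgR_fl]
    split_ifs <;> simp
  let S0 := S.filter (fun T => T.Nonempty)
  let tm : ℕ → Set (Fin d → ℝ) → (Fin k → Bool) → EE n k → ℝ := fun N T ν x =>
    min 1 (N * ∑ i ∈ Finset.range N, pr (p x) ν (g T i))
  have htm0 : ∀ N T ν x, 0 ≤ tm N T ν x := fun N T ν x =>
    le_min zero_le_one (mul_nonneg (Nat.cast_nonneg _) (Finset.sum_nonneg fun i _ => pr_nonneg _ _ _))
  let H : ℕ → Bool → (Fin k → Bool) → EE n k → ℝ := fun N c ν x =>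
    if c then ∑ T ∈ S0, tm N T ν x else ∑ y ∈ G, pr (p x) ν y
  have hVc : ∀ ν, Continuous (fun x => ∑ y ∈ G, pr (p x) ν y) := fun ν =>
    continuous_finsetSum _ fun y _ => hpc ν y
  have hex : ∀ N, ∃ x ∈ KK block, ∀ c ν, 2 ^ k * H N c ν x = ∑ μ, H N c μ x := by
    intro N
    apply heq
    · intro c ν
      cases c
      · simpa [H] using hVc ν
      · simp only [H, if_true]
        refine continuous_finsetSum _ fun T _ => continuous_const.min (continuous_const.mul (continuous_finsetSum _ fun i _ => hpc _ _))
    · intro c ν j x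
      simp only [H, tm, hpf]
  choose xs hxs hxe using hex
  obtain ⟨a, ha, φ, hφ, hlim⟩ := (KK_compact block).tendsto_subseq hxs
  have hV : ∀ ν, 2 ^ k * ∑ y ∈ G, pr (p a) ν y = ∑ μ, ∑ y ∈ G, pr (p a) μ y := by
    intro ν
    have h1 : Tendsto (fun m => 2 ^ k * ∑ y ∈ G, pr (p (xs (φ m))) ν y) atTop (𝓝 (2 ^ k * ∑ y ∈ G, pr (p a) ν y)) :=
      ((continuous_const.mul (hVc ν)).tendsto a).comp hlim
    have h2 : Tendsto (fun m => ∑ μ, ∑ y ∈ G, pr (p (xs (φ m))) μ y) atTop (𝓝 (∑ μ, ∑ y ∈ G, pr (p a) μ y)) :=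
      ((continuous_finsetSum _ fun μ _ => hVc μ).tendsto a).comp hlim
    have h3 : (fun m => 2 ^ k * ∑ y ∈ G, pr (p (xs (φ m))) ν y) = fun m => ∑ μ, ∑ y ∈ G, pr (p (xs (φ m))) μ y := by
      funext m
      simpa [H] using hxe (φ m) false ν
    rw [h3] at h1
    exact tendsto_nhds_unique h1 h2
  have hdeg : ∀ x j, (p x j).totalDegree ≤ d * q j := fun x j => Pol_deg block q em x j
  refine ⟨p a, hdeg a, ?_, ?_⟩
  · intro ν
    obtain ⟨y, hyG, hy⟩ := hG (∏ j, p a j) (Finset.prod_ne_zero_iff.2 fun j _ => Pol_ne block q em hem a ha j)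
      ((totalDegree_finsetProd _ _).trans (Finset.sum_le_sum fun j _ => hdeg a j))
    rw [map_prod, Finset.prod_ne_zero_iff] at hy
    have hpos : 0 < ∑ μ, ∑ y ∈ G, pr (p a) μ y := by
      have h1 : 0 < pr (p a) (fun j => decide (0 < eval y (p a j))) y := by
        rw [pr_pos, mem_SR]
        intro j
        have := hy j (Finset.mem_univ _)
        by_cases h : 0 < eval y (p a j)
        · simp [sgR, h]
        · simp only [sgR, h, decide_false]
          have : eval y (p a j) < 0 := lt_of_le_of_ne (not_lt.1 h) this
          simpa using this
      refine Finset.sum_pos' (fun μ _ => Finset.sum_nonneg fun y _ => pr_nonneg _ _ _) ⟨fun j => decide (0 < eval y (p a j)), Finset.mem_univ _, ?_⟩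
      exact Finset.sum_pos' (fun y _ => pr_nonneg _ _ _) ⟨y, hyG, h1⟩
    rw [← hV ν] at hpos
    have h2 : 0 < ∑ y ∈ G, pr (p a) ν y := by
      by_contra h
      have : (2 : ℝ) ^ k * ∑ y ∈ G, pr (p a) ν y ≤ 0 := mul_nonpos_of_nonneg_of_nonpos (by positivity) (not_lt.1 h)
      linarith
    obtain ⟨y, _, hy⟩ := Finset.exists_lt_of_sum_lt (f := fun _ => (0:ℝ)) (by simpa using h2)
    exact ⟨y, (pr_pos _ _ _).1 hy⟩
  · intro ν
    have hev : ∀ T ∈ S0.filter (fun T => (T ∩ StrictRealization (p a) ν).Nonempty), ∀ᶠ m in atTop, tm (φ m) T ν (xs (φ m)) = 1 := by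
      intro T hT
      obtain ⟨hT0, y, hyT, hyS⟩ := Finset.mem_filter.1 hT
      obtain ⟨_, hcl⟩ := hg T (Finset.mem_filter.1 hT0).2
      obtain ⟨_, hz, i, rfl⟩ := mem_closure_iff.1 (hcl hyT) _ (SR_open (p a) ν) hyS
      have hv := (pr_pos (p a) ν (g T i)).2 hz
      set v := pr (p a) ν (g T i)
      have h1 : Tendsto (fun m => pr (p (xs (φ m))) ν (g T i)) atTop (𝓝 v) :=
        ((hpc ν (g T i)).tendsto a).comp hlim
      have h2 := h1.eventually (lt_mem_nhds (show v / 2 < v by linarith))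
      have h3 : Tendsto (fun m => ((φ m : ℕ) : ℝ)) atTop atTop := tendsto_natCast_atTop_atTop.comp hφ.tendsto_atTop
      filter_upwards [h2, hφ.tendsto_atTop.eventually_gt_atTop i, h3.eventually_ge_atTop (2 / v)] with m m1 m2 m3
      apply min_eq_left
      have m4 : pr (p (xs (φ m))) ν (g T i) ≤ ∑ i ∈ Finset.range (φ m), pr (p (xs (φ m))) ν (g T i) :=
        Finset.single_le_sum (f := fun i => pr (p (xs (φ m))) ν (g T i)) (fun i _ => pr_nonneg _ _ _) (Finset.mem_range.2 m2)
      calc (1 : ℝ) = (2 / v) * (v / 2) := by field_simp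
        _ ≤ _ := by gcongr; linarith
    obtain ⟨m, hm⟩ := ((Finset.eventually_all _).2 hev).exists
    set N := φ m
    set x := xs N
    have hset : {T | T ∈ S ∧ (T ∩ StrictRealization (p a) ν).Nonempty} =
        ↑(S0.filter (fun T => (T ∩ StrictRealization (p a) ν).Nonempty)) := by
      ext T
      simp only [S0, Set.mem_ofPred_eq, Finset.coe_filter, Finset.mem_filter]
      constructor
      · rintro ⟨h1, h2⟩; exact ⟨⟨h1, h2.mono Set.inter_subset_left⟩, h2⟩
      · rintro ⟨⟨h1, _⟩, h2⟩; exact ⟨h1, h2⟩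
    rw [hset, Set.ncard_coe_finset]
    have c1 : ((S0.filter (fun T => (T ∩ StrictRealization (p a) ν).Nonempty)).card : ℝ) ≤ ∑ T ∈ S0, tm N T ν x := by
      calc _ = ∑ T ∈ S0.filter (fun T => (T ∩ StrictRealization (p a) ν).Nonempty), tm N T ν x := by
            rw [Finset.sum_congr rfl hm]; simp
        _ ≤ _ := Finset.sum_le_sum_of_subset_of_nonneg (Finset.filter_subset _ _) (fun T _ _ => htm0 _ _ _ _)
    have c2 : 2 ^ k * ∑ T ∈ S0, tm N T ν x = ∑ μ, ∑ T ∈ S0, tm N T μ x := by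
      simpa [H] using hxe N true ν
    have c3 : ∀ T ∈ S0, ∑ μ, tm N T μ x ≤ R := by
      intro T hT
      obtain ⟨hTS, hTn⟩ := Finset.mem_filter.1 hT
      have hle : ∀ μ, tm N T μ x ≤ if (T ∩ StrictRealization (p x) μ).Nonempty then 1 else 0 := by
        intro μ
        split_ifs with h
        · exact min_le_left _ _
        · refine (min_le_right _ _).trans (le_of_eq ?_)
          rw [Finset.sum_eq_zero, mul_zero]
          intro i _
          by_contra hne
          exact h ⟨g T i, (hg T hTn).1 i, (pr_pos _ _ _).1 (lt_of_le_of_ne (pr_nonneg _ _ _) (Ne.symm hne))⟩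
      refine (Finset.sum_le_sum fun μ _ => hle μ).trans ?_
      rw [Finset.sum_boole]
      exact_mod_cast hR T hTS (p x) (hdeg x) _ (fun μ hμ => (Finset.mem_filter.1 hμ).2)
    calc _ ≤ 2 ^ k * ∑ T ∈ S0, tm N T ν x := by gcongr
      _ = ∑ T ∈ S0, ∑ μ, tm N T μ x := by rw [c2, Finset.sum_comm]
      _ ≤ ∑ T ∈ S0, (R : ℝ) := Finset.sum_le_sum c3
      _ = S0.card * R := by simp
      _ ≤ _ := by gcongr; exact Finset.filter_subset _ _

end GPP

open MvPolynomial
namespace GPP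

noncomputable def qq (d j : ℕ) : ℕ := ⌈(2:ℝ) ^ (((j:ℝ)+2)/d)⌉₊

theorem qq_hq (d : ℕ) (hd : 1 ≤ d) (j : ℕ) : 2 ^ (j+2) < (qq d j + 1)^d := by
  have hd0 : (d:ℝ) ≠ 0 := by positivity
  have h1 : ((2:ℝ) ^ (((j:ℝ)+2)/d)) < (qq d j : ℝ) + 1 := by
    have := Nat.le_ceil ((2:ℝ) ^ (((j:ℝ)+2)/d))
    unfold qq; linarith
  have h2 : ((2:ℝ) ^ (((j:ℝ)+2)/d)) ^ d < ((qq d j : ℝ) + 1) ^ d :=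
    pow_lt_pow_left₀ h1 (by positivity) (by omega)
  rw [← Real.rpow_natCast, ← Real.rpow_mul (by norm_num), div_mul_cancel₀ _ hd0] at h2
  have h3 : (2:ℝ) ^ ((j:ℝ)+2) = 2 ^ (j+2) := by
    rw [← Real.rpow_natCast]; push_cast; rfl
  rw [h3] at h2
  exact_mod_cast h2

theorem qq_pos (d j : ℕ) : 1 ≤ qq d j := Nat.one_le_ceil_iff.2 (by positivity)

theorem qq_le (d : ℕ) (hd : 1 ≤ d) (j : ℕ) : ((d * qq d j : ℕ) : ℝ) ≤ 4 * d * 2 ^ (((j:ℝ)+1)/d) := by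
  have hd1 : (1:ℝ) ≤ d := by exact_mod_cast hd
  have h1 : (qq d j : ℝ) < (2:ℝ) ^ (((j:ℝ)+2)/d) + 1 := Nat.ceil_lt_add_one (by positivity)
  have h2 : (2:ℝ) ^ (((j:ℝ)+2)/d) = 2 ^ (((j:ℝ)+1)/d) * 2 ^ ((1:ℝ)/d) := by
    rw [← Real.rpow_add (by norm_num)]; congr 1; ring
  have h3 : (2:ℝ) ^ ((1:ℝ)/d) ≤ 2 := by
    calc (2:ℝ) ^ ((1:ℝ)/d) ≤ 2 ^ (1:ℝ) := Real.rpow_le_rpow_of_exponent_le (by norm_num) (by rw [div_le_one (by linarith)]; exact hd1)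
      _ = 2 := by simp
  have h4 : (1:ℝ) ≤ 2 ^ (((j:ℝ)+1)/d) := Real.one_le_rpow (by norm_num) (by positivity)
  have h5 : (qq d j : ℝ) ≤ 4 * 2 ^ (((j:ℝ)+1)/d) := by rw [h2] at h1; nlinarith
  push_cast
  nlinarith

noncomputable def aa (d : ℕ) : ℝ := 2 ^ ((1:ℝ)/d)

theorem aa_gt (d : ℕ) (hd : 1 ≤ d) : 1 < aa d :=
  Real.one_lt_rpow (by norm_num) (by positivity)

theorem aa_pow (d n : ℕ) : (2:ℝ) ^ ((n:ℝ)/d) = aa d ^ n := by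
  unfold aa
  rw [← Real.rpow_natCast, ← Real.rpow_mul (by norm_num)]; congr 1; ring

theorem D_le (d : ℕ) (hd : 1 ≤ d) (k : ℕ) :
    ((∑ j : Fin k, d * qq d j : ℕ) : ℝ) ≤ 4 * d * (aa d / (aa d - 1)) * aa d ^ k := by
  have ha := aa_gt d hd
  have ha' : 0 < aa d - 1 := by linarith
  have hd0 : (0:ℝ) ≤ d := by positivity
  rw [Fin.sum_univ_eq_sum_range (fun j => d * qq d j) k, Nat.cast_sum]
  calc ∑ j ∈ Finset.range k, ((d * qq d j : ℕ) : ℝ)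
      ≤ ∑ j ∈ Finset.range k, 4 * d * (aa d * aa d ^ j) := by
        apply Finset.sum_le_sum
        intro j _
        refine (qq_le d hd j).trans_eq ?_
        have := aa_pow d (j+1)
        push_cast at this
        rw [this]; ring
    _ = 4 * d * aa d * ((aa d ^ k - 1) / (aa d - 1)) := by
        rw [← geom_sum_eq ha.ne', Finset.mul_sum]
        exact Finset.sum_congr rfl fun _ _ => by ring
    _ = (4 * d * aa d / (aa d - 1)) * (aa d ^ k - 1) := by ring
    _ ≤ (4 * d * aa d / (aa d - 1)) * (aa d ^ k) := by
        apply mul_le_mul_of_nonneg_left (by linarith)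
        positivity
    _ = _ := by ring

noncomputable def KC (d b r : ℕ) : ℝ :=
  3 ^ b * (bigB (d - r) r (2 * b) * (4 * (4 * d * (aa d / (aa d - 1)))) ^ r)

theorem KC_nonneg (d b r : ℕ) (hd : 1 ≤ d) : 0 ≤ KC d b r := by
  have ha := aa_gt d hd
  have ha' : 0 < aa d - 1 := by linarith
  unfold KC; positivity

theorem R_le (d : ℕ) (hd : 1 ≤ d) (b r k : ℕ) :
    ((3 ^ b * (bigB (d - r) r (2 * b) * (4 * (∑ j : Fin k, d * qq d j)) ^ r) : ℕ) : ℝ)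
      ≤ KC d b r * 2 ^ ((k:ℝ) * ((r:ℝ)/d)) := by
  have h := D_le d hd k
  have e : (2:ℝ) ^ ((k:ℝ) * ((r:ℝ)/d)) = (aa d ^ k) ^ r := by
    rw [← pow_mul, ← aa_pow]; congr 1; push_cast; ring
  rw [e]
  calc _ = (3:ℝ) ^ b * (bigB (d - r) r (2 * b) * (4 * ((∑ j : Fin k, d * qq d j : ℕ) : ℝ)) ^ r) := by push_cast; rfl
    _ ≤ (3:ℝ) ^ b * (bigB (d - r) r (2 * b) * (4 * (4 * d * (aa d / (aa d - 1)) * aa d ^ k)) ^ r) := by gcongr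
    _ = _ := by unfold KC; rw [← mul_assoc 4, mul_pow _ (aa d ^ k)]; ring

end GPP

open GPP in
theorem generalized_polynomial_partitioning (d : ℕ) (hd : 1 ≤ d) :
    ∃ C : ℝ, 0 < C ∧ ∀ b : ℕ, 1 ≤ b → ∃ c : ℝ, 0 < c ∧
      ∀ (r : ℕ) (S : Finset (Set (Fin d → ℝ))),
        (∀ T ∈ S, IsSemiAlgebraicOfComplexity d b T ∧ dimH T ≤ (r : ENNReal)) →
        ∀ k : ℕ, 1 ≤ k →
          ∃ P : Fin k → MvPolynomial (Fin d) ℝ,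
            (∀ j : Fin k, ((P j).totalDegree : ℝ) ≤ C * 2 ^ (((j : ℕ) + 1 : ℝ) / d)) ∧
            (∀ ν : Fin k → Bool, (StrictRealization P ν).Nonempty) ∧
            (∀ ν : Fin k → Bool,
              (Set.ncard {T | T ∈ S ∧ (T ∩ StrictRealization P ν).Nonempty} : ℝ)
                ≤ (S.card : ℝ) / (c * 2 ^ ((k : ℝ) * (1 - (r : ℝ) / d)))) := by
  have hd1 : (1:ℝ) ≤ d := by exact_mod_cast hd
  refine ⟨4 * d, by positivity, fun b _ => ?_⟩
  set M : ℝ := 1 + ∑ r ∈ Finset.range d, KC d b r with hM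
  have hM1 : 1 ≤ M := by
    have : 0 ≤ ∑ r ∈ Finset.range d, KC d b r := Finset.sum_nonneg fun r _ => KC_nonneg d b r hd
    linarith
  have hM0 : 0 < M := by linarith
  refine ⟨1 / M, by positivity, fun r S hS k hk => ?_⟩
  have key : ∃ R : ℕ, (R:ℝ) ≤ M * 2 ^ ((k:ℝ) * ((r:ℝ)/d)) ∧ ∀ T ∈ S, ∀ P : Fin k → MvPolynomial (Fin d) ℝ,
      (∀ j, (P j).totalDegree ≤ d * qq d j) → ∀ V : Finset (Fin k → Bool),
      (∀ ν ∈ V, (T ∩ StrictRealization P ν).Nonempty) → V.card ≤ R := by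
    by_cases hr : r < d
    · refine ⟨_, (R_le d hd b r k).trans ?_, fun T hT P hP V hV => ?_⟩
      · gcongr
        have := Finset.single_le_sum (f := KC d b) (fun r _ => KC_nonneg d b r hd) (Finset.mem_range.2 hr)
        linarith
      · refine cells2 d b r hr T (hS T hT).1 (hS T hT).2 P _ ?_ (Finset.sum_le_sum fun j _ => hP j) V hV
        calc 1 ≤ d * qq d ((⟨0, hk⟩ : Fin k) : ℕ) := Nat.mul_pos hd (qq_pos _ _)
          _ ≤ _ := Finset.single_le_sum (f := fun j : Fin k => d * qq d j) (fun _ _ => Nat.zero_le _) (Finset.mem_univ _)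
    · refine ⟨2 ^ k, ?_, fun T _ P _ V _ => ?_⟩
      · have h1 : (1:ℝ) ≤ (r:ℝ)/d := by
          rw [one_le_div (by linarith)]; exact_mod_cast not_lt.1 hr
        have h2 : (2:ℝ) ^ (k:ℝ) ≤ 2 ^ ((k:ℝ) * ((r:ℝ)/d)) :=
          Real.rpow_le_rpow_of_exponent_le (by norm_num) (le_mul_of_one_le_right (by positivity) h1)
        rw [Real.rpow_natCast] at h2
        push_cast
        nlinarith [Real.rpow_pos_of_pos (show (0:ℝ) < 2 by norm_num) ((k:ℝ) * ((r:ℝ)/d))]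
      · simpa using Finset.card_le_univ V
  obtain ⟨R, hR, hR2⟩ := key
  obtain ⟨P, h1, h2, h3⟩ := partition_core d k hk (fun j => qq d j) (fun j => qq_hq d hd j) S R hR2
  refine ⟨P, fun j => ?_, h2, fun ν => ?_⟩
  · exact (Nat.cast_le.2 (h1 j)).trans (qq_le d hd j)
  · have h := h3 ν
    rw [le_div_iff₀ (by positivity)]
    have e : (2:ℝ) ^ ((k : ℝ) * (1 - (r : ℝ) / d)) * 2 ^ ((k:ℝ) * ((r:ℝ)/d)) = 2 ^ k := by
      rw [← Real.rpow_add (by norm_num), ← Real.rpow_natCast]; congr 1; ring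
    set N : ℝ := (Set.ncard {T | T ∈ S ∧ (T ∩ StrictRealization P ν).Nonempty} : ℝ)
    set x : ℝ := (2:ℝ) ^ ((k:ℝ) * ((r:ℝ)/d))
    set y : ℝ := (2:ℝ) ^ ((k : ℝ) * (1 - (r : ℝ) / d))
    have hx : 0 < x := by positivity
    have h5 : N * (y * x) ≤ S.card * (M * x) := by
      rw [e]
      calc N * 2 ^ k = 2 ^ k * N := mul_comm _ _
        _ ≤ S.card * R := h
        _ ≤ _ := by gcongr
    have h6 : N * y ≤ S.card * M := by
      refine le_of_mul_le_mul_right ?_ hx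
      linarith
    calc N * (1 / M * y) = (N * y) / M := by ring
      _ ≤ S.card := by rw [div_le_iff₀ hM0]; exact h6
end
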